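/- arXiv:1611.09060 — 3 statements merged into one kernel-verified Lean document; each statement's English description precedes it below -/
import Mathlib

section
/- For an integer s ≥ 2, let δ be a positive real such that every finite simple graph H with no K_{s+1} minor satisfies |E(H)| ≤ δ|V(H)|. Then every finite simple graph with no K_{s+1} minor is (s, ⌊δ(2δ − s + 1)⌋ − s + 1)-choosable. -/
/-!
Write `d = ⌊δ(2δ - s + 1)⌋ - s + 1`. By induction on the edge set it suffices to find, in every
`K_{s+1}`-minor-free graph with an edge, one of three reducible configurations: a vertex of
positive degree less than `s`; an edge whose ends both have degree in `[s, d + s)`; or a nonempty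
independent set `T` of vertices of degree `s` with a map `φ` from `T` to neighbours such that each
`w` in the image has at most `min(d, d + s - 1 - |N(w) \ T|)` preimages. The last two are
reducible because a list colouring of minimum total defect gives each vertex of positive defect
`k` degree at least `k + s - 1`: a vertex of `T` takes a colour occurring on none of its
neighbours except possibly on its image.

For `s ≤ 3` a vertex of the first kind always exists. Otherwise suppose that there is no reducible
configuration. The vertices of degree less than `d + s` then form an independent set. Contracting
the vertices of an independent set one at a time into suitable neighbours creates at least one new
edge per contraction, since a neighbourhood of size at least `s` is not a clique, and the density
bound applies to the resulting minor.

* If `δ > s`, contract all non-isolated vertices of degree less than `d + s`: the remaining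
  vertices then have average degree at most `δ(δ + 1) ≤ δ(2δ - s + 1) < d + s`, a contradiction.
* Otherwise `s - 1 ≤ δ ≤ s`, where the lower bound comes from the graphs `K_{s-1,n}`. Contract
  only the set `S` of vertices of degree exactly `s`. The contractions create stars spanning the
  neighbours of `S`, which bounds from below the number of edges among the vertices of large
  degree. Counting edges shows that the capacities `min(d, d + s - 1 - |N(w) \ S|)` of the
  neighbours of `S` add up to at least `|S|`, and a deficiency form of Hall's theorem gives the
  third configuration.
-/

open SimpleGraph
universe u v

section Defs

variable {V : Type u} {α : Type v}

/-- `H` is isomorphic to a subgraph of `G`: there is an injective graph homomorphism. -/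
def ContainsSubgraph (G : SimpleGraph V) (H : SimpleGraph α) : Prop :=
  ∃ f : H →g G, Function.Injective f

/-- `G` is `(k,d)`-choosable: for every assignment of lists of exactly `k` colours there is a
colouring from the lists in which every vertex has at most `d` neighbours of its own colour. -/
def Choosable (G : SimpleGraph V) (k : ℕ) (d : ℤ) : Prop :=
  ∀ L : V → Finset ℕ, (∀ v, (L v).card = k) →
    ∃ c : V → ℕ, (∀ v, c v ∈ L v) ∧
      ∀ v, (({w | G.Adj v w ∧ c w = c v}.ncard : ℤ)) ≤ d

/-- `G` is `(k,d)`-colourable: the vertices can be `k`-coloured with every vertex having at most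
`d` neighbours of its own colour. -/
def DefColorable (G : SimpleGraph V) (k d : ℕ) : Prop :=
  ∃ c : V → Fin k, ∀ v, {w | G.Adj v w ∧ c w = c v}.ncard ≤ d

/-- `H` is a minor of `G`, via pairwise disjoint connected branch sets. -/
def IsMinor (H : SimpleGraph α) (G : SimpleGraph V) : Prop :=
  ∃ B : α → Set V,
    (∀ a, (B a).Nonempty) ∧
    (∀ a, (G.induce (B a)).Connected) ∧
    (Pairwise fun a b => Disjoint (B a) (B b)) ∧
    (∀ a b, H.Adj a b → ∃ x ∈ B a, ∃ y ∈ B b, G.Adj x y)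

/-- A subdivision of `H` whose path lengths all satisfy `lenOK` occurs as a subgraph of `G`:
the branch vertices are embedded injectively by `f`, each edge of `H` is replaced by a path of
`G` between the corresponding branch vertices, internal vertices of these paths avoid branch
vertices, and distinct paths meet only in common endpoints. -/
def HasSubdivWith (G : SimpleGraph V) (H : SimpleGraph α) (lenOK : ℕ → Prop) : Prop :=
  ∃ f : α → V, Function.Injective f ∧
    ∃ P : ∀ ⦃a b : α⦄, H.Adj a b → G.Walk (f a) (f b),
      (∀ ⦃a b⦄ (h : H.Adj a b), (P h).IsPath ∧ lenOK (P h).length) ∧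
      (∀ ⦃a b⦄ (h : H.Adj a b) (c : α), f c ∈ (P h).support → c = a ∨ c = b) ∧
      (∀ ⦃a b⦄ (h : H.Adj a b) ⦃a' b'⦄ (h' : H.Adj a' b'), s(a, b) ≠ s(a', b') →
        ∀ x ∈ (P h).support, x ∈ (P h').support →
          (x = f a ∨ x = f b) ∧ (x = f a' ∨ x = f b'))

/-- Some `(≤ k)`-subdivision of `H` (each edge replaced by a path of length at most `k+1`)
is a subgraph of `G`. -/
def HasSubdivLE (G : SimpleGraph V) (k : ℕ) (H : SimpleGraph α) : Prop :=
  HasSubdivWith G H fun L => L ≤ k + 1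

/-- `H` is a topological minor of `G`: some subdivision of `H` is a subgraph of `G`. -/
def HasTopMinor (G : SimpleGraph V) (H : SimpleGraph α) : Prop :=
  HasSubdivWith G H fun _ => True

/-- The exact `1`-subdivision of `H`: every edge is subdivided exactly once. -/
def exactOneSubdivision (H : SimpleGraph α) : SimpleGraph (α ⊕ H.edgeSet) :=
  SimpleGraph.fromRel fun x y =>
    match x, y with
    | Sum.inl a, Sum.inr e => a ∈ (e : Sym2 α)
    | _, _ => False

/-- The graph `K*_{s,t}`: `K_{s,t}` together with `binom s 2` new vertices, each adjacent to a
distinct pair of vertices on the side of size `s`. -/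
def KstarGraph (s t : ℕ) :
    SimpleGraph (Fin s ⊕ (Fin t ⊕ {p : Fin s × Fin s // p.1 < p.2})) :=
  SimpleGraph.fromRel fun x y =>
    match x, y with
    | Sum.inl _, Sum.inr (Sum.inl _) => True
    | Sum.inl a, Sum.inr (Sum.inr c) => a = c.1.1 ∨ a = c.1.2
    | _, _ => False

/-- The auxiliary function `N₁(s,t,δ,δ₁)`. -/
noncomputable def N1 (s t : ℕ) (δ δ₁ : ℝ) : ℝ :=
  if s = 1 then (t : ℝ) - 1
  else if s = 2 then (δ - 2) * δ₁ * t / 2 + δ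
  else (δ - s) * ((Nat.choose ⌊δ₁⌋₊ (s - 1) : ℝ) * ((t : ℝ) - 1) + δ₁ / 2) + δ

/-- The maximum average degree of `G`: maximum of `2|E(H)|/|V(H)|` over nonempty subgraphs. -/
noncomputable def mad [Fintype V] (G : SimpleGraph V) : ℝ :=
  sSup {q : ℝ | ∃ H : G.Subgraph, H.verts.Nonempty ∧
    q = 2 * (H.edgeSet.ncard : ℝ) / (H.verts.ncard : ℝ)}

/-- `∇₀(G)`: maximum of `|E(H)|/|V(H)|` over nonempty subgraphs of `G`. -/
noncomputable def nabla0 [Fintype V] (G : SimpleGraph V) : ℝ :=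
  sSup {q : ℝ | ∃ H : G.Subgraph, H.verts.Nonempty ∧
    q = (H.edgeSet.ncard : ℝ) / (H.verts.ncard : ℝ)}

/-- `∇₁(G)`: maximum of `|E(H)|/|V(H)|` over graphs `H` some `(≤2)`-subdivision of which is a
subgraph of `G`. -/
noncomputable def nabla1 [Fintype V] (G : SimpleGraph V) : ℝ :=
  sSup {q : ℝ | ∃ (n : ℕ) (H : SimpleGraph (Fin n)), 0 < n ∧
    HasSubdivLE G 2 H ∧ q = (H.edgeSet.ncard : ℝ) / (n : ℝ)}

end Defs

/-- The vertex type of the graph `G(s,N)` (here indexed by `t = s - 2`). -/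
def GVert : ℕ → ℕ → Type
  | 0, N => Fin (N + 2)
  | t + 1, N => Option (Fin (N + 1) × GVert t N)

/-- The graph `G(s,N)` (indexed by `t = s - 2`): `GGraph 0 N = G(2,N) = K_{1,N+1}`, and
`GGraph (t+1) N = G(t+3,N)` is obtained from `N+1` disjoint copies of `GGraph t N` by adding
a dominant vertex. -/
def GGraph : (t : ℕ) → (N : ℕ) → SimpleGraph (GVert t N)
  | 0, N => SimpleGraph.fromRel fun i j => i = (0 : Fin (N + 2))
  | t + 1, N => SimpleGraph.fromRel fun x y =>
      match x, y with
      | none, some _ => True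
      | some (i, a), some (j, b) => i = j ∧ (GGraph t N).Adj a b
      | _, _ => False

section More

variable {V : Type u} {α : Type v}

/-- `r` is a forest order witnessing that `H` is a subgraph of the closure of a rooted forest:
`r` is a partial order in which the set of ancestors of each vertex is a chain, and adjacent
vertices of `H` are comparable. -/
def IsForestOrder (H : SimpleGraph α) (r : α → α → Prop) : Prop :=
  IsPartialOrder α r ∧ (∀ v : α, IsChain r {u | r u v}) ∧
    (∀ x y, H.Adj x y → r x y ∨ r y x)

/-- The tree-depth of `H`: the minimum height of a rooted forest whose closure contains `H`
as a subgraph (the height being measured as the maximum number of vertices on a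
root--to--leaf path). -/
noncomputable def treeDepth (H : SimpleGraph α) : ℕ :=
  sInf {k | ∃ r : α → α → Prop, IsForestOrder H r ∧ ∀ v, {u | r u v}.ncard ≤ k}

/-- The vertex cover number `τ(H)`. -/
noncomputable def vertexCoverNumber (H : SimpleGraph α) : ℕ :=
  sInf {k | ∃ S : Set α, S.ncard = k ∧ ∀ ⦃x y⦄, H.Adj x y → x ∈ S ∨ y ∈ S}

/-- The graph obtained from `ℓ` disjoint copies of the star `K_{1,k}` by adding one dominant
vertex. -/
def Hlk (l k : ℕ) : SimpleGraph (Option (Fin l × Fin (k + 1))) :=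
  SimpleGraph.fromRel fun x y =>
    match x, y with
    | none, some _ => True
    | some (i, a), some (j, _) => i = j ∧ a = 0
    | _, _ => False

/-- The star `K_{1,k}` together with `m` isolated vertices. -/
def StarPlusIsolated (k m : ℕ) : SimpleGraph (Fin (k + 1) ⊕ Fin m) :=
  SimpleGraph.fromRel fun x y =>
    match x, y with
    | Sum.inl i, Sum.inl _ => i = 0
    | _, _ => False

/-- `G` admits a `k`-stack layout: a linear ordering of the vertices (given by an injection
into `ℕ`) and an assignment of the edges to `k` stacks so that no two edges in a common stack
cross. -/
def HasStackLayout (G : SimpleGraph V) (k : ℕ) : Prop :=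
  ∃ f : V → ℕ, Function.Injective f ∧
    ∃ σ : Sym2 V → Fin k,
      ∀ a b c d : V, G.Adj a b → G.Adj c d → σ s(a, b) = σ s(c, d) →
        ¬(f a < f c ∧ f c < f b ∧ f b < f d)

/-- `G` admits a `k`-queue layout: a linear ordering of the vertices (given by an injection
into `ℕ`) and an assignment of the edges to `k` queues so that no two edges in a common queue
are nested. -/
def HasQueueLayout (G : SimpleGraph V) (k : ℕ) : Prop :=
  ∃ f : V → ℕ, Function.Injective f ∧
    ∃ σ : Sym2 V → Fin k,
      ∀ a b c d : V, G.Adj a b → G.Adj c d → σ s(a, b) = σ s(c, d) →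
        ¬(f a < f c ∧ f c < f d ∧ f d < f b)

end More

section Minors

variable {V α β : Type*}

theorem IsMinor.of_isContained {H : SimpleGraph α} {G : SimpleGraph V} (h : H ⊑ G) :
    IsMinor H G := by
  obtain ⟨f⟩ := h
  refine ⟨fun a => {f a}, fun a => Set.singleton_nonempty _, fun a => ?_,
    fun a b hab => Set.disjoint_singleton.2 (f.injective.ne hab),
    fun a b hab => ⟨f a, rfl, f b, rfl, f.toHom.map_rel hab⟩⟩
  rw [induce_singleton_eq_top]
  exact connected_top

theorem IsMinor.trans {K : SimpleGraph α} {H : SimpleGraph β} {G : SimpleGraph V}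
    (hKH : IsMinor K H) (hHG : IsMinor H G) : IsMinor K G := by
  obtain ⟨B, hBne, hBconn, hBdisj, hBadj⟩ := hKH
  obtain ⟨C, hCne, hCconn, hCdisj, hCadj⟩ := hHG
  have mem_branch {a : α} {b : β} (hb : b ∈ B a) {x : V} (hx : x ∈ C b) :
      x ∈ ⋃ b ∈ B a, C b := Set.mem_biUnion hb hx
  have reachable_of_mem {a : α} {b : β} (hb : b ∈ B a) {x y : V} (hx : x ∈ C b) (hy : y ∈ C b) :
      (G.induce (⋃ b ∈ B a, C b)).Reachable ⟨x, mem_branch hb hx⟩ ⟨y, mem_branch hb hy⟩ :=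
    ((hCconn b).preconnected ⟨x, hx⟩ ⟨y, hy⟩).map
      (induceHomOfLE G (Set.subset_biUnion_of_mem hb)).toHom
  have reachable_of_walk {a : α} {b b' : B a} (p : (H.induce (B a)).Walk b b') :
      ∀ {x y : V} (hx : x ∈ C b) (hy : y ∈ C b'),
        (G.induce (⋃ b ∈ B a, C b)).Reachable ⟨x, mem_branch b.2 hx⟩ ⟨y, mem_branch b'.2 hy⟩ := by
    induction p with
    | nil => exact fun hx hy => reachable_of_mem (Subtype.coe_prop _) hx hy
    | @cons b₁ b₂ _ hadj _ ih =>
      intro x y hx hy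
      obtain ⟨x', hx', y', hy', hxy'⟩ := hCadj _ _ hadj
      have hstep : (G.induce (⋃ b ∈ B a, C b)).Adj
          ⟨x', mem_branch b₁.2 hx'⟩ ⟨y', mem_branch b₂.2 hy'⟩ := hxy'
      exact (reachable_of_mem b₁.2 hx hx').trans (hstep.reachable.trans (ih hy' hy))
  refine ⟨fun a => ⋃ b ∈ B a, C b, fun a => ?_, fun a => ?_, fun a a' haa' => ?_,
    fun a a' haa' => ?_⟩
  · obtain ⟨b, hb⟩ := hBne a
    exact (hCne b).mono (Set.subset_biUnion_of_mem hb)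
  · obtain ⟨b, hb⟩ := hBne a
    obtain ⟨x, hx⟩ := hCne b
    rw [connected_iff_exists_forall_reachable]
    refine ⟨⟨x, mem_branch hb hx⟩, fun ⟨y, hy⟩ => ?_⟩
    obtain ⟨b', hb', hy'⟩ := Set.mem_iUnion₂.1 hy
    obtain ⟨p⟩ := (hBconn a).preconnected ⟨b, hb⟩ ⟨b', hb'⟩
    exact reachable_of_walk p hx hy'
  · refine Set.disjoint_iUnion₂_left.2 fun b hb => Set.disjoint_iUnion₂_right.2 fun b' hb' => ?_
    exact hCdisj fun h => Set.disjoint_left.1 (hBdisj haa') hb (h ▸ hb')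
  · obtain ⟨b, hb, b', hb', hbb'⟩ := hBadj a a' haa'
    obtain ⟨x, hx, y, hy, hxy⟩ := hCadj b b' hbb'
    exact ⟨x, mem_branch hb hx, y, mem_branch hb' hy, hxy⟩

theorem IsMinor.of_le {K : SimpleGraph α} {H G : SimpleGraph V} (h : IsMinor K H) (hle : H ≤ G) :
    IsMinor K G :=
  h.trans (.of_isContained (.of_le hle))

theorem IsMinor.of_induce {K : SimpleGraph α} {G : SimpleGraph V} {T : Set V}
    (h : IsMinor K (G.induce T)) : IsMinor K G :=
  h.trans (.of_isContained ⟨Copy.induce G T⟩)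

theorem IsMinor.induce_of_support_subset {K : SimpleGraph α} {G : SimpleGraph V} {T : Set V}
    (h : IsMinor K G) (hK : K.support = Set.univ) (hT : G.support ⊆ T) :
    IsMinor K (G.induce T) := by
  obtain ⟨B, hne, hconn, hdisj, hadj⟩ := h
  have branch_subset (a : α) : B a ⊆ T := by
    intro x hx
    refine hT ?_
    obtain ⟨b, hab⟩ : a ∈ K.support := hK ▸ Set.mem_univ a
    obtain ⟨y, hy, z, -, hyz⟩ := hadj a b hab
    obtain rfl | hxy := eq_or_ne x y
    · exact ⟨z, hyz⟩
    · have : Nontrivial (B a) := ⟨⟨x, hx⟩, ⟨y, hy⟩, fun h => hxy (congrArg Subtype.val h)⟩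
      obtain ⟨w, hxw⟩ := (hconn a).preconnected.exists_adj_of_nontrivial ⟨x, hx⟩
      exact ⟨w, hxw⟩
  refine ⟨fun a => Subtype.val ⁻¹' B a, fun a => ?_, fun a => ?_,
    fun a b hab => (hdisj hab).preimage _, fun a b hab => ?_⟩
  · obtain ⟨x, hx⟩ := hne a
    exact ⟨⟨x, branch_subset a hx⟩, hx⟩
  · let f : G.induce (B a) →g (G.induce T).induce (Subtype.val ⁻¹' B a) :=
      ⟨fun x => ⟨⟨x, branch_subset a x.2⟩, x.2⟩, fun hxy => hxy⟩
    exact (hconn a).map f fun x => ⟨⟨x, x.2⟩, rfl⟩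
  · obtain ⟨x, hx, y, hy, hxy⟩ := hadj a b hab
    exact ⟨⟨x, branch_subset a hx⟩, hx, ⟨y, branch_subset b hy⟩, hy, hxy⟩

end Minors

namespace DefectiveChoosability

open scoped Classical

section CliqueMinorFree

variable {V : Type*} {s : ℕ} {G H : SimpleGraph V}

/-- `G` is `K_{s+1}`-minor-free. -/
def CliqueMinorFree (s : ℕ) (G : SimpleGraph V) : Prop :=
  ¬ IsMinor (⊤ : SimpleGraph (Fin (s + 1))) G

theorem CliqueMinorFree.mono (hG : CliqueMinorFree s G) (hle : H ≤ G) : CliqueMinorFree s H :=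
  fun h => hG (h.of_le hle)

theorem CliqueMinorFree.induce (hG : CliqueMinorFree s G) (T : Set V) :
    CliqueMinorFree s (G.induce T) :=
  fun h => hG h.of_induce

theorem CliqueMinorFree.cliqueFree (hG : CliqueMinorFree s G) : G.CliqueFree (s + 1) := by
  by_contra h
  exact hG (.of_isContained ((not_cliqueFree_iff_top_isContained _).1 h))

theorem cliqueMinorFree_of_isVertexCover {T : Finset V} (hT : G.IsVertexCover T) :
    CliqueMinorFree (T.card + 1) G := by
  rintro ⟨B, -, -, hdisj, hadj⟩
  let meets : Finset (Fin (T.card + 1 + 1)) := {a | ∃ x ∈ B a, x ∈ T}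
  have card_meets : meets.card ≤ T.card := by
    refine Finset.card_le_card_of_forall_subsingleton (fun a x => x ∈ B a)
      (fun a ha => ?_) fun x _ a ha b hb => ?_
    · obtain ⟨x, hxB, hxT⟩ := (Finset.mem_filter.1 ha).2
      exact ⟨x, hxT, hxB⟩
    · by_contra hab
      exact Set.disjoint_left.1 (hdisj hab) ha.2 hb.2
  obtain ⟨a, ha, b, hb, hab⟩ : ∃ a ∈ meetsᶜ, ∃ b ∈ meetsᶜ, a ≠ b := by
    rw [← Finset.one_lt_card, Finset.card_compl, Fintype.card_fin]
    omega
  obtain ⟨x, hx, y, hy, hxy⟩ := hadj a b hab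
  simp only [meets, Finset.compl_filter, Finset.mem_filter, Finset.mem_univ, true_and, not_exists,
    not_and] at ha hb
  exact (hT hxy).elim (ha x hx) (hb y hy)

end CliqueMinorFree

section Contraction

variable {V : Type*} {s : ℕ} {G : SimpleGraph V} {S : Set V} {φ : V → V}

/-- The graph obtained from `G` by deleting the edges that meet `S`; the vertices of `S` stay, as
isolated vertices. -/
def isolate (G : SimpleGraph V) (S : Set V) : SimpleGraph V where
  Adj a b := G.Adj a b ∧ a ∉ S ∧ b ∉ S
  symm := ⟨fun _ _ h => ⟨h.1.symm, h.2.2, h.2.1⟩⟩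

/-- The graph obtained from `G` by contracting each vertex `v` of `S` into its neighbour `φ v`; the
vertices of `S` stay, as isolated vertices. -/
def contract (G : SimpleGraph V) (S : Set V) (φ : V → V) : SimpleGraph V :=
  SimpleGraph.fromRel fun a b =>
    a ∉ S ∧ b ∉ S ∧ (G.Adj a b ∨ ∃ v ∈ S, φ v = a ∧ G.Adj v b)

theorem contract_adj {a b : V} :
    (contract G S φ).Adj a b ↔ a ≠ b ∧ a ∉ S ∧ b ∉ S ∧
      (G.Adj a b ∨ (∃ v ∈ S, φ v = a ∧ G.Adj v b) ∨ ∃ v ∈ S, φ v = b ∧ G.Adj v a) := by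
  rw [contract, fromRel_adj, G.adj_comm b a]
  grind

theorem isolate_adj {a b : V} : (isolate G S).Adj a b ↔ G.Adj a b ∧ a ∉ S ∧ b ∉ S :=
  Iff.rfl

theorem isolate_le : isolate G S ≤ G :=
  fun _ _ h => h.1

theorem isolate_le_contract : isolate G S ≤ contract G S φ :=
  fun _ _ h => contract_adj.2 ⟨h.1.ne, h.2.1, h.2.2, .inl h.1⟩

theorem contract_singleton_adj {v x a b : V} :
    (contract G {v} fun _ => x).Adj a b ↔ a ≠ b ∧ a ≠ v ∧ b ≠ v ∧
      (G.Adj a b ∨ x = a ∧ G.Adj v b ∨ x = b ∧ G.Adj v a) := by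
  simp only [contract_adj, Set.mem_singleton_iff, exists_eq_left]

theorem contract_adj_of_forall_not_adj (hφ : ∀ v ∈ S, G.Adj v (φ v)) {a b : V} (ha : a ∉ S)
    (haS : ∀ v ∈ S, ¬ G.Adj a v) : (contract G S φ).Adj a b ↔ G.Adj a b := by
  rw [contract_adj]
  constructor
  · rintro ⟨-, -, -, h | ⟨v, hv, rfl, -⟩ | ⟨v, hv, -, h⟩⟩
    exacts [h, (haS v hv (hφ v hv).symm).elim, (haS v hv h.symm).elim]
  · exact fun h => ⟨h.ne, ha, fun hb => haS b hb h, .inl h⟩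

theorem isolate_contract_sup_edge_le {v x y : V} (hv : v ∉ S) (hx : x ∉ insert v S)
    (hy : y ∉ insert v S) (hvy : G.Adj v y) :
    isolate (contract G S φ) {v} ⊔ edge x y ≤
      contract G (insert v S) (Function.update φ v x) := by
  have update_eq {u : V} (hu : u ∈ S) : Function.update φ v x u = φ u :=
    Function.update_of_ne (ne_of_mem_of_not_mem hu hv) _ _
  have hnew (hxy : x ≠ y) : (contract G (insert v S) (Function.update φ v x)).Adj x y :=
    contract_adj.2 ⟨hxy, hx, hy, .inr (.inl ⟨v, .inl rfl, Function.update_self .., hvy⟩)⟩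
  rintro a b (hab | hab)
  · obtain ⟨hH, ha, hb⟩ := isolate_adj.1 hab
    obtain ⟨hne, haS, hbS, h⟩ := contract_adj.1 hH
    refine contract_adj.2 ⟨hne, by simp_all, by simp_all, h.imp_right (Or.imp ?_ ?_)⟩ <;>
    exact fun ⟨u, hu, hφu, huadj⟩ => ⟨u, .inr hu, update_eq hu ▸ hφu, huadj⟩
  · obtain ⟨⟨rfl, rfl⟩ | ⟨rfl, rfl⟩, hne⟩ := (edge_adj ..).1 hab
    exacts [hnew hne, (hnew hne.symm).symm]

theorem support_contract_subset (hφ : ∀ v ∈ S, G.Adj v (φ v)) :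
    (contract G S φ).support ⊆ G.support \ S := by
  rintro a ⟨b, hab⟩
  obtain ⟨-, ha, -, h | ⟨v, hv, rfl, -⟩ | ⟨v, -, -, h⟩⟩ := contract_adj.1 hab
  exacts [⟨⟨b, h⟩, ha⟩, ⟨⟨v, (hφ v hv).symm⟩, ha⟩, ⟨⟨v, h.symm⟩, ha⟩]

theorem isMinor_induce_contract (hφ : ∀ v ∈ S, G.Adj v (φ v)) :
    IsMinor ((contract G S φ).induce Sᶜ) G := by
  let B (w : (Sᶜ : Set V)) : Set V := insert w.1 {v ∈ S | φ v = w}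
  have merged_mem {v : V} (hv : v ∈ S) {w : (Sᶜ : Set V)} (h : φ v = w) : v ∈ B w := .inr ⟨hv, h⟩
  refine ⟨B, fun w => ⟨w, .inl rfl⟩, fun w => ?_, fun w w' hww' => ?_, fun w w' hww' => ?_⟩
  · rw [connected_iff_exists_forall_reachable]
    refine ⟨⟨w, .inl rfl⟩, ?_⟩
    rintro ⟨v, rfl | ⟨hv, hvw⟩⟩
    · exact .rfl
    · have hwv : (G.induce (B w)).Adj ⟨w, .inl rfl⟩ ⟨v, merged_mem hv hvw⟩ :=
        show G.Adj w v from hvw ▸ (hφ v hv).symm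
      exact hwv.reachable
  · refine Set.disjoint_left.2 ?_
    rintro v (rfl | ⟨hv, hvw⟩) (hvw' | ⟨hv', hvw'⟩)
    exacts [hww' (Subtype.ext hvw'), w.2 hv', w'.2 (hvw' ▸ hv), hww' (Subtype.ext (hvw ▸ hvw'))]
  · obtain ⟨-, -, -, h | ⟨v, hv, hvw, h⟩ | ⟨v, hv, hvw, h⟩⟩ := contract_adj.1 hww'
    exacts [⟨w, .inl rfl, w', .inl rfl, h⟩, ⟨v, merged_mem hv hvw, w', .inl rfl, h⟩,
      ⟨w, .inl rfl, v, merged_mem hv hvw, h.symm⟩]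

theorem CliqueMinorFree.contract (hs : 1 ≤ s) (hG : CliqueMinorFree s G)
    (hφ : ∀ v ∈ S, G.Adj v (φ v)) : CliqueMinorFree s (contract G S φ) := by
  have : Nontrivial (Fin (s + 1)) := Fin.nontrivial_iff_two_le.2 (by omega)
  intro h
  have hsupport := (support_contract_subset hφ).trans (Set.sdiff_subset_compl _ _)
  exact hG ((h.induce_of_support_subset connected_top.preconnected.support_eq_univ hsupport).trans
    (isMinor_induce_contract hφ))

end Contraction

section Counting

variable {V : Type*} [Fintype V] {s : ℕ} {G : SimpleGraph V} {S : Finset V}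

theorem edgeFinset_isolate :
    (isolate G S).edgeFinset = G.edgeFinset \ S.biUnion fun v => G.incidenceFinset v := by
  ext e
  induction e with | _ a b =>
  simp only [isolate_adj, mem_edgeFinset, mem_edgeSet, Finset.mem_sdiff, Finset.mem_biUnion,
    mem_incidenceFinset, mk'_mem_incidenceSet_iff, Finset.mem_coe]
  grind

theorem card_edgeFinset_isolate (hS : G.IsIndepSet S) :
    (isolate G S).edgeFinset.card + ∑ v ∈ S, G.degree v = G.edgeFinset.card := by
  have hdisj : Set.PairwiseDisjoint (S : Set V) fun v => G.incidenceFinset v := by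
    intro v hv w hw hvw
    rw [Function.onFun, Finset.disjoint_left]
    intro e hev hew
    rw [mem_incidenceFinset] at hev hew
    exact hS hv hw hvw (G.adj_of_mem_incidenceSet hvw hev hew)
  have hsubset : (S.biUnion fun v => G.incidenceFinset v) ⊆ G.edgeFinset :=
    Finset.biUnion_subset.2 fun v _ => G.incidenceFinset_subset v
  rw [edgeFinset_isolate, ← Finset.card_sdiff_add_card_eq_card hsubset, Finset.card_biUnion hdisj]
  simp only [card_incidenceFinset_eq_degree]

theorem exists_not_adj_of_le_degree {v : V} (hG : G.CliqueFree (s + 1)) (hv : s ≤ G.degree v) :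
    ∃ x y, G.Adj v x ∧ G.Adj v y ∧ x ≠ y ∧ ¬ G.Adj x y := by
  by_contra! hclique
  have hinsert : G.IsClique (insert v (G.neighborFinset v) : Finset V) := by
    rw [Finset.coe_insert]
    refine IsClique.insert (fun x hx y hy hxy => ?_) fun x hx _ => by simpa using hx
    exact hclique x y (by simpa using hx) (by simpa using hy) hxy
  refine (hG.mono ?_) _ ⟨hinsert, rfl⟩
  rw [Finset.card_insert_of_notMem (by simp), card_neighborFinset_eq_degree]
  omega

theorem exists_contract (hs : 1 ≤ s) (hG : CliqueMinorFree s G) (hS : G.IsIndepSet S)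
    (hdeg : ∀ v ∈ S, s ≤ G.degree v) :
    ∃ φ : V → V, (∀ v ∈ S, G.Adj v (φ v)) ∧
      G.edgeFinset.card + S.card ≤ (contract G S φ).edgeFinset.card + ∑ v ∈ S, G.degree v := by
  induction S using Finset.induction_on with
  | empty =>
    have hle : G ≤ isolate G (∅ : Finset V) := fun a b hab => by simpa [isolate_adj] using hab
    refine ⟨id, by simp, ?_⟩
    simpa only [Finset.card_empty, Finset.sum_empty, add_zero] using
      Finset.card_le_card (edgeFinset_mono (hle.trans isolate_le_contract))
  | insert v S hv ih =>
    have hvS : ∀ u ∈ S, ¬ G.Adj v u := fun u hu hvu =>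
      hS (Finset.mem_coe.2 (Finset.mem_insert_self v S))
        (Finset.mem_coe.2 (Finset.mem_insert_of_mem hu)) hvu.ne hvu
    rw [Finset.forall_mem_insert] at hdeg
    obtain ⟨φ, hφ, hcard⟩ := ih (hS.mono (Finset.coe_subset.2 (Finset.subset_insert v S))) hdeg.2
    set H := contract G S φ
    have hneighbor (u : V) : H.Adj v u ↔ G.Adj v u := contract_adj_of_forall_not_adj hφ hv hvS
    have hdegree : H.degree v = G.degree v := by
      simp only [← card_neighborFinset_eq_degree, neighborFinset_eq_filter, hneighbor]
    obtain ⟨x, y, hx, hy, hxy, hnadj⟩ :=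
      exists_not_adj_of_le_degree (hG.contract hs hφ).cliqueFree (hdegree ▸ hdeg.1)
    rw [hneighbor] at hx hy
    have notMem {u : V} (hu : G.Adj v u) : u ∉ (insert v S : Set V) :=
      fun h => h.elim hu.ne' fun huS => hvS u huS hu
    have hle := isolate_contract_sup_edge_le (φ := φ) hv (notMem hx) (notMem hy) hy
    rw [← Finset.coe_singleton, ← Finset.coe_insert] at hle
    refine ⟨Function.update φ v x, ?_, ?_⟩
    · rw [Finset.forall_mem_insert, Function.update_self]
      refine ⟨hx, fun u hu => ?_⟩
      rw [Function.update_of_ne (ne_of_mem_of_not_mem hu hv)]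
      exact hφ u hu
    · have hisolate := card_edgeFinset_isolate (G := H) (S := {v}) (by simp)
      have hsup := card_edgeFinset_sup_edge (isolate H ({v} : Finset V)) (fun h => hnadj h.1) hxy
      have hmono := hsup.symm.trans_le (Finset.card_le_card (edgeFinset_mono hle))
      rw [Finset.sum_singleton] at hisolate
      rw [Finset.card_insert_of_notMem hv, Finset.sum_insert hv]
      omega

end Counting

section LowDegree

variable {V : Type*} [Fintype V] {s : ℕ} {G : SimpleGraph V} {u v x : V}

theorem ncard_support_contract_singleton_lt {V : Type*} [Finite V] {G : SimpleGraph V} {v x : V}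
    (hvx : G.Adj v x) :
    (contract G {v} fun _ => x).support.ncard < G.support.ncard := by
  have hsubset := support_contract_subset (G := G) (S := {v}) (φ := fun _ => x) (by simpa)
  exact Set.ncard_lt_ncard (hsubset.trans_ssubset
    (Set.sdiff_singleton_ssubset.2 ⟨x, hvx⟩)) (Set.toFinite _)

theorem neighborFinset_erase_subset_contract_singleton (hu : u ≠ v) :
    (G.neighborFinset u).erase v ⊆ (contract G {v} fun _ => x).neighborFinset u := by
  intro w hw
  rw [Finset.mem_erase, mem_neighborFinset] at hw
  exact (mem_neighborFinset ..).2 (contract_singleton_adj.2 ⟨hw.2.ne, hu, hw.1, .inl hw.2⟩)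

theorem degree_le_degree_contract_singleton_add_one (hu : u ≠ v) :
    G.degree u ≤ (contract G {v} fun _ => x).degree u + 1 := by
  have := Finset.card_le_card (neighborFinset_erase_subset_contract_singleton (G := G) (x := x) hu)
  have := (G.neighborFinset u).pred_card_le_card_erase (a := v)
  simp only [← card_neighborFinset_eq_degree]
  omega

theorem degree_le_degree_contract_singleton (hu : u ≠ v)
    (h : G.Adj u v → ∃ w, (contract G {v} fun _ => x).Adj u w ∧ ¬ G.Adj u w) :
    G.degree u ≤ (contract G {v} fun _ => x).degree u := by
  simp only [← card_neighborFinset_eq_degree]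
  have hsubset := neighborFinset_erase_subset_contract_singleton (G := G) (x := x) hu
  by_cases huv : G.Adj u v
  · obtain ⟨w, hw, hnadj⟩ := h huv
    have hinsert := Finset.card_le_card
      (Finset.insert_subset ((mem_neighborFinset _ u w).2 hw) hsubset)
    rw [Finset.card_insert_of_notMem (by simp [hnadj]),
      Finset.card_erase_add_one (by simpa using huv)] at hinsert
    exact hinsert
  · rw [Finset.erase_eq_of_notMem (by simpa using huv)] at hsubset
    exact Finset.card_le_card hsubset

theorem degree_le_degree_contract_singleton_of_not_common (hu : u ≠ v) (hux : u ≠ x)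
    (hvx : v ≠ x) (h : G.Adj u v → ¬ G.Adj u x) :
    G.degree u ≤ (contract G {v} fun _ => x).degree u :=
  degree_le_degree_contract_singleton hu fun huv =>
    ⟨x, contract_singleton_adj.2 ⟨hux, hu, hvx.symm, .inr (.inr ⟨rfl, huv.symm⟩)⟩, h huv⟩

theorem exists_adj_ne_of_two_le_degree (hv : 2 ≤ G.degree v) (x : V) : ∃ w, G.Adj v w ∧ w ≠ x := by
  obtain ⟨w, hw, hwx⟩ := (G.neighborFinset v).exists_mem_ne hv x
  exact ⟨w, by simpa using hw, hwx⟩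

theorem exists_mem_forall_mem_ne {α : Type*} {T : Set α} {P : α → Prop} {x : α} (hT : T.Nonempty)
    (h : ∀ v ∈ T, v ≠ x → P v) : ∃ p ∈ T, ∀ v ∈ T, v ≠ p → P v := by
  by_cases hx : x ∈ T
  · exact ⟨x, hx, h⟩
  · exact hT.imp fun p hp => ⟨hp, fun v hv _ => h v hv (ne_of_mem_of_not_mem hv hx)⟩

theorem exists_degree_lt_two_ne {G : SimpleGraph V} (hG : CliqueMinorFree 2 G)
    (hne : G.support.Nonempty) (x : V) : ∃ v ∈ G.support, v ≠ x ∧ G.degree v < 2 := by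
  induction hn : G.support.ncard using Nat.strong_induction_on generalizing G x with
  | _ n ih =>
  by_contra! hdeg
  obtain ⟨p, ⟨w, hpw⟩, hpdeg⟩ := exists_mem_forall_mem_ne hne hdeg
  obtain ⟨q, hwq, hqp⟩ := exists_adj_ne_of_two_le_degree (hpdeg w ⟨p, hpw.symm⟩ hpw.ne') p
  have hpq : (contract G {w} fun _ => p).Adj p q :=
    contract_singleton_adj.2 ⟨hqp.symm, hpw.ne, hwq.ne', .inr (.inl ⟨rfl, hwq⟩)⟩
  have hadj : ∀ v ∈ ({w} : Set V), G.Adj v p := by simpa using hpw.symm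
  obtain ⟨v, hv, hvp, hvdeg⟩ := ih _ (hn ▸ ncard_support_contract_singleton_lt hpw.symm)
    (hG.contract one_le_two hadj) ⟨p, q, hpq⟩ p rfl
  obtain ⟨hvG, hvw⟩ := support_contract_subset hadj hv
  have no_triangle (hvw : G.Adj v w) (hvp : G.Adj v p) : False :=
    hG.cliqueFree {v, w, p} (is3Clique_triple_iff.2 ⟨hvw, hvp, hpw.symm⟩)
  have := degree_le_degree_contract_singleton_of_not_common hvw hvp hpw.ne' no_triangle
  exact (hpdeg v hvG hvp).not_gt (this.trans_lt hvdeg)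

theorem exists_degree_le_degree_contract_of_degree_eq_three {x y z : V} (hG : G.CliqueFree 4)
    (hxy : G.Adj x y) (hzx : G.Adj z x) (hzy : G.Adj z y) (hz : G.degree z = 3) :
    ∃ u, G.Adj z u ∧ u ≠ x ∧ u ≠ y ∧ ∀ v, v ≠ x → v ≠ y → v ≠ z →
      G.degree v ≤ (contract G {z} fun _ => u).degree v := by
  obtain ⟨u, hu, huxy⟩ : ∃ u ∈ G.neighborFinset z, u ∉ ({x, y} : Finset V) :=
    Finset.exists_mem_notMem_of_card_lt_card <|
      Finset.card_le_two.trans_lt (hz.symm ▸ by norm_num : 2 < G.degree z)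
  simp only [mem_neighborFinset, Finset.mem_insert, Finset.mem_singleton, not_or] at hu huxy
  refine ⟨u, hu, huxy.1, huxy.2, fun v hvx hvy hvz => ?_⟩
  obtain rfl | hvu := eq_or_ne v u
  · refine degree_le_degree_contract_singleton hvz fun _ => ?_
    by_contra! h
    have adj_of_adj {w : V} (hzw : G.Adj z w) (hvw : v ≠ w) : G.Adj v w :=
      h w (contract_singleton_adj.2 ⟨hvw, hvz, hzw.ne', .inr (.inl ⟨rfl, hzw⟩)⟩)
    have hclique := is3Clique_triple_iff.2 ⟨hzx, hzy, hxy⟩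
    refine hG (insert v {z, x, y}) (hclique.insert ?_)
    simpa using ⟨hu.symm, adj_of_adj hzx hvx, adj_of_adj hzy hvy⟩
  · refine degree_le_degree_contract_singleton_of_not_common hvz hvu hu.ne fun hzv _ => ?_
    have hsubset : ({x, y, u, v} : Finset V) ⊆ G.neighborFinset z := by
      simpa [Finset.insert_subset_iff] using ⟨hzx, hzy, hu, hzv.symm⟩
    have hcard := Finset.card_le_card hsubset
    have := hxy.ne
    have hfour : ({x, y, u, v} : Finset V).card = 4 := by grind
    rw [card_neighborFinset_eq_degree] at hcard
    omega

theorem exists_degree_lt_three_ne {G : SimpleGraph V} (hG : CliqueMinorFree 3 G) {x y z : V}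
    (hxy : G.Adj x y) (hz : z ∈ G.support) (hzx : z ≠ x) (hzy : z ≠ y) :
    ∃ v ∈ G.support, v ≠ x ∧ v ≠ y ∧ G.degree v < 3 := by
  induction hn : G.support.ncard using Nat.strong_induction_on generalizing G x y z with
  | _ n ih =>
  by_contra! hdeg
  by_cases hcommon : ∃ z, G.Adj z x ∧ G.Adj z y ∧ G.degree z ≤ 3
  · obtain ⟨z, hzx, hzy, hzdeg⟩ := hcommon
    have hzdeg : G.degree z = 3 := hzdeg.antisymm (hdeg z ⟨x, hzx⟩ hzx.ne hzy.ne)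
    obtain ⟨u, hzu, hux, huy, hle⟩ :=
      exists_degree_le_degree_contract_of_degree_eq_three hG.cliqueFree hxy hzx hzy hzdeg
    have hadj : ∀ v ∈ ({z} : Set V), G.Adj v u := by simpa using hzu
    have hHxy : (contract G {z} fun _ => u).Adj x y :=
      contract_singleton_adj.2 ⟨hxy.ne, hzx.ne', hzy.ne', .inl hxy⟩
    have hHux : (contract G {z} fun _ => u).Adj u x :=
      contract_singleton_adj.2 ⟨hux, hzu.ne', hzx.ne', .inr (.inl ⟨rfl, hzx⟩)⟩
    obtain ⟨v, hv, hvx, hvy, hvdeg⟩ := ih _ (hn ▸ ncard_support_contract_singleton_lt hzu)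
      (hG.contract (by norm_num) hadj) hHxy ⟨x, hHux⟩ hux huy rfl
    obtain ⟨hvG, hvz⟩ := support_contract_subset hadj hv
    exact (hdeg v hvG hvx hvy).not_gt ((hle v hvx hvy hvz).trans_lt hvdeg)
  · push Not at hcommon
    have hadj : ∀ v ∈ ({y} : Set V), G.Adj v x := by simpa using hxy.symm
    set H := contract G {y} fun _ => x
    have hH : CliqueMinorFree 3 H := hG.contract (by norm_num) hadj
    have hHdeg {v : V} (hv : v ∈ G.support) (hvx : v ≠ x) (hvy : v ≠ y) : 3 ≤ H.degree v := by
      by_cases h : G.Adj v x ∧ G.Adj v y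
      · have := hcommon v h.1 h.2
        have : G.degree v ≤ H.degree v + 1 := degree_le_degree_contract_singleton_add_one hvy
        omega
      · exact (hdeg v hv hvx hvy).trans <|
          degree_le_degree_contract_singleton_of_not_common hvy hvx hxy.ne' fun h₁ h₂ => h ⟨h₂, h₁⟩
    have hzH : z ∈ H.support :=
      (H.degree_pos_iff_mem_support z).1 ((hHdeg hz hzx hzy).trans_lt' three_pos)
    have hHdeg_of_ne : ∀ v ∈ H.support, v ≠ x → 3 ≤ H.degree v := fun v hv hvx => by
      obtain ⟨hvG, hvy⟩ := support_contract_subset hadj hv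
      exact hHdeg hvG hvx hvy
    obtain ⟨p, ⟨w, hpw : H.Adj p w⟩, hpdeg⟩ := exists_mem_forall_mem_ne ⟨z, hzH⟩ hHdeg_of_ne
    obtain ⟨q, hwq, hqp⟩ := exists_adj_ne_of_two_le_degree
      ((hpdeg w ⟨p, hpw.symm⟩ hpw.ne').trans' (by norm_num)) p
    obtain ⟨v, hv, hvp, -, hvdeg⟩ := ih _ (hn ▸ ncard_support_contract_singleton_lt hxy.symm) hH
      hpw ⟨w, hwq.symm⟩ hqp hwq.ne' rfl
    exact (hpdeg v hv hvp).not_gt hvdeg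

theorem exists_degree_pos_lt (hs : 2 ≤ s) (hs' : s ≤ 3) (hG : CliqueMinorFree s G) (hne : G ≠ ⊥) :
    ∃ v, 0 < G.degree v ∧ G.degree v < s := by
  obtain ⟨x, y, hxy⟩ := ne_bot_iff_exists_adj.1 hne
  simp only [degree_pos_iff_mem_support]
  obtain rfl | rfl : s = 2 ∨ s = 3 := by omega
  · obtain ⟨v, hv, -, hvdeg⟩ := exists_degree_lt_two_ne hG ⟨x, y, hxy⟩ x
    exact ⟨v, hv, hvdeg⟩
  · by_cases hx : G.degree x < 3
    · exact ⟨x, ⟨y, hxy⟩, hx⟩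
    · obtain ⟨z, hxz, hzy⟩ := exists_adj_ne_of_two_le_degree (by omega : 2 ≤ G.degree x) y
      obtain ⟨v, hv, -, -, hvdeg⟩ := exists_degree_lt_three_ne hG hxy ⟨x, hxz.symm⟩ hxz.ne' hzy
      exact ⟨v, hv, hvdeg⟩

end LowDegree

section Density

variable {s : ℕ} {δ : ℝ}

/-- Every finite `K_{s+1}`-minor-free graph `H` satisfies `|E(H)| ≤ δ |V(H)|`. -/
def DensityBound (s : ℕ) (δ : ℝ) : Prop :=
  ∀ (W : Type) [Fintype W] (H : SimpleGraph W), CliqueMinorFree s H →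
    (H.edgeSet.ncard : ℝ) ≤ δ * (Fintype.card W : ℝ)

theorem DensityBound.card_edgeFinset_le (hδ : DensityBound s δ) {V : Type} [Fintype V]
    {G : SimpleGraph V} {T : Finset V} (hG : CliqueMinorFree s G) (hT : G.support ⊆ T) :
    (G.edgeFinset.card : ℝ) ≤ δ * T.card := by
  rw [← card_edgeFinset_induce_of_support_subset hT, ← Set.ncard_coe_finset, coe_edgeFinset]
  simpa using hδ _ _ (hG.induce T)

theorem DensityBound.sub_one_le (hs : 1 ≤ s) (hδ : DensityBound s δ) : (s : ℝ) - 1 ≤ δ := by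
  obtain ⟨s, rfl⟩ := Nat.exists_eq_add_of_le' hs
  rw [Nat.cast_add_one, add_sub_cancel_right]
  have hbound (n : ℕ) : (s : ℝ) * n ≤ δ * (s + n) := by
    have hcover : (completeBipartiteGraph (Fin s) (Fin n)).IsVertexCover
        (Finset.univ.map Function.Embedding.inl : Finset (Fin s ⊕ Fin n)) := by
      rintro (_ | _) (_ | _) h <;> simp_all
    have hminor := cliqueMinorFree_of_isVertexCover hcover
    rw [Finset.card_map, Finset.card_univ, Fintype.card_fin] at hminor
    have := hδ _ _ hminor
    rw [Set.ncard, encard_edgeSet_completeBipartiteGraph] at this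
    simpa using this
  by_contra! hlt
  obtain ⟨n, hn⟩ := exists_nat_gt (δ * s / (s - δ))
  rw [div_lt_iff₀ (sub_pos.2 hlt)] at hn
  linarith [hbound n]

end Density

section Coloring

theorem exists_mem_forall_ne {α κ : Type*} {c : α → κ} {T : Finset α} {A : Finset κ}
    (h : (T.image c).card < A.card) :
    ∃ q ∈ A, ∀ u ∈ T, c u ≠ q := by
  obtain ⟨q, hqA, hq⟩ := Finset.exists_mem_notMem_of_card_lt_card h
  exact ⟨q, hqA, fun u hu hcu => hq (Finset.mem_image.2 ⟨u, hu, hcu⟩)⟩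

variable {V κ : Type*} [Fintype V] {s d : ℕ} {G H : SimpleGraph V} {L : V → Finset κ} {c : V → κ}

/-- The defect of `v` under the colouring `c`: the number of its neighbours of its own colour. -/
noncomputable def defect (G : SimpleGraph V) (c : V → κ) (v : V) : ℕ :=
  ((G.neighborFinset v).filter fun w => c w = c v).card

/-- `c` is a colouring of `G` from the lists `L` in which every defect is at most `d`. -/
structure IsDefectiveColoring (G : SimpleGraph V) (L : V → Finset κ) (d : ℕ) (c : V → κ) :
    Prop where
  mem : ∀ v, c v ∈ L v
  defect_le : ∀ v, defect G c v ≤ d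

theorem defect_mono (h : H ≤ G) (c : V → κ) (v : V) : defect H c v ≤ defect G c v := by
  refine Finset.card_le_card (Finset.filter_subset_filter _ fun w hw => ?_)
  rw [mem_neighborFinset] at hw ⊢
  exact h hw

theorem defect_update_le {v : V} {q : κ} (hq : ∀ u ∈ G.neighborFinset v, c u ≠ q) (w : V) :
    defect G (Function.update c v q) w ≤ defect (isolate G {v}) c w := by
  refine Finset.card_le_card fun u hu => ?_
  simp only [Finset.mem_filter, mem_neighborFinset, isolate_adj, Set.mem_singleton_iff] at hu hq ⊢
  have := hu.1.ne
  have := hu.1.symm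
  grind [Function.update_apply]

theorem IsDefectiveColoring.update {v : V} {q : κ} (hc : IsDefectiveColoring (isolate G {v}) L d c)
    (hqL : q ∈ L v) (hq : ∀ u ∈ G.neighborFinset v, c u ≠ q) :
    IsDefectiveColoring G L d (Function.update c v q) where
  mem w := by
    obtain rfl | hw := eq_or_ne w v
    · rwa [Function.update_self]
    · exact Function.update_of_ne hw q c ▸ hc.mem w
  defect_le w := (defect_update_le hq w).trans (hc.defect_le w)

theorem IsDefectiveColoring.exists_of_degree_lt {v : V} (hv : G.degree v < (L v).card)
    (hc : IsDefectiveColoring (isolate G {v}) L d c) : ∃ c, IsDefectiveColoring G L d c := by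
  obtain ⟨q, hqL, hq⟩ := exists_mem_forall_ne (Finset.card_image_le.trans_lt hv)
  exact ⟨_, hc.update hqL hq⟩

theorem card_image_neighborFinset_add_defect_le (c : V → κ) (v : V) :
    ((G.neighborFinset v).image c).card + defect G c v ≤ G.degree v + 1 := by
  have hsubset : (G.neighborFinset v).image c ⊆
      insert (c v) (((G.neighborFinset v).filter fun w => ¬ c w = c v).image c) := by
    intro q hq
    grind
  have := (Finset.card_le_card hsubset).trans
    ((Finset.card_insert_le _ _).trans (Nat.succ_le_succ Finset.card_image_le))
  have := (G.neighborFinset v).card_filter_add_card_filter_not fun w => c w = c v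
  rw [card_neighborFinset_eq_degree] at this
  simp only [defect]
  omega

/-- Take a colouring of minimum total defect: if a vertex `v` violates the last condition, then some
colour of `L v` is absent from its neighbourhood, and recolouring `v` lowers the total. -/
theorem IsDefectiveColoring.exists_defect_add_card_le (hc : IsDefectiveColoring G L d c) :
    ∃ c, IsDefectiveColoring G L d c ∧
      ∀ v, defect G c v ≠ 0 → defect G c v + (L v).card ≤ G.degree v + 1 := by
  obtain ⟨c, hc, hmin⟩ := exists_minimalFor_of_wellFoundedLT (IsDefectiveColoring G L d)
    (fun c => ∑ v, defect G c v) ⟨c, hc⟩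
  refine ⟨c, hc, fun v hv => ?_⟩
  by_contra! hlt
  obtain ⟨q, hqL, hq⟩ : ∃ q ∈ L v, ∀ u ∈ G.neighborFinset v, c u ≠ q := by
    refine exists_mem_forall_ne ?_
    have := card_image_neighborFinset_add_defect_le (G := G) c v
    omega
  have hle (w : V) : defect G (Function.update c v q) w ≤ defect (isolate G {v}) c w :=
    defect_update_le hq w
  have hmono (w : V) : defect (isolate G {v}) c w ≤ defect G c w := defect_mono isolate_le c w
  have hzero : defect (isolate G {v}) c v = 0 := by
    simp [defect, Finset.filter_eq_empty_iff, isolate_adj]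
  have hupdate : IsDefectiveColoring G L d (Function.update c v q) :=
    IsDefectiveColoring.update ⟨hc.mem, fun w => (hmono w).trans (hc.defect_le w)⟩ hqL hq
  have hlt : ∑ w, defect G (Function.update c v q) w < ∑ w, defect G c w :=
    Finset.sum_lt_sum (fun w _ => (hle w).trans (hmono w))
      ⟨v, Finset.mem_univ v, (hle v).trans_lt (hzero ▸ Nat.pos_of_ne_zero hv)⟩
  exact hlt.not_ge (hmin hupdate hlt.le)

theorem defect_le_of_forall_adj_iff {x y : V} (hH : ∀ w, H.Adj x w ↔ G.Adj x w ∧ w ≠ y)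
    (hxy : G.Adj x y) (hx : G.degree x ∈ Set.Ico s (d + s))
    (hgood : defect H c x ≠ 0 → defect H c x + s ≤ H.degree x + 1) : defect G c x ≤ d := by
  have hneighbor : H.neighborFinset x = (G.neighborFinset x).erase y := by
    ext w
    simp only [mem_neighborFinset, hH, Finset.mem_erase, and_comm]
  have hdefect : defect G c x ≤ defect H c x + 1 := by
    rw [defect, defect, hneighbor, Finset.filter_erase]
    have := Finset.pred_card_le_card_erase
      (s := (G.neighborFinset x).filter fun w => c w = c x) (a := y)
    omega
  have hdegree : H.degree x + 1 = G.degree x := by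
    rw [← card_neighborFinset_eq_degree, hneighbor, Finset.card_erase_add_one (by simpa using hxy),
      card_neighborFinset_eq_degree]
  rw [Set.mem_Ico] at hx
  omega

theorem IsDefectiveColoring.exists_of_deleteEdges {x y : V} (hL : ∀ v, (L v).card = s)
    (hxy : G.Adj x y) (hx : G.degree x ∈ Set.Ico s (d + s)) (hy : G.degree y ∈ Set.Ico s (d + s))
    (hc : IsDefectiveColoring (G.deleteEdges {s(x, y)}) L d c) :
    ∃ c, IsDefectiveColoring G L d c := by
  obtain ⟨c, hc, hgood⟩ := hc.exists_defect_add_card_le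
  simp only [hL] at hgood
  refine ⟨c, hc.mem, fun v => ?_⟩
  obtain rfl | hvx := eq_or_ne v x
  · exact defect_le_of_forall_adj_iff (by simp [deleteEdges_adj, hxy.ne]) hxy hx (hgood v)
  obtain rfl | hvy := eq_or_ne v y
  · exact defect_le_of_forall_adj_iff (by simp [deleteEdges_adj, hxy.ne']) hxy.symm hy (hgood v)
  · refine (Finset.card_le_card fun w hw => ?_).trans (hc.defect_le v)
    simp_all [deleteEdges_adj]

/-- An assignment, by `φ`, of each vertex of `S` to one of its neighbours, for a set `S` of
independent vertices of degree `s`. A vertex in the image of `φ` has load at most `d`, and at most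
`d + s - 1` minus the number of its neighbours outside `S`, so that every vertex of `S` may take the
colour of its image without creating a defect larger than `d`. -/
structure IsAssignment (G : SimpleGraph V) (s d : ℕ) (S : Finset V) (φ : V → V) : Prop where
  isIndepSet : G.IsIndepSet S
  degree_eq : ∀ v ∈ S, G.degree v = s
  adj : ∀ v ∈ S, G.Adj v (φ v)
  load_le : ∀ v ∈ S, (S.filter fun u => φ u = φ v).card ≤ d
  load_add_card_lt : ∀ v ∈ S,
    (S.filter fun u => φ u = φ v).card + (G.neighborFinset (φ v) \ S).card < d + s

section Piecewise

variable {S : Finset V} {φ : V → V} {q : V → κ} {w : V}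

theorem defect_piecewise_le_one (hS : G.IsIndepSet S)
    (hq : ∀ v ∈ S, ∀ u, G.Adj v u → c u = q v → u = φ v) (hw : w ∈ S) :
    defect G (S.piecewise q c) w ≤ 1 := by
  refine (Finset.card_le_card (t := {φ w}) fun u hu => ?_).trans_eq (Finset.card_singleton _)
  simp only [Finset.mem_filter, mem_neighborFinset, Finset.piecewise_eq_of_mem S q c hw] at hu
  have huS : u ∉ S := fun huS => hS hw huS hu.1.ne hu.1
  rw [Finset.piecewise_eq_of_notMem S q c huS] at hu
  exact Finset.mem_singleton.2 (hq w hw u hu.1 hu.2)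

theorem defect_piecewise_le_add_load (hq : ∀ v ∈ S, ∀ u, G.Adj v u → c u = q v → u = φ v)
    (hw : w ∉ S) : defect G (S.piecewise q c) w ≤
      defect (isolate G S) c w + (S.filter fun u => φ u = w).card := by
  refine (Finset.card_le_card fun u hu => ?_).trans (Finset.card_union_le _ _)
  simp only [Finset.mem_filter, mem_neighborFinset, Finset.piecewise_eq_of_notMem S q c hw] at hu
  simp only [Finset.mem_union, Finset.mem_filter, mem_neighborFinset, isolate_adj, Finset.mem_coe]
  by_cases huS : u ∈ S
  · rw [Finset.piecewise_eq_of_mem S q c huS] at hu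
    exact .inr ⟨huS, (hq u huS w hu.1.symm hu.2.symm).symm⟩
  · rw [Finset.piecewise_eq_of_notMem S q c huS] at hu
    exact .inl ⟨⟨hu.1, hw, huS⟩, hu.2⟩

end Piecewise

theorem IsAssignment.exists_color {S : Finset V} {φ : V → V} (hφ : IsAssignment G s d S φ) {v : V}
    (hv : v ∈ S) (c : V → κ) {A : Finset κ} (hA : A.card = s) :
    ∃ q ∈ A, ∀ u, G.Adj v u → c u = q → u = φ v := by
  obtain ⟨q, hqA, hq⟩ :
      ∃ q ∈ A, ∀ u ∈ (G.neighborFinset v).erase (φ v), c u ≠ q := by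
    refine exists_mem_forall_ne (Finset.card_image_le.trans_lt ?_)
    rw [hA, ← hφ.degree_eq v hv]
    exact Finset.card_erase_lt_of_mem (by simpa using hφ.adj v hv)
  refine ⟨q, hqA, fun u hu hcu => ?_⟩
  by_contra hne
  exact hq u (by simp [hne, hu]) hcu

theorem IsDefectiveColoring.exists_of_isAssignment {S : Finset V} {φ : V → V}
    (hL : ∀ v, (L v).card = s) (hφ : IsAssignment G s d S φ)
    (hc : IsDefectiveColoring (isolate G S) L d c) : ∃ c, IsDefectiveColoring G L d c := by
  obtain ⟨c, hc, hgood⟩ := hc.exists_defect_add_card_le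
  have hcolor (v : V) : ∃ q ∈ L v, v ∈ S → ∀ u, G.Adj v u → c u = q → u = φ v := by
    by_cases hv : v ∈ S
    · obtain ⟨q, hqL, hq⟩ := hφ.exists_color hv c (hL v)
      exact ⟨q, hqL, fun _ => hq⟩
    · exact ⟨c v, hc.mem v, fun h => (hv h).elim⟩
  choose q hqL hq using hcolor
  refine ⟨S.piecewise q c, fun v => S.piecewise_cases q c (· ∈ L v) (hqL v) (hc.mem v),
    fun w => ?_⟩
  by_cases hw : w ∈ S
  · have hload : 0 < (S.filter fun u => φ u = φ w).card :=
      Finset.card_pos.2 ⟨w, by simp [hw]⟩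
    exact (defect_piecewise_le_one hφ.isIndepSet hq hw).trans (hload.trans_le (hφ.load_le w hw))
  refine (defect_piecewise_le_add_load hq hw).trans ?_
  obtain hempty | ⟨v, hv⟩ := (S.filter fun u => φ u = w).eq_empty_or_nonempty
  · rw [hempty, Finset.card_empty]
    exact hc.defect_le w
  obtain ⟨hvS, rfl⟩ := Finset.mem_filter.1 hv
  have hdegree : (isolate G S).degree (φ v) ≤ (G.neighborFinset (φ v) \ S).card := by
    refine Finset.card_le_card fun u hu => ?_
    simp_all [isolate_adj]
  have hle := hφ.load_le v hvS
  have hlt := hφ.load_add_card_lt v hvS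
  have hgood := hgood (φ v)
  rw [hL] at hgood
  omega

/-- The configurations through which a colouring of a proper subgraph extends to `G`. -/
inductive Reducible (s d : ℕ) (G : SimpleGraph V) : Prop
  | ofDegree (v : V) (hpos : 0 < G.degree v) (hlt : G.degree v < s)
  | ofLightEdge (x y : V) (hxy : G.Adj x y) (hx : G.degree x ∈ Set.Ico s (d + s))
      (hy : G.degree y ∈ Set.Ico s (d + s))
  | ofAssignment (S : Finset V) (φ : V → V) (hS : S.Nonempty) (hφ : IsAssignment G s d S φ)

theorem exists_isDefectiveColoring (hs : 0 < s) (hL : ∀ v, (L v).card = s)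
    (hred : ∀ H ≤ G, H ≠ ⊥ → Reducible s d H) : ∃ c, IsDefectiveColoring G L d c := by
  induction G using WellFoundedLT.induction with
  | _ G ih =>
  have lt_of_adj {H : SimpleGraph V} {x y : V} (hle : H ≤ G) (hG : G.Adj x y) (hH : ¬ H.Adj x y) :
      H < G := hle.lt_of_ne fun h => hH (h ▸ hG)
  have ih {H : SimpleGraph V} (hlt : H < G) := ih H hlt fun K hK => hred K (hK.trans hlt.le)
  obtain rfl | hne := eq_or_ne G ⊥
  · choose c hc using fun v => Finset.card_pos.1 (hs.trans_eq (hL v).symm)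
    exact ⟨c, hc, fun v => by simp [defect]⟩
  obtain ⟨v, hpos, hlt⟩ | ⟨x, y, hxy, hx, hy⟩ | ⟨S, φ, ⟨v, hv⟩, hφ⟩ := hred G le_rfl hne
  · obtain ⟨w, hvw⟩ := G.degree_pos_iff_exists_adj v |>.1 hpos
    obtain ⟨c, hc⟩ := ih (lt_of_adj (isolate_le (S := {v})) hvw fun h => h.2.1 rfl)
    exact hc.exists_of_degree_lt (hlt.trans_eq (hL v).symm)
  · obtain ⟨c, hc⟩ := ih (lt_of_adj (G.deleteEdges_le {s(x, y)}) hxy (by simp))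
    exact hc.exists_of_deleteEdges hL hxy hx hy
  · obtain ⟨c, hc⟩ := ih (lt_of_adj isolate_le (hφ.adj v hv) fun h => h.2.1 hv)
    exact hc.exists_of_isAssignment hL hφ

theorem choosable_of_forall_reducible (hs : 0 < s) (hred : ∀ H ≤ G, H ≠ ⊥ → Reducible s d H) :
    Choosable G s d := by
  intro L hL
  obtain ⟨c, hc⟩ := exists_isDefectiveColoring hs hL hred
  have ncard_eq_defect (v : V) : {w | G.Adj v w ∧ c w = c v}.ncard = defect G c v := by
    rw [defect, ← Set.ncard_coe_finset]
    simp
  exact ⟨c, hc.mem, fun v => by exact_mod_cast (ncard_eq_defect v).trans_le (hc.defect_le v)⟩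

end Coloring

section Hall

variable {α β : Type*} {S : Finset α} {N : α → Finset β}

theorem exists_forall_mem_of_card_le_sum_biUnion [Nonempty β] {cap : β → ℕ}
    (h : ∀ X ⊆ S, X.card ≤ ∑ w ∈ X.biUnion N, cap w) :
    ∃ φ : α → β, (∀ v ∈ S, φ v ∈ N v) ∧ ∀ w, (S.filter fun v => φ v = w).card ≤ cap w := by
  let slots (v : S) : Finset (Σ _ : β, ℕ) := (N v).sigma fun w => Finset.range (cap w)
  have hHall (X : Finset S) : X.card ≤ (X.biUnion slots).card := by
    have hX := h (X.map (Function.Embedding.subtype _)) fun v hv => by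
      obtain ⟨y, -, rfl⟩ := Finset.mem_map.1 hv
      exact y.2
    have hslots : X.biUnion slots =
        ((X.map (Function.Embedding.subtype _)).biUnion N).sigma fun w => Finset.range (cap w) := by
      ext
      simp only [Finset.mem_biUnion, slots, Finset.mem_sigma, Finset.mem_map]
      grind [Function.Embedding.subtype_apply]
    rw [Finset.card_map] at hX
    rwa [hslots, Finset.card_sigma, Finset.sum_congr rfl fun w _ => Finset.card_range (cap w)]
  obtain ⟨g, hg_inj, hg⟩ := (Finset.all_card_le_biUnion_card_iff_exists_injective slots).1 hHall
  obtain ⟨f, hf⟩ : ∃ f : α → Σ _ : β, ℕ, ∀ v : S, f v = g v :=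
    ⟨Function.extend Subtype.val g fun _ => Classical.arbitrary _,
      fun v => Subtype.val_injective.extend_apply g _ v⟩
  have hmem (v : α) (hv : v ∈ S) : (f v).1 ∈ N v ∧ (f v).2 < cap (f v).1 := by
    simpa [slots, ← hf] using hg ⟨v, hv⟩
  refine ⟨fun v => (f v).1, fun v hv => (hmem v hv).1, fun w => ?_⟩
  rw [← Finset.card_range (cap w)]
  refine Finset.card_le_card_of_injOn (fun v => (f v).2) (fun v hv => ?_) fun u hu v hv huv => ?_
  · obtain ⟨hvS, rfl⟩ := Finset.mem_filter.1 hv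
    simpa using (hmem v hvS).2
  · obtain ⟨huS, rfl⟩ := Finset.mem_filter.1 hu
    obtain ⟨hvS, hfv⟩ := Finset.mem_filter.1 hv
    have hfuv : f u = f v := Sigma.ext hfv.symm (heq_of_eq huv)
    exact congrArg Subtype.val
      (hg_inj (a₁ := ⟨u, huS⟩) (a₂ := ⟨v, hvS⟩) (by rw [← hf, ← hf, hfuv]))

theorem sum_union_biUnion (U X : Finset α) (N : α → Finset β) (cap : β → ℕ) :
    ∑ w ∈ (U ∪ X).biUnion N, cap w =
      ∑ w ∈ U.biUnion N, cap w + ∑ w ∈ X.biUnion fun v => N v \ U.biUnion N, cap w := by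
  rw [← Finset.sum_union]
  · congr 1
    ext
    simp only [Finset.mem_biUnion, Finset.mem_union, Finset.mem_sdiff]
    grind
  · simp +contextual [Finset.disjoint_left]

/-- A largest subset violating Hall's condition is left out, and the remaining elements are matched
away from its neighbourhood. -/
theorem exists_subset_forall_mem_of_card_le_sum_biUnion {cap : β → ℕ} (hne : S.Nonempty)
    (h : S.card ≤ ∑ w ∈ S.biUnion N, cap w) :
    ∃ T ⊆ S, T.Nonempty ∧ ∃ φ : α → β,
      (∀ v ∈ T, φ v ∈ N v ∧ φ v ∉ (S \ T).biUnion N) ∧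
      ∀ w, (T.filter fun v => φ v = w).card ≤ cap w := by
  obtain ⟨w, -⟩ : (S.biUnion N).Nonempty :=
    Finset.nonempty_of_sum_ne_zero (hne.card_pos.trans_le h).ne'
  have : Nonempty β := ⟨w⟩
  obtain ⟨U, hU, hmax⟩ := Finset.exists_max_image
    (S.powerset.filter fun U => U = ∅ ∨ ∑ w ∈ U.biUnion N, cap w < U.card) Finset.card
    ⟨∅, by simp⟩
  simp only [Finset.mem_filter, Finset.mem_powerset] at hU hmax
  obtain ⟨hUS, hU⟩ := hU
  have hU_le : ∑ w ∈ U.biUnion N, cap w ≤ U.card := by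
    rcases hU with rfl | hU
    · simp
    · exact hU.le
  have hHall (X : Finset α) (hX : X ⊆ S \ U) :
      X.card ≤ ∑ w ∈ X.biUnion fun v => N v \ U.biUnion N, cap w := by
    by_contra! hlt
    have hcard : (U ∪ X).card = U.card + X.card :=
      Finset.card_union_of_disjoint (Finset.disjoint_sdiff.mono_right hX)
    have hsum := sum_union_biUnion U X N cap
    have := hmax (U ∪ X) ⟨Finset.union_subset hUS (hX.trans Finset.sdiff_subset), .inr (by omega)⟩
    omega
  obtain ⟨φ, hφ, hload⟩ := exists_forall_mem_of_card_le_sum_biUnion hHall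
  refine ⟨S \ U, Finset.sdiff_subset, Finset.sdiff_nonempty.2 fun hSU => ?_, φ, fun v hv => ?_,
    hload⟩
  · obtain rfl := hUS.antisymm hSU
    rcases hU with rfl | hU
    · exact Finset.not_nonempty_empty hne
    · omega
  · rw [Finset.sdiff_sdiff_eq_self hUS]
    exact Finset.mem_sdiff.1 (hφ v hv)

end Hall

section Stars

variable {α β : Type*} {k : ℕ} {S : Finset α} {N : α → Finset β} {φ : α → β}

/-- The edges joining `x` to the other vertices of `T`. -/
noncomputable def star (x : β) (T : Finset β) : Finset (Sym2 β) :=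
  (T.erase x).image fun u => s(x, u)

theorem card_star (x : β) (T : Finset β) : (star x T).card = (T.erase x).card :=
  Finset.card_image_of_injective _ (Sym2.mkEmbedding x).injective

theorem mk_mem_star {x a b : β} {T : Finset β} (hx : x ∈ T) (h : s(a, b) ∈ star x T) :
    a ∈ T ∧ b ∈ T := by
  simp only [star, Finset.mem_image, Finset.mem_erase, Sym2.eq_iff] at h
  grind

/-- In adding the stars one at a time, each star with a new centre has `k` new edges and at most
`k + 1` new vertices, while a star with an old centre has at least as many new edges as new
vertices. -/
theorem mul_card_biUnion_le_mul_card_biUnion_star (hφ : ∀ v ∈ S, φ v ∈ N v)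
    (hN : ∀ v ∈ S, (N v).card = k + 1) :
    k * (S.biUnion N).card ≤ (k + 1) * (S.biUnion fun v => star (φ v) (N v)).card := by
  induction S using Finset.induction_on with
  | empty => simp
  | insert v S _ ih =>
    rw [Finset.forall_mem_insert] at hφ hN
    have ih := ih hφ.2 hN.2
    rw [Finset.biUnion_insert, Finset.biUnion_insert, ← Finset.card_sdiff_add_card,
      ← Finset.card_sdiff_add_card]
    set B := S.biUnion N
    set F := S.biUnion fun v => star (φ v) (N v)
    have hFB {a b : β} (hab : s(a, b) ∈ F) : a ∈ B ∧ b ∈ B := by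
      obtain ⟨w, hw, hab⟩ := Finset.mem_biUnion.1 hab
      have hmem := mk_mem_star (hφ.2 w hw) hab
      exact ⟨Finset.mem_biUnion.2 ⟨w, hw, hmem.1⟩, Finset.mem_biUnion.2 ⟨w, hw, hmem.2⟩⟩
    by_cases hc : φ v ∈ B
    · have hsubset : star (φ v) (N v \ B) ⊆ star (φ v) (N v) \ F := by
        simp only [star, Finset.subset_iff, Finset.mem_image, Finset.mem_sdiff]
        grind
      have := Finset.card_le_card hsubset
      rw [card_star, Finset.erase_eq_of_notMem fun h => (Finset.mem_sdiff.1 h).2 hc] at this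
      nlinarith
    · have hdisj : star (φ v) (N v) \ F = star (φ v) (N v) := by
        refine Finset.sdiff_eq_self_of_disjoint (Finset.disjoint_left.2 fun e he heF => ?_)
        obtain ⟨u, -, rfl⟩ := Finset.mem_image.1 he
        exact hc (hFB heF).1
      rw [hdisj, card_star, Finset.card_erase_of_mem hφ.1, hN.1, Nat.add_sub_cancel]
      have : (N v \ B).card ≤ k + 1 := hN.1 ▸ Finset.card_le_card Finset.sdiff_subset
      nlinarith

end Stars

section LightHeavy

variable {V : Type*} [Fintype V] {m n s d : ℕ} {G : SimpleGraph V} {v w : V}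

/-- The non-isolated vertices of degree less than `m`. -/
noncomputable def light (m : ℕ) (G : SimpleGraph V) : Finset V :=
  Finset.univ.filter fun v => 0 < G.degree v ∧ G.degree v < m

/-- The vertices of degree at least `m`. -/
noncomputable def heavy (m : ℕ) (G : SimpleGraph V) : Finset V :=
  Finset.univ.filter fun v => m ≤ G.degree v

theorem mem_light : v ∈ light m G ↔ 0 < G.degree v ∧ G.degree v < m := by
  simp [light]

theorem mem_heavy : v ∈ heavy m G ↔ m ≤ G.degree v := by
  simp [heavy]

theorem light_subset_light (h : m ≤ n) : light m G ⊆ light n G := fun v hv => by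
  rw [mem_light] at hv ⊢
  omega

theorem disjoint_light_heavy (m : ℕ) (G : SimpleGraph V) : Disjoint (light m G) (heavy m G) :=
  Finset.disjoint_left.2 fun v hv => by
    rw [mem_light] at hv
    rw [mem_heavy]
    omega

theorem mem_light_or_mem_heavy (m : ℕ) (h : G.Adj v w) : v ∈ light m G ∨ v ∈ heavy m G := by
  have := G.degree_pos_iff_exists_adj v |>.2 ⟨w, h⟩
  rw [mem_light, mem_heavy]
  omega

theorem support_subset_light_union_heavy (m : ℕ) (G : SimpleGraph V) :
    G.support ⊆ (light m G ∪ heavy m G : Finset V) := by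
  rintro v ⟨w, h⟩
  simpa using mem_light_or_mem_heavy m h

theorem sum_degree_light_add_sum_degree_heavy (m : ℕ) (G : SimpleGraph V) :
    ∑ v ∈ light m G, G.degree v + ∑ v ∈ heavy m G, G.degree v = 2 * G.edgeFinset.card := by
  rw [← Finset.sum_union (disjoint_light_heavy _ _), ← G.sum_degrees_eq_twice_card_edges]
  refine Finset.sum_subset (Finset.subset_univ _) fun v _ hv => ?_
  rw [Finset.mem_union, mem_light, mem_heavy] at hv
  omega

theorem card_heavy_mul_le_sum_degree (m : ℕ) (G : SimpleGraph V) :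
    (heavy m G).card * m ≤ ∑ v ∈ heavy m G, G.degree v :=
  Finset.card_nsmul_le_sum _ _ _ fun _ hv => mem_heavy.1 hv

theorem le_degree_of_not_reducible (hred : ¬ Reducible s d G) (h : 0 < G.degree v) :
    s ≤ G.degree v := by
  by_contra! hlt
  exact hred (.ofDegree v h hlt)

theorem mem_heavy_of_not_reducible (hred : ¬ Reducible s d G) (hv : v ∈ light (d + s) G)
    (h : G.Adj v w) : w ∈ heavy (d + s) G := by
  refine (mem_light_or_mem_heavy (d + s) h.symm).resolve_left fun hw => ?_
  rw [mem_light] at hv hw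
  exact hred (.ofLightEdge v w h ⟨le_degree_of_not_reducible hred hv.1, hv.2⟩
    ⟨le_degree_of_not_reducible hred hw.1, hw.2⟩)

theorem isIndepSet_light_of_not_reducible (hred : ¬ Reducible s d G) :
    G.IsIndepSet (light (d + s) G) := fun _ hv _ hw _ h =>
  Finset.disjoint_left.1 (disjoint_light_heavy _ _) hw (mem_heavy_of_not_reducible hred hv h)

theorem heavy_nonempty_of_not_reducible (hred : ¬ Reducible s d G) (hne : G ≠ ⊥) :
    (heavy (d + s) G).Nonempty := by
  obtain ⟨v, w, h⟩ := ne_bot_iff_exists_adj.1 hne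
  obtain hv | hv := mem_light_or_mem_heavy (d + s) h
  · exact ⟨w, mem_heavy_of_not_reducible hred hv h⟩
  · exact ⟨v, hv⟩

theorem support_contract_subset_of_subset_light {S : Finset V} {φ : V → V}
    (hφ : ∀ v ∈ S, G.Adj v (φ v)) (m : ℕ) :
    (contract G S φ).support ⊆ (heavy m G ∪ light m G \ S : Finset V) := by
  refine (support_contract_subset hφ).trans fun v hv => ?_
  have := support_subset_light_union_heavy m G hv.1
  simp only [Finset.coe_union, Set.mem_union, Finset.mem_coe, Finset.mem_sdiff] at this ⊢
  exact this.symm.imp_right fun h => ⟨h, hv.2⟩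

end LightHeavy

section LargeDensity

theorem reducible_of_mul_add_one_lt {V : Type} [Fintype V] {s d : ℕ} {δ : ℝ} {G : SimpleGraph V}
    (hs : 1 ≤ s) (hδ : 1 ≤ δ) (hd : δ * (δ + 1) < d + s) (hdens : DensityBound s δ)
    (hG : CliqueMinorFree s G) (hne : G ≠ ⊥) : Reducible s d G := by
  by_contra hred
  set A := light (d + s) G with hA
  set B := heavy (d + s) G
  have hindep : G.IsIndepSet A := isIndepSet_light_of_not_reducible hred
  obtain ⟨φ, hφ, hcontract⟩ := exists_contract hs hG hindep
    fun v hv => le_degree_of_not_reducible hred (mem_light.1 hv).1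
  have hcontract_le : ((contract G A φ).edgeFinset.card : ℝ) ≤ δ * B.card :=
    hdens.card_edgeFinset_le (hG.contract hs hφ) (by
      simpa [← hA] using support_contract_subset_of_subset_light hφ (d + s))
  have hG_le : (G.edgeFinset.card : ℝ) ≤ δ * (A.card + B.card) := by
    rw [← Nat.cast_add, ← Finset.card_union_of_disjoint (disjoint_light_heavy _ _)]
    exact hdens.card_edgeFinset_le hG (support_subset_light_union_heavy _ _)
  have hisolate := card_edgeFinset_isolate hindep
  have hsum : ∑ v ∈ A, G.degree v + ∑ v ∈ B, G.degree v = 2 * G.edgeFinset.card :=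
    sum_degree_light_add_sum_degree_heavy (d + s) G
  have hheavy : (B.card : ℝ) * (d + s) ≤ ∑ v ∈ B, G.degree v := by
    exact_mod_cast card_heavy_mul_le_sum_degree (d + s) G
  set X := (isolate G A).edgeFinset.card
  have hX : (X : ℝ) + A.card ≤ δ * B.card := by
    refine le_trans ?_ hcontract_le
    exact_mod_cast (by omega : X + A.card ≤ (contract G A φ).edgeFinset.card)
  have hB : ((∑ v ∈ B, G.degree v : ℕ) : ℝ) = G.edgeFinset.card + X := by
    exact_mod_cast (by omega : ∑ v ∈ B, G.degree v = G.edgeFinset.card + X)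
  have hcard_pos : (0 : ℝ) < B.card :=
    Nat.cast_pos.2 (heavy_nonempty_of_not_reducible hred hne).card_pos
  have hlt := mul_lt_mul_of_pos_left hd hcard_pos
  have hA_le := mul_le_mul_of_nonneg_left (le_sub_iff_add_le'.2 hX) (zero_le_one.trans hδ)
  have hX_le := le_mul_of_one_le_left (Nat.cast_nonneg (α := ℝ) X) hδ
  linarith

end LargeDensity

section Estimates

variable {s d : ℕ} {δ : ℝ}

theorem neg_half_le_floor_sub_add (hs : 4 ≤ s) (hδ : (s : ℝ) - 1 ≤ δ) :
    -(1 / 2) ≤ s * (⌊δ * (2 * δ - s + 1)⌋ - δ * (2 * δ - s + 1)) + (s - 1) * (2 * δ - s - 1) := by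
  have hlt := Int.lt_floor_add_one (δ * (2 * δ - s + 1))
  obtain rfl | hs := hs.eq_or_lt
  · push_cast at hδ hlt ⊢
    have hfloor : (9 : ℝ) ≤ ⌊δ * (2 * δ - 4 + 1)⌋ := by
      exact_mod_cast Int.le_floor.2 (by push_cast; nlinarith : ((9 : ℤ) : ℝ) ≤ _)
    obtain h | h := le_or_gt (31 / 10) δ <;> nlinarith
  · have hs : (5 : ℝ) ≤ s := by exact_mod_cast hs
    nlinarith

theorem exists_floor_sub_add_one_eq (hs : 2 ≤ s) (hδ : (s : ℝ) - 1 ≤ δ) :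
    ∃ d : ℕ, ⌊δ * (2 * δ - s + 1)⌋ - (s : ℤ) + 1 = d := by
  have hs : (2 : ℝ) ≤ s := by exact_mod_cast hs
  have hfloor : (s : ℤ) - 1 ≤ ⌊δ * (2 * δ - s + 1)⌋ := by
    rw [Int.le_floor]
    push_cast
    nlinarith
  exact Int.eq_ofNat_of_zero_le (by omega)

theorem lt_add_of_floor_eq (hd : ⌊δ * (2 * δ - s + 1)⌋ - (s : ℤ) + 1 = d) :
    δ * (2 * δ - s + 1) < d + s := by
  rw [← Int.cast_natCast d, ← hd]
  push_cast
  linarith [Int.lt_floor_add_one (δ * (2 * δ - s + 1))]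

theorem two_mul_le_of_floor_eq (hs : 4 ≤ s) (hδ : (s : ℝ) - 1 ≤ δ)
    (hd : ⌊δ * (2 * δ - s + 1)⌋ - (s : ℤ) + 1 = d) : 2 * (s - 1) ≤ d := by
  have hs' : (4 : ℝ) ≤ s := by exact_mod_cast hs
  have hfloor : ((s : ℤ) - 1) ^ 2 ≤ ⌊δ * (2 * δ - s + 1)⌋ := by
    rw [Int.le_floor]
    push_cast
    nlinarith
  zify [show 1 ≤ s by omega]
  nlinarith

theorem neg_half_mul_le {a b Q : ℝ} (hs : 4 ≤ s) (hδ : (s : ℝ) - 1 ≤ δ) (hb : 0 ≤ b)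
    (hba : b ≤ s * a) (hbQ : (s - 1) * b ≤ s * Q) :
    -(1 / 2) * a ≤ (⌊δ * (2 * δ - s + 1)⌋ - δ * (2 * δ - s + 1)) * b + (2 * δ - s - 1) * Q := by
  have hs' : (4 : ℝ) ≤ s := by exact_mod_cast hs
  refine le_of_mul_le_mul_left ?_ (by linarith : (0 : ℝ) < s)
  have hb' := mul_le_mul_of_nonneg_right (neg_half_le_floor_sub_add hs hδ) hb
  have hQ := mul_le_mul_of_nonneg_left hbQ (by linarith : 0 ≤ 2 * δ - s - 1)
  linarith

/-- Each of the `a` middle vertices has degree at least `s + 1`, so that their total degree `D` is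
at most `2δ - s + 1` times its excess over `δ a`, and the density bound on the contracted graph,
which has `D + Q` edges and `b + a` vertices, controls this excess. -/
theorem le_sub_of_density {n E σ D Q a b : ℝ} (hs : 3 ≤ s) (hδ₁ : (s : ℝ) - 1 ≤ δ) (hδ₂ : δ ≤ s)
    (ha : 0 ≤ a) (hD : a * (s + 1) ≤ D) (hdens : Q + D ≤ δ * (b + a)) (hE : E + n ≤ Q + D + n * s)
    (hσ : σ + 2 * (n * s) + D = 2 * E) :
    σ ≤ δ * (2 * δ - s + 1) * b - (2 * δ - s - 1) * Q - 2 * n := by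
  have hs : (3 : ℝ) ≤ s := by exact_mod_cast hs
  have hD_le : D ≤ (2 * δ - s + 1) * (D - δ * a) := by
    have hδs : (2 * δ - s + 1) * δ ≤ (2 * δ - s) * (s + 1) := by
      nlinarith [mul_nonneg (sub_nonneg.2 hδ₂) (by linarith : 0 ≤ 2 * δ - s - 1)]
    have := mul_le_mul_of_nonneg_right hδs ha
    have := mul_le_mul_of_nonneg_left hD (by linarith : 0 ≤ 2 * δ - s)
    linarith
  have := mul_le_mul_of_nonneg_left (by linarith : D - δ * a ≤ δ * b - Q)
    (by linarith : 0 ≤ 2 * δ - s + 1)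
  linarith

theorem two_mul_card_mul_le_sum_min {α : Type*} {T : Finset α} {t : α → ℕ} (hd : 2 * (s - 1) ≤ d) :
    2 * (T.card * (d + s - 1)) ≤ 3 * ∑ w ∈ T, min d (d + s - 1 - t w) + 2 * ∑ w ∈ T, t w := by
  rw [← smul_eq_mul T.card, ← Finset.sum_const]
  simp only [Finset.mul_sum, ← Finset.sum_add_distrib]
  exact Finset.sum_le_sum fun w _ => by omega

end Estimates

section Neighborhoods

variable {V : Type*} [Fintype V] {k m s d : ℕ} {G : SimpleGraph V} {S A B : Finset V} {φ : V → V}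

/-- The neighbours of the vertices in `S`. -/
noncomputable abbrev neighbors (G : SimpleGraph V) (S : Finset V) : Finset V :=
  S.biUnion fun v => G.neighborFinset v

theorem sum_card_sdiff_add_sum_degree (hSB : ∀ v ∈ S, G.neighborFinset v ⊆ B) :
    ∑ w ∈ B, (G.neighborFinset w \ S).card + ∑ v ∈ S, G.degree v = ∑ w ∈ B, G.degree w := by
  have hcount : ∑ w ∈ B, (G.neighborFinset w ∩ S).card = ∑ v ∈ S, G.degree v := by
    have := Finset.sum_card_bipartiteAbove_eq_sum_card_bipartiteBelow (s := B) (t := S) G.Adj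
    convert this using 3 with w _ v hv
    · ext v
      simp [Finset.mem_bipartiteAbove, and_comm]
    · rw [← card_neighborFinset_eq_degree]
      congr 1
      ext w
      simp only [mem_neighborFinset, Finset.mem_bipartiteBelow, G.adj_comm w v]
      exact ⟨fun h => ⟨hSB v hv (by simpa using h), h⟩, fun h => h.2⟩
  rw [← hcount, ← Finset.sum_add_distrib]
  exact Finset.sum_congr rfl fun w _ => by
    rw [Finset.card_sdiff_add_card_inter, card_neighborFinset_eq_degree]

theorem sum_neighbors_card_sdiff_add_mul_le (hSB : ∀ v ∈ S, G.neighborFinset v ⊆ B)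
    (hB : ∀ w ∈ B, m ≤ G.degree w) :
    ∑ w ∈ neighbors G S, (G.neighborFinset w \ S).card + B.card * m ≤
      ∑ w ∈ B, (G.neighborFinset w \ S).card + (neighbors G S).card * m := by
  set B' := neighbors G S
  have hsubset : B' ⊆ B := Finset.biUnion_subset.2 hSB
  have hsdiff : (B \ B').card * m ≤ ∑ w ∈ B \ B', (G.neighborFinset w \ S).card := by
    refine Finset.card_nsmul_le_sum _ _ _ fun w hw => ?_
    rw [Finset.mem_sdiff] at hw
    have hdisj : Disjoint (G.neighborFinset w) S := Finset.disjoint_left.2 fun v hv hvS =>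
      hw.2 (Finset.mem_biUnion.2 ⟨v, hvS, by simpa [G.adj_comm] using hv⟩)
    rw [Finset.sdiff_eq_self_of_disjoint hdisj, card_neighborFinset_eq_degree]
    exact hB w hw.1
  have hcard := Finset.card_sdiff_add_card_eq_card hsubset
  have hsum := Finset.sum_sdiff hsubset (f := fun w => (G.neighborFinset w \ S).card)
  rw [← hcard, add_mul]
  omega

theorem mul_card_neighbors_le_mul_card_edgeFinset_isolate_contract (hφ : ∀ v ∈ S, G.Adj v (φ v))
    (hdeg : ∀ v ∈ S, G.degree v = k + 1) (hdisj : ∀ v ∈ S, Disjoint (G.neighborFinset v) (S ∪ A)) :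
    k * (neighbors G S).card ≤ (k + 1) * (isolate (contract G S φ) A).edgeFinset.card := by
  refine (mul_card_biUnion_le_mul_card_biUnion_star (φ := φ) (fun v hv => ?_) hdeg).trans
    (Nat.mul_le_mul_left _ (Finset.card_le_card (Finset.biUnion_subset.2 fun v hv e he => ?_)))
  · simpa using hφ v hv
  · obtain ⟨u, hu, rfl⟩ := Finset.mem_image.1 he
    rw [Finset.mem_erase, mem_neighborFinset] at hu
    have notMem {w : V} (hw : G.Adj v w) : w ∉ S ∧ w ∉ A := by
      simpa using Finset.disjoint_left.1 (hdisj v hv) (by simpa using hw)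
    rw [mem_edgeFinset, mem_edgeSet, isolate_adj, contract_adj]
    exact ⟨⟨hu.1.symm, (notMem (hφ v hv)).1, (notMem hu.2).1, .inr (.inl ⟨v, hv, rfl, hu.2⟩)⟩,
      (notMem (hφ v hv)).2, (notMem hu.2).2⟩

theorem card_edgeFinset_isolate_contract (hφ : ∀ v ∈ S, G.Adj v (φ v)) (hSA : Disjoint S A)
    (hindep : G.IsIndepSet (S ∪ A : Finset V)) :
    (isolate (contract G S φ) A).edgeFinset.card + ∑ v ∈ A, G.degree v =
      (contract G S φ).edgeFinset.card := by
  have hadj {v : V} (hv : v ∈ A) (w : V) : (contract G S φ).Adj v w ↔ G.Adj v w := by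
    refine contract_adj_of_forall_not_adj hφ (Finset.disjoint_right.1 hSA hv) fun u hu h => ?_
    exact hindep (by simp [hv]) (by simp [Finset.mem_coe.1 hu]) h.ne h
  have hindepA : (contract G S φ).IsIndepSet A := fun v hv w hw hvw h =>
    hindep (by simp [Finset.mem_coe.1 hv]) (by simp [Finset.mem_coe.1 hw]) hvw ((hadj hv w).1 h)
  rw [← card_edgeFinset_isolate hindepA]
  congr 1
  refine Finset.sum_congr rfl fun v hv => ?_
  simp only [← card_neighborFinset_eq_degree, neighborFinset_eq_filter, hadj hv]

theorem reducible_of_card_le_sum_neighbors (hne : S.Nonempty) (hS : G.IsIndepSet S)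
    (hdeg : ∀ v ∈ S, G.degree v = s)
    (hcard : S.card ≤ ∑ w ∈ neighbors G S,
      min d (d + s - 1 - (G.neighborFinset w \ S).card)) : Reducible s d G := by
  obtain ⟨T, hTS, hTne, φ, hφ, hload⟩ := exists_subset_forall_mem_of_card_le_sum_biUnion hne hcard
  have hadj (v : V) (hv : v ∈ T) : G.Adj v (φ v) := by simpa using (hφ v hv).1
  have hsdiff (v : V) (hv : v ∈ T) :
      G.neighborFinset (φ v) \ T = G.neighborFinset (φ v) \ S := by
    have hnadj : ∀ u ∈ S, u ∉ T → ¬ G.Adj u (φ v) := by simpa using (hφ v hv).2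
    ext u
    simp only [Finset.mem_sdiff, mem_neighborFinset]
    refine and_congr_right fun h => not_congr ⟨fun huT => hTS huT, fun huS => ?_⟩
    by_contra huT
    exact hnadj u huS huT h.symm
  refine .ofAssignment T φ hTne
    ⟨hS.mono (Finset.coe_subset.2 hTS), fun v hv => hdeg v (hTS hv), hadj,
      fun v _ => (hload _).trans (min_le_left _ _), fun v hv => ?_⟩
  have hpos : 0 < (T.filter fun u => φ u = φ v).card := Finset.card_pos.2 ⟨v, by simp [hv]⟩
  have := (hload (φ v)).trans (min_le_right _ _)
  rw [hsdiff v hv]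
  omega

end Neighborhoods

section ModerateDensity

variable {V : Type} [Fintype V] {s d : ℕ} {δ : ℝ} {G : SimpleGraph V} {v : V}

theorem degree_eq_of_mem_light_succ (hred : ¬ Reducible s d G) (hv : v ∈ light (s + 1) G) :
    G.degree v = s := by
  rw [mem_light] at hv
  have := le_degree_of_not_reducible hred hv.1
  omega

theorem neighborFinset_subset_heavy (hred : ¬ Reducible s d G) (hv : v ∈ light (d + s) G) :
    G.neighborFinset v ⊆ heavy (d + s) G := fun _ hw =>
  mem_heavy_of_not_reducible hred hv ((G.mem_neighborFinset v _).1 hw)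

theorem exists_contract_light_succ (hs : 1 ≤ s) (hd : 1 ≤ d) (hdens : DensityBound s δ)
    (hG : CliqueMinorFree s G) (hred : ¬ Reducible s d G) {S A B : Finset V}
    (hS : S = light (s + 1) G) (hA : A = light (d + s) G \ S) (hB : B = heavy (d + s) G) :
    ∃ Q : ℕ, (s - 1) * (neighbors G S).card ≤ s * Q ∧
      (Q : ℝ) + (∑ v ∈ A, G.degree v : ℕ) ≤ δ * (B.card + A.card) ∧
      G.edgeFinset.card + S.card ≤ Q + ∑ v ∈ A, G.degree v + S.card * s := by
  have hSA : S ∪ A = light (d + s) G :=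
    hA ▸ Finset.union_sdiff_of_subset (hS ▸ light_subset_light (by omega))
  have hlight : G.IsIndepSet (S ∪ A : Finset V) := hSA ▸ isIndepSet_light_of_not_reducible hred
  have hdeg (v : V) (hv : v ∈ S) : G.degree v = s := degree_eq_of_mem_light_succ hred (hS ▸ hv)
  have hBSA : Disjoint B (S ∪ A) := hSA ▸ hB ▸ (disjoint_light_heavy _ _).symm
  obtain ⟨φ, hφ, hcontract⟩ := exists_contract hs hG
    (hlight.mono (Finset.coe_subset.2 Finset.subset_union_left)) fun v hv => (hdeg v hv).ge
  rw [Finset.sum_congr rfl hdeg, Finset.sum_const, smul_eq_mul] at hcontract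
  have hdensity : ((contract G S φ).edgeFinset.card : ℝ) ≤ δ * (B.card + A.card) := by
    rw [← Nat.cast_add, ← Finset.card_union_of_disjoint (hBSA.mono_right Finset.subset_union_right)]
    exact hdens.card_edgeFinset_le (hG.contract hs hφ)
      (hB ▸ hA ▸ support_contract_subset_of_subset_light hφ (d + s))
  have hisolate := card_edgeFinset_isolate_contract hφ (hA ▸ Finset.disjoint_sdiff) hlight
  refine ⟨(isolate (contract G S φ) A).edgeFinset.card, ?_, ?_, by omega⟩
  · obtain ⟨k, rfl⟩ : ∃ k, s = k + 1 := ⟨s - 1, by omega⟩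
    refine mul_card_neighbors_le_mul_card_edgeFinset_isolate_contract hφ hdeg fun v hv => ?_
    exact hBSA.mono_left (hB ▸ neighborFinset_subset_heavy hred (hSA ▸ Finset.mem_union_left A hv))
  · refine le_trans ?_ hdensity
    exact_mod_cast hisolate.le

theorem exists_sum_card_sdiff_heavy_le (hs : 3 ≤ s) (hd : 1 ≤ d) (hδ₁ : (s : ℝ) - 1 ≤ δ)
    (hδ₂ : δ ≤ s) (hdens : DensityBound s δ) (hG : CliqueMinorFree s G)
    (hred : ¬ Reducible s d G) {S B : Finset V} (hS : S = light (s + 1) G)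
    (hB : B = heavy (d + s) G) :
    ∃ Q : ℕ, (s - 1) * (neighbors G S).card ≤ s * Q ∧
      ((∑ w ∈ B, (G.neighborFinset w \ S).card : ℕ) : ℝ) ≤
        δ * (2 * δ - s + 1) * B.card - (2 * δ - s - 1) * Q - 2 * S.card := by
  obtain ⟨A, hA⟩ : ∃ A, A = light (d + s) G \ S := ⟨_, rfl⟩
  obtain ⟨Q, hstars, hdensity, hcontract⟩ :=
    exists_contract_light_succ (by omega) hd hdens hG hred hS hA hB
  have hsubset : S ⊆ light (d + s) G := hS ▸ light_subset_light (by omega)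
  have hdeg (v : V) (hv : v ∈ S) : G.degree v = s := degree_eq_of_mem_light_succ hred (hS ▸ hv)
  have hsum : ∑ v ∈ A, G.degree v + ∑ v ∈ S, G.degree v + ∑ v ∈ B, G.degree v =
      2 * G.edgeFinset.card := by
    rw [hA, hB, Finset.sum_sdiff hsubset]
    exact sum_degree_light_add_sum_degree_heavy (d + s) G
  have hcount := sum_card_sdiff_add_sum_degree fun v hv =>
    hB ▸ neighborFinset_subset_heavy hred (hsubset hv)
  rw [Finset.sum_congr rfl hdeg, Finset.sum_const, smul_eq_mul] at hsum hcount
  have hA_sum : A.card * (s + 1) ≤ ∑ v ∈ A, G.degree v := by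
    refine Finset.card_nsmul_le_sum A (fun v => G.degree v) (s + 1) fun v hv => ?_
    simp only [hA, hS, Finset.mem_sdiff, mem_light] at hv
    omega
  refine ⟨Q, hstars, le_sub_of_density (E := G.edgeFinset.card) hs hδ₁ hδ₂ (Nat.cast_nonneg _)
    (by exact_mod_cast hA_sum) hdensity (by exact_mod_cast hcontract) ?_⟩
  exact_mod_cast (by omega : ∑ w ∈ B, (G.neighborFinset w \ S).card + 2 * (S.card * s) +
    ∑ v ∈ A, G.degree v = 2 * G.edgeFinset.card)

theorem exists_sum_card_sdiff_neighbors_le (hs : 3 ≤ s) (hd : 1 ≤ d) (hδ₁ : (s : ℝ) - 1 ≤ δ)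
    (hδ₂ : δ ≤ s) (hμ : δ * (2 * δ - s + 1) < d + s) (hdens : DensityBound s δ)
    (hG : CliqueMinorFree s G) (hne : G ≠ ⊥) (hred : ¬ Reducible s d G) {S : Finset V}
    (hS : S = light (s + 1) G) :
    S.Nonempty ∧ ∃ Q : ℕ, (s - 1) * (neighbors G S).card ≤ s * Q ∧
      ((∑ w ∈ neighbors G S, (G.neighborFinset w \ S).card : ℕ) : ℝ) ≤
        δ * (2 * δ - s + 1) * (neighbors G S).card - (2 * δ - s - 1) * Q - 2 * S.card := by
  obtain ⟨Q, hQ, hle⟩ := exists_sum_card_sdiff_heavy_le hs hd hδ₁ hδ₂ hdens hG hred hS rfl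
  set B := heavy (d + s) G
  have hSB (v : V) (hv : v ∈ S) : G.neighborFinset v ⊆ B :=
    neighborFinset_subset_heavy hred (light_subset_light (by omega) (hS ▸ hv))
  have hB : (0 : ℝ) < B.card := Nat.cast_pos.2 (heavy_nonempty_of_not_reducible hred hne).card_pos
  have hsum := sum_neighbors_card_sdiff_add_mul_le hSB fun w hw => mem_heavy.1 hw
  have hcard := Nat.cast_le (α := ℝ).2 (Finset.card_le_card (Finset.biUnion_subset.2 hSB))
  rw [← Nat.cast_le (α := ℝ)] at hsum
  push_cast at hsum hle ⊢
  refine ⟨?_, Q, hQ, by nlinarith⟩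
  by_contra hempty
  rw [Finset.not_nonempty_iff_eq_empty] at hempty
  simp only [hempty, Finset.biUnion_empty, Finset.sum_empty, Finset.card_empty, Nat.cast_zero]
    at hsum hle
  have hs : (3 : ℝ) ≤ s := by exact_mod_cast hs
  have hQ_nonneg := mul_nonneg (by linarith : 0 ≤ 2 * δ - s - 1) (Nat.cast_nonneg (α := ℝ) Q)
  have hμ := mul_lt_mul_of_pos_right hμ hB
  linarith

theorem reducible_of_le (hs : 4 ≤ s) (hδ₁ : (s : ℝ) - 1 ≤ δ) (hδ₂ : δ ≤ s)
    (hd : ⌊δ * (2 * δ - s + 1)⌋ - (s : ℤ) + 1 = d) (hdens : DensityBound s δ)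
    (hG : CliqueMinorFree s G) (hne : G ≠ ⊥) : Reducible s d G := by
  by_contra hred
  have hd_ge := two_mul_le_of_floor_eq hs hδ₁ hd
  have hfloor : ((⌊δ * (2 * δ - s + 1)⌋ : ℤ) : ℝ) = d + s - 1 := by
    rw [show ⌊δ * (2 * δ - s + 1)⌋ = (d : ℤ) + s - 1 by omega]
    push_cast
    ring
  obtain ⟨hSne, Q, hQ, hle⟩ := exists_sum_card_sdiff_neighbors_le (by omega)
    (by omega : 1 ≤ d) hδ₁ hδ₂ (lt_add_of_floor_eq hd) hdens hG hne hred rfl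
  set S := light (s + 1) G
  set B := neighbors G S
  have hdeg (v : V) (hv : v ∈ S) : G.degree v = s := degree_eq_of_mem_light_succ hred hv
  have hindep : G.IsIndepSet S := (isIndepSet_light_of_not_reducible hred).mono
    (Finset.coe_subset.2 (light_subset_light (by omega)))
  have hB_le : B.card ≤ s * S.card := by
    rw [mul_comm]
    exact Finset.card_biUnion_le_card_mul _ _ _ fun v hv => (hdeg v hv).le
  have hcapacity := two_mul_card_mul_le_sum_min (T := B)
    (t := fun w => (G.neighborFinset w \ S).card) hd_ge
  refine hred (reducible_of_card_le_sum_neighbors hSne hindep hdeg ?_)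
  have hQ : ((s : ℝ) - 1) * B.card ≤ s * Q := by
    rw [← Nat.cast_one, ← Nat.cast_sub (by omega)]
    exact_mod_cast hQ
  have hneg := neg_half_mul_le (a := S.card) hs hδ₁ (Nat.cast_nonneg B.card)
    (by exact_mod_cast hB_le) hQ
  rw [← Nat.cast_le (α := ℝ)] at hcapacity ⊢
  push_cast [show 1 ≤ d + s by omega] at hcapacity hle ⊢
  rw [hfloor] at hneg
  linarith

end ModerateDensity

theorem reducible_of_densityBound {V : Type} [Fintype V] {s d : ℕ} {δ : ℝ} {G : SimpleGraph V}
    (hs : 2 ≤ s) (hd : ⌊δ * (2 * δ - s + 1)⌋ - (s : ℤ) + 1 = d) (hdens : DensityBound s δ)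
    (hG : CliqueMinorFree s G) (hne : G ≠ ⊥) : Reducible s d G := by
  have hδ := hdens.sub_one_le (by omega)
  obtain hs' | hs' := le_or_gt s 3
  · obtain ⟨v, hpos, hlt⟩ := exists_degree_pos_lt hs hs' hG hne
    exact .ofDegree v hpos hlt
  obtain hδs | hδs := le_or_gt δ s
  · exact reducible_of_le hs' hδ hδs hd hdens hG hne
  · have hs : (2 : ℝ) ≤ s := by exact_mod_cast hs
    refine reducible_of_mul_add_one_lt (by omega) (by linarith) ?_ hdens hG hne
    exact (mul_le_mul_of_nonneg_left (by linarith) (by linarith)).trans_lt (lt_add_of_floor_eq hd)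

end DefectiveChoosability

/-- If every `K_{s+1}`-minor-free finite simple graph `H` satisfies `|E(H)| ≤ δ|V(H)|`, then
every `K_{s+1}`-minor-free finite simple graph is `(s, ⌊δ(2δ - s + 1)⌋ - s + 1)`-choosable. -/
theorem stmt10 (s : ℕ) (hs : 2 ≤ s) (δ : ℝ) (hδ : 0 < δ)
    (hdens : ∀ (W : Type) [Fintype W] (H : SimpleGraph W),
      ¬ IsMinor (⊤ : SimpleGraph (Fin (s + 1))) H →
        (H.edgeSet.ncard : ℝ) ≤ δ * (Fintype.card W : ℝ))
    {V : Type} [Fintype V] (G : SimpleGraph V)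
    (hG : ¬ IsMinor (⊤ : SimpleGraph (Fin (s + 1))) G) :
    Choosable G s (⌊δ * (2 * δ - (s : ℝ) + 1)⌋ - (s : ℤ) + 1) := by
  have hδs : (s : ℝ) - 1 ≤ δ := DefectiveChoosability.DensityBound.sub_one_le (by omega) hdens
  obtain ⟨d, hd⟩ := DefectiveChoosability.exists_floor_sub_add_one_eq hs hδs
  rw [hd]
  refine DefectiveChoosability.choosable_of_forall_reducible (by omega) fun H hHG hne => ?_
  have hH : DefectiveChoosability.CliqueMinorFree s H :=
    DefectiveChoosability.CliqueMinorFree.mono hG hHG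
  exact DefectiveChoosability.reducible_of_densityBound hs hd hdens hH hne
end

section
/- For an integer s ≥ 2, let δ be a positive real such that every finite simple graph H with no K_{s+1} topological minor satisfies |E(H)| ≤ δ|V(H)|. Then every finite simple graph with no K_{s+1} topological minor is (s, ⌊δ(2δ − s + 1)⌋ − s + 1)-choosable. -/
open SimpleGraph

universe u v

/-!
Write `s = t + 1`, fix the defect `d` and call a vertex *light* if its degree is less than `d + s`,
and *heavy* otherwise.

*Colouring.* A light vertex with more than `d` neighbours of its own colour has fewer than `s - 1`
other neighbours, so its list contains a colour unused around it; hence only the defect at heavy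
vertices matters. Consequently an edge between two light vertices may be deleted, and a vertex with
`p` light and `q` heavy neighbours may be coloured last as soon as `p + (d + 1) q < (d + 1) s`. So
it suffices that every graph with an edge and without a `K_{s+1}` topological minor admits one of
these two reductions; a graph is *irreducible* if it admits neither.

*Counting.* In an irreducible graph the set `A` of non-isolated light vertices is independent and
each of its vertices has at least `s` neighbours, all in the set `B` of heavy vertices. These
neighbours cannot form a clique, so the vertices of `A` can be suppressed one at a time, each
producing a new edge on `B`. Hence `|A| + e(B) ≤ δ |B|`; adding `δ` times this to
`e(A, B) + e(B) ≤ δ (|A| + |B|)` gives `e(A, B) + (δ + 1) e(B) ≤ δ (δ + 1) |B|`. Thus some heavy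
vertex with `p` light and `q` heavy neighbours has `p + (δ + 1) / 2 * q ≤ δ (δ + 1)`.

*Contradiction.* The graphs `K_{t,N}` show `δ ≥ t`. For `t ≥ 3`, the bounds `p + q ≥ d + s` and
`p + (d + 1) q ≥ (d + 1) s` then force `p + (δ + 1) / 2 * q > δ (δ + 1)`. For `t = 1, 2` the
argument is run with `δ = t` and `d = t (t - 1)`, which is at most the required defect; here the two
estimates only meet, and strictness comes from `e ≤ t (n - 1)`, which holds for these `t`.
-/

section TopologicalMinors

variable {V W α : Type*} {G G' : SimpleGraph V} {H : SimpleGraph α} {a x y : V}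

namespace HasTopMinor

lemma of_isContained {G' : SimpleGraph W} (h : HasTopMinor G' H) (hG : G' ⊑ G) :
    HasTopMinor G H := by
  obtain ⟨φ, hφ⟩ := hG
  obtain ⟨f, hf, P, hpath, hbranch, hdisj⟩ := h
  have mem_map {u v : W} (p : G'.Walk u v) {w : W} :
      φ w ∈ (p.map φ).support ↔ w ∈ p.support := by
    rw [Walk.support_map, List.mem_map_of_injective hφ]
  refine ⟨φ ∘ f, hφ.comp hf, fun _ _ h ↦ (P h).map φ, fun _ _ h ↦ ⟨(hpath h).1.map hφ, trivial⟩,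
    fun _ _ h c hc ↦ hbranch h c ((mem_map _).1 hc), fun _ _ h _ _ h' hne w hw hw' ↦ ?_⟩
  obtain ⟨w, -, rfl⟩ := List.mem_map.1 (Walk.support_map φ (P h) ▸ hw)
  simpa only [Function.comp_apply, hφ.eq_iff]
    using hdisj h h' hne w ((mem_map _).1 hw) ((mem_map _).1 hw')

lemma mono (h : HasTopMinor G' H) (hle : G' ≤ G) : HasTopMinor G H :=
  h.of_isContained (IsContained.of_le hle)

/-- The neighbours are the second vertices of the paths leaving the branch vertex. -/
lemma exists_injective_encard_neighborSet_le (h : HasTopMinor G H) :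
    ∃ f : α → V, Function.Injective f ∧
      ∀ a, (H.neighborSet a).encard ≤ (G.neighborSet (f a)).encard := by
  classical
  obtain ⟨f, hf, P, -, -, hdisj⟩ := h
  refine ⟨f, hf, fun a ↦ ?_⟩
  let second (b : α) : V := if h : H.Adj a b then (P h).snd else f a
  have second_eq {b : α} (h : H.Adj a b) : second b = (P h).snd := dif_pos h
  have adj_second {b : α} (h : H.Adj a b) : G.Adj (f a) (second b) :=
    second_eq h ▸ (P h).adj_snd (Walk.not_nil_of_ne (hf.ne h.ne))
  have second_mem {b : α} (h : H.Adj a b) : second b ∈ (P h).support :=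
    second_eq h ▸ (P h).getVert_mem_support 1
  refine Set.encard_le_encard_of_injOn (f := second) (fun b h ↦ adj_second h)
    fun b hb c hc hbc ↦ ?_
  by_contra hne
  obtain ⟨hfb, hfc⟩ := hdisj hb hc (fun e ↦ hne (Sym2.congr_right.1 e)) _ (second_mem hb)
    (hbc ▸ second_mem hc)
  exact hne (hf ((hfb.resolve_left (adj_second hb).ne').symm.trans
    (hfc.resolve_left (adj_second hb).ne')))

end HasTopMinor

lemma hasTopMinor_of_isContained (h : H ⊑ G) : HasTopMinor G H := by
  obtain ⟨φ, hφ⟩ := h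
  have mem_iff {i j : α} (h : H.Adj i j) {v : V} :
      v ∈ (φ.map_adj h).toWalk.support ↔ v = φ i ∨ v = φ j := by simp
  refine ⟨φ, hφ, fun _ _ h ↦ (φ.map_adj h).toWalk, fun _ _ h ↦ ⟨?_, trivial⟩,
    fun _ _ h c hc ↦ ((mem_iff h).1 hc).imp (hφ ·) (hφ ·),
    fun _ _ h _ _ h' _ v hv hv' ↦ ⟨(mem_iff h).1 hv, (mem_iff h').1 hv'⟩⟩
  exact (φ.map_adj h).isPath_toWalk

lemma support_subset_of_walk {u v : V} (p : G.Walk u v) (huv : u ≠ v) :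
    ∀ w ∈ p.support, w ∈ G.support := by
  intro w hw
  obtain ⟨e, he, hwe⟩ :=
    (Walk.mem_support_iff_exists_mem_edges_of_not_nil (Walk.not_nil_of_ne huv)).1 hw
  obtain ⟨b, rfl⟩ := Sym2.mem_iff_exists.1 hwe
  exact ⟨b, p.adj_of_mem_edges he⟩

/-- The graph obtained from `G` by deleting all edges at `a` and joining `x` and `y`. If `x` and `y`
are neighbours of `a`, this amounts to keeping only the edges `ax` and `ay` at `a` and suppressing
`a`, except that `a` remains as an isolated vertex. -/
def suppress (G : SimpleGraph V) (a x y : V) : SimpleGraph V :=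
  G.deleteIncidenceSet a ⊔ edge x y

lemma suppress_adj {u v : V} : (suppress G a x y).Adj u v ↔
    (G.Adj u v ∧ u ≠ a ∧ v ≠ a) ∨ (s(x, y) = s(u, v) ∧ u ≠ v) := by
  rw [suppress, sup_adj, deleteIncidenceSet_adj, edge_adj, Sym2.eq_iff]
  grind

lemma support_suppress_subset (hax : G.Adj a x) (hay : G.Adj a y) :
    (suppress G a x y).support ⊆ G.support \ {a} := by
  rintro u ⟨v, huv⟩
  have hx : x ∈ G.support \ {a} := ⟨⟨a, hax.symm⟩, hax.ne'⟩
  have hy : y ∈ G.support \ {a} := ⟨⟨a, hay.symm⟩, hay.ne'⟩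
  rcases suppress_adj.1 huv with ⟨h, hu, -⟩ | ⟨h, -⟩
  · exact ⟨⟨v, h⟩, hu⟩
  · rcases Sym2.eq_iff.1 h with ⟨rfl, rfl⟩ | ⟨rfl, rfl⟩ <;> assumption

lemma exists_walk_of_suppress_walk (hax : G.Adj a x) (hay : G.Adj a y) {u v : V}
    (p : (suppress G a x y).Walk u v) :
    ∃ q : G.Walk u v, ∀ w ∈ q.support,
      w ∈ p.support ∨ (w = a ∧ x ∈ p.support ∧ y ∈ p.support) := by
  induction p with
  | nil => exact ⟨Walk.nil, fun w hw ↦ Or.inl hw⟩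
  | @cons u v t h p ih =>
    obtain ⟨q, hq⟩ := ih
    have hv : v ∈ p.support := p.start_mem_support
    rcases suppress_adj.1 h with ⟨h, -, -⟩ | ⟨h, -⟩
    · refine ⟨Walk.cons h q, ?_⟩
      grind [Walk.support_cons]
    · rcases Sym2.eq_iff.1 h with ⟨rfl, rfl⟩ | ⟨rfl, rfl⟩
      · refine ⟨Walk.cons hax.symm (Walk.cons hay q), ?_⟩
        grind [Walk.support_cons]
      · refine ⟨Walk.cons hay.symm (Walk.cons hax q), ?_⟩
        grind [Walk.support_cons]

lemma HasTopMinor.of_suppress (hax : G.Adj a x) (hay : G.Adj a y) (hxy : x ≠ y)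
    (hH : ∀ i, i ∈ H.support) (h : HasTopMinor (suppress G a x y) H) : HasTopMinor G H := by
  classical
  obtain ⟨f, hf, P, hpath, hbranch, hdisj⟩ := h
  have notMem_path ⦃i j⦄ (h : H.Adj i j) : a ∉ (P h).support := fun ha ↦
    (support_suppress_subset hax hay (support_subset_of_walk (P h) (hf.ne h.ne) a ha)).2 rfl
  have branch_ne (i : α) : f i ≠ a := by
    obtain ⟨j, hij⟩ := hH i
    exact fun h ↦ notMem_path hij (h ▸ (P hij).start_mem_support)
  choose Q hQ using fun i j (h : H.Adj i j) ↦ exists_walk_of_suppress_walk hax hay (P h)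
  have mem_path ⦃i j⦄ (h : H.Adj i j) (w) (hw : w ∈ (Q i j h).bypass.support) :=
    hQ i j h w (Walk.support_bypass_subset_support _ hw)
  refine ⟨f, hf, fun i j h ↦ (Q i j h).bypass, fun i j h ↦ ⟨Walk.bypass_isPath _, trivial⟩,
    fun i j h c hc ↦ hbranch h c ((mem_path h _ hc).resolve_right fun h ↦ branch_ne c h.1),
    fun i j h i' j' h' hne w hw hw' ↦ ?_⟩
  rcases mem_path h w hw with hw | ⟨rfl, hx, hy⟩ <;>
    rcases mem_path h' w hw' with hw' | ⟨hwa, hx', hy'⟩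
  · exact hdisj h h' hne w hw hw'
  · exact absurd (hwa ▸ hw) (notMem_path h)
  · exact absurd hw' (notMem_path h')
  · -- Two different paths of the subdivision cannot share two vertices.
    obtain ⟨hxi, hxi'⟩ := hdisj h h' hne x hx hx'
    obtain ⟨hyi, hyi'⟩ := hdisj h h' hne y hy hy'
    have ends : s(f i, f j) = s(x, y) := (Sym2.mem_and_mem_iff hxy).1 (by simp [hxi, hyi])
    have ends' : s(f i', f j') = s(x, y) := (Sym2.mem_and_mem_iff hxy).1 (by simp [hxi', hyi'])
    have same_edge : Sym2.map f s(i, j) = Sym2.map f s(i', j') := ends.trans ends'.symm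
    exact absurd (Sym2.map.injective hf same_edge) hne

lemma exists_not_adj_of_not_hasTopMinor_top {s : ℕ} {a : V}
    (hG : ¬ HasTopMinor G (⊤ : SimpleGraph (Fin (s + 1)))) (hs : s ≤ (G.neighborSet a).encard) :
    ∃ x y, G.Adj a x ∧ G.Adj a y ∧ x ≠ y ∧ ¬ G.Adj x y := by
  classical
  by_contra! hcon
  obtain ⟨N, hN, hcard⟩ := Set.exists_subset_encard_eq hs
  lift N to Finset V using Set.finite_of_encard_eq_coe hcard
  have hclique : G.IsNClique s N :=
    ⟨fun x hx y hy hxy ↦ hcon x y (hN hx) (hN hy) hxy, by simpa using hcard⟩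
  refine hG (hasTopMinor_of_isContained ?_)
  simpa only [not_cliqueFree_iff_top_isContained] using
    (hclique.insert (a := a) fun b hb ↦ hN hb).not_cliqueFree

end TopologicalMinors

section Counting

variable {V : Type*} {G : SimpleGraph V} {a x y : V} {S : Finset V}

lemma sum_ncard_neighborSet_inter_comm (G : SimpleGraph V) (A B : Finset V) :
    ∑ a ∈ A, (G.neighborSet a ∩ B).ncard = ∑ b ∈ B, (G.neighborSet b ∩ A).ncard := by
  classical
  have key (v : V) (C : Finset V) : G.neighborSet v ∩ C = (C.filter (G.Adj v) : Set V) := by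
    ext w; simp [and_comm]
  simp only [key, Set.ncard_coe_finset]
  simpa only [adj_comm, Finset.bipartiteAbove, Finset.bipartiteBelow] using
    Finset.sum_card_bipartiteAbove_eq_sum_card_bipartiteBelow (s := A) (t := B) G.Adj

variable [Finite V]

lemma ncard_edgeSet_deleteIncidenceSet_add_ncard_neighborSet (G : SimpleGraph V) (a : V) :
    (G.deleteIncidenceSet a).edgeSet.ncard + (G.neighborSet a).ncard = G.edgeSet.ncard := by
  classical
  have := Fintype.ofFinite V
  have hdeg : G.degree a ≤ G.edgeFinset.card := G.degree_le_card_edgeFinset a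
  simp only [Set.ncard_eq_toFinset_card', Set.toFinset_card, card_neighborSet_eq_degree,
    ← edgeFinset_card, card_edgeFinset_deleteIncidenceSet]
  lia

lemma ncard_edgeSet_suppress_add_ncard_neighborSet (hxy : x ≠ y) (hadj : ¬ G.Adj x y) :
    (suppress G a x y).edgeSet.ncard + (G.neighborSet a).ncard = G.edgeSet.ncard + 1 := by
  classical
  have := Fintype.ofFinite V
  have hnew : (suppress G a x y).edgeSet.ncard = (G.deleteIncidenceSet a).edgeSet.ncard + 1 := by
    simp only [Set.ncard_eq_toFinset_card', Set.toFinset_card, ← edgeFinset_card, suppress]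
    exact card_edgeFinset_sup_edge _ (fun h ↦ hadj (deleteIncidenceSet_le _ _ h)) hxy
  have := ncard_edgeSet_deleteIncidenceSet_add_ncard_neighborSet G a
  lia

lemma sum_ncard_neighborSet_eq_twice_ncard_edgeSet (hS : G.support ⊆ S) :
    ∑ v ∈ S, (G.neighborSet v).ncard = 2 * G.edgeSet.ncard := by
  classical
  have := Fintype.ofFinite V
  have hsum : ∑ v ∈ S, G.degree v = ∑ v, G.degree v :=
    Finset.sum_subset S.subset_univ fun v _ hv ↦
      (G.degree_eq_zero_iff_notMem_support v).2 fun h ↦ hv (hS h)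
  simpa only [Set.ncard_eq_toFinset_card', Set.toFinset_card, card_neighborSet_eq_degree,
    ← edgeFinset_card, sum_degrees_eq_twice_card_edges] using hsum

end Counting

section DensityBounds

variable {V α β γ : Type*} {H : SimpleGraph α} {δ : ℝ}

/-- Every finite graph without `H` as a topological minor has at most `δ` times as many edges as
vertices. Quantifying over graphs in `Type` covers all finite graphs up to isomorphism. -/
def DensityBound (H : SimpleGraph α) (δ : ℝ) : Prop :=
  ∀ (W : Type) [Fintype W] (G : SimpleGraph W), ¬ HasTopMinor G H →
    (G.edgeSet.ncard : ℝ) ≤ δ * Fintype.card W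

/-- Every graph on a nonempty subset `S` of `V` without `H` as a topological minor has at most
`δ |S| - κ` edges. A graph on `S` is encoded as a graph on `V` with support in `S`. -/
def EdgeBound (V : Type*) (H : SimpleGraph α) (δ κ : ℝ) : Prop :=
  ∀ (G : SimpleGraph V) (S : Finset V), S.Nonempty → G.support ⊆ S → ¬ HasTopMinor G H →
    (G.edgeSet.ncard : ℝ) ≤ δ * S.card - κ

lemma DensityBound.edgeBound (h : DensityBound H δ) : EdgeBound V H δ 0 := by
  intro G S _ hS hG
  let φ : Fin S.card ↪ V := S.equivFin.symm.toEmbedding.trans (Function.Embedding.subtype (· ∈ S))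
  have mem_range {v : V} (hv : v ∈ G.support) : v ∈ Set.range φ :=
    ⟨S.equivFin ⟨v, hS hv⟩, by simp [φ]⟩
  have hsub : G.edgeSet ⊆ Sym2.map φ '' (G.comap φ).edgeSet := by
    rintro ⟨u, v⟩ (huv : G.Adj u v)
    obtain ⟨i, rfl⟩ := mem_range ⟨v, huv⟩
    obtain ⟨j, rfl⟩ := mem_range ⟨φ i, huv.symm⟩
    exact ⟨s(i, j), huv, rfl⟩
  have hcomap := h _ (G.comap φ) fun h ↦ hG (h.of_isContained (Embedding.comap φ G).isContained)
  have hcard : G.edgeSet.ncard ≤ (G.comap φ).edgeSet.ncard :=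
    (Set.ncard_le_ncard hsub (Set.toFinite _)).trans (Set.ncard_image_le (Set.toFinite _))
  simpa using (Nat.cast_le.2 hcard).trans hcomap

/-- Either all branch vertices lie in `α`, or one of them lies in `β` and has only the vertices of
`α` as neighbours. -/
lemma HasTopMinor.card_top_le_card_left_add_one
    (h : HasTopMinor (completeBipartiteGraph α β) (⊤ : SimpleGraph γ)) :
    ENat.card γ ≤ ENat.card α + 1 := by
  obtain ⟨f, hf, hdeg⟩ := h.exists_injective_encard_neighborSet_le
  by_cases hβ : ∃ i b, f i = Sum.inr b
  · obtain ⟨i, b, hi⟩ := hβ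
    have hright : (completeBipartiteGraph α β).neighborSet (f i) = Set.range Sum.inl := by
      ext (_ | _) <;> simp [hi]
    have hα : (Set.range (Sum.inl : α → α ⊕ β)).encard = ENat.card α := by
      rw [← Set.image_univ, Sum.inl_injective.encard_image, Set.encard_univ]
    have hle := hdeg i
    rw [neighborSet_top, hright, hα] at hle
    calc ENat.card γ = ({i}ᶜ : Set γ).encard + ({i} : Set γ).encard := by
          rw [add_comm, Set.encard_add_encard_compl, Set.encard_univ]
      _ ≤ ENat.card α + 1 := by rw [Set.encard_singleton]; gcongr
  · push Not at hβ
    have hleft (i : γ) : ∃ a, f i = Sum.inl a := by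
      rcases hi : f i with a | b
      · exact ⟨a, rfl⟩
      · exact absurd hi (hβ i b)
    choose g hg using hleft
    have hginj : Function.Injective g := fun i j hij ↦ hf (by rw [hg, hg, hij])
    exact (ENat.card_le_card_of_injective hginj).trans le_self_add

/-- The density of `K_{t,N}` tends to `t`. -/
lemma DensityBound.le {t : ℕ} (h : DensityBound (⊤ : SimpleGraph (Fin (t + 2))) δ) : t ≤ δ := by
  have key (N : ℕ) : (t : ℝ) * N ≤ δ * (t + N) := by
    have hfree : ¬ HasTopMinor (completeBipartiteGraph (Fin t) (Fin N))
        (⊤ : SimpleGraph (Fin (t + 2))) := fun h ↦ by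
      have := h.card_top_le_card_left_add_one
      simp only [ENat.card_eq_coe_fintype_card, Fintype.card_fin] at this
      norm_cast at this
      lia
    have hcard : (completeBipartiteGraph (Fin t) (Fin N)).edgeSet.ncard = t * N := by
      simp [Set.ncard, encard_edgeSet_completeBipartiteGraph]
    simpa [hcard] using h _ _ hfree
  by_contra! hlt
  obtain ⟨N, hN⟩ := exists_nat_gt (δ * t / (t - δ))
  rw [div_lt_iff₀ (sub_pos.2 hlt)] at hN
  linarith [key N]

end DensityBounds

section Suppression

variable {V : Type*} {G : SimpleGraph V} {A B : Finset V} {a x y v : V} {t : ℕ} {δ κ : ℝ}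

lemma neighborSet_suppress (hva : v ≠ a) (hvx : v ≠ x) (hvy : v ≠ y) (hadj : ¬ G.Adj v a) :
    (suppress G a x y).neighborSet v = G.neighborSet v := by
  ext w
  simp only [mem_neighborSet, suppress_adj, Sym2.eq_iff]
  grind

lemma sum_ncard_neighborSet_eq_sum_ncard_sdiff (hAB : Disjoint A B)
    (hsupp : G.support ⊆ A ∪ B) (hA : ∀ a ∈ A, G.neighborSet a ⊆ B) :
    ∑ a ∈ A, (G.neighborSet a).ncard = ∑ b ∈ B, (G.neighborSet b \ B).ncard := by
  have hinter : ∀ a ∈ A, (G.neighborSet a).ncard = (G.neighborSet a ∩ B).ncard := fun a ha ↦ by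
    rw [Set.inter_eq_left.2 (hA a ha)]
  rw [Finset.sum_congr rfl hinter, sum_ncard_neighborSet_inter_comm]
  refine Finset.sum_congr rfl fun b _ ↦ congrArg Set.ncard ?_
  ext w
  simp only [Set.mem_inter_iff, Set.mem_sdiff, SetLike.mem_coe, and_congr_right_iff]
  exact fun hw ↦ ⟨(Finset.disjoint_left.1 hAB ·), (hsupp ⟨b, hw.symm⟩).resolve_right⟩

lemma two_mul_ncard_edgeSet_eq_sum [Finite V] (hAB : Disjoint A B)
    (hsupp : G.support ⊆ A ∪ B) (hA : ∀ a ∈ A, G.neighborSet a ⊆ B) :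
    2 * G.edgeSet.ncard =
      2 * ∑ b ∈ B, (G.neighborSet b \ B).ncard + ∑ b ∈ B, (G.neighborSet b ∩ B).ncard := by
  classical
  have hB : ∑ b ∈ B, (G.neighborSet b).ncard =
      ∑ b ∈ B, (G.neighborSet b ∩ B).ncard + ∑ b ∈ B, (G.neighborSet b \ B).ncard := by
    rw [← Finset.sum_add_distrib]
    exact Finset.sum_congr rfl fun b _ ↦
      (Set.ncard_inter_add_ncard_sdiff_eq_ncard _ _ (Set.toFinite _)).symm
  have hdeg := sum_ncard_neighborSet_eq_twice_ncard_edgeSet (S := A ∪ B) (by simpa using hsupp)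
  rw [Finset.sum_union hAB, sum_ncard_neighborSet_eq_sum_ncard_sdiff hAB hsupp hA, hB] at hdeg
  lia

/-- The vertices of `A` are suppressed one at a time, each producing a new edge on `B`. -/
lemma EdgeBound.card_add_ncard_edgeSet_le [Finite V]
    (hbound : EdgeBound V (⊤ : SimpleGraph (Fin (t + 2))) δ κ)
    (hG : ¬ HasTopMinor G (⊤ : SimpleGraph (Fin (t + 2)))) (hB : B.Nonempty) (hAB : Disjoint A B)
    (hsupp : G.support ⊆ A ∪ B) (hA : ∀ a ∈ A, G.neighborSet a ⊆ B)
    (hdeg : ∀ a ∈ A, t + 1 ≤ (G.neighborSet a).ncard) :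
    A.card + (G.edgeSet.ncard : ℝ) ≤ δ * B.card - κ + ∑ a ∈ A, ((G.neighborSet a).ncard : ℝ) := by
  classical
  induction A using Finset.induction_on generalizing G with
  | empty => simpa using hbound G B hB (by simpa using hsupp) hG
  | insert a A ha ih =>
    simp only [Finset.forall_mem_insert, Finset.disjoint_insert_left] at hA hdeg hAB
    obtain ⟨x, y, hax, hay, hxy, hnadj⟩ := exists_not_adj_of_not_hasTopMinor_top hG
      ((Nat.cast_le.2 hdeg.1).trans (Set.ncard_le_encard _))
    have neighborSet_eq : ∀ v ∈ A, (suppress G a x y).neighborSet v = G.neighborSet v :=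
      fun v hv ↦ neighborSet_suppress (ne_of_mem_of_not_mem hv ha)
        (Finset.disjoint_left.1 hAB.2 hv <| · ▸ hA.1 hax)
        (Finset.disjoint_left.1 hAB.2 hv <| · ▸ hA.1 hay) fun hva ↦ hAB.1 (hA.2 v hv hva)
    have hsupp' : (suppress G a x y).support ⊆ A ∪ B := fun v hv ↦ by
      obtain ⟨hv, hva⟩ := support_suppress_subset hax hay hv
      simpa [Set.mem_singleton_iff.not.1 hva] using hsupp hv
    have hsuppress := ih (fun h ↦ hG (h.of_suppress hax hay hxy (by simp))) hAB.2 hsupp'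
      (fun v hv ↦ neighborSet_eq v hv ▸ hA.2 v hv) (fun v hv ↦ neighborSet_eq v hv ▸ hdeg.2 v hv)
    rw [Finset.sum_congr rfl fun v hv ↦ by rw [neighborSet_eq v hv]] at hsuppress
    have hcard : ((suppress G a x y).edgeSet.ncard + (G.neighborSet a).ncard : ℝ) =
        G.edgeSet.ncard + 1 :=
      mod_cast ncard_edgeSet_suppress_add_ncard_neighborSet hxy hnadj
    rw [Finset.sum_insert ha, Finset.card_insert_of_notMem ha, Nat.cast_add_one]
    linarith

/-- The edge bound for `G` itself plus `δ` times the one for `G` with `A` suppressed. -/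
lemma EdgeBound.sum_weight_le [Finite V]
    (hbound : EdgeBound V (⊤ : SimpleGraph (Fin (t + 2))) δ κ) (hδ : 0 ≤ δ)
    (hG : ¬ HasTopMinor G (⊤ : SimpleGraph (Fin (t + 2)))) (hB : B.Nonempty) (hAB : Disjoint A B)
    (hsupp : G.support ⊆ A ∪ B) (hA : ∀ a ∈ A, G.neighborSet a ⊆ B)
    (hdeg : ∀ a ∈ A, t + 1 ≤ (G.neighborSet a).ncard) :
    ∑ b ∈ B, ((G.neighborSet b \ B).ncard + (δ + 1) / 2 * (G.neighborSet b ∩ B).ncard : ℝ) ≤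
      (δ + 1) * (δ * B.card - κ) := by
  classical
  have hsuppressed := hbound.card_add_ncard_edgeSet_le hG hB hAB hsupp hA hdeg
  have htotal := hbound G (A ∪ B) (hB.mono Finset.subset_union_right) (by simpa using hsupp) hG
  have hM : ∑ a ∈ A, ((G.neighborSet a).ncard : ℝ) = ∑ b ∈ B, ((G.neighborSet b \ B).ncard : ℝ) :=
    mod_cast sum_ncard_neighborSet_eq_sum_ncard_sdiff hAB hsupp hA
  have hedges : (2 * G.edgeSet.ncard : ℝ) = 2 * ∑ b ∈ B, ((G.neighborSet b \ B).ncard : ℝ) +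
      ∑ b ∈ B, ((G.neighborSet b ∩ B).ncard : ℝ) :=
    mod_cast two_mul_ncard_edgeSet_eq_sum hAB hsupp hA
  rw [Finset.card_union_of_disjoint hAB, Nat.cast_add] at htotal
  rw [Finset.sum_add_distrib, ← Finset.mul_sum]
  have hinner : A.card + (∑ b ∈ B, ((G.neighborSet b ∩ B).ncard : ℝ)) / 2 ≤ δ * B.card - κ := by
    linarith
  linarith [mul_le_mul_of_nonneg_left hinner hδ]

end Suppression

section DefectiveColoring

variable {V γ : Type*} {G G' : SimpleGraph V} {L : V → Finset γ} {c : V → γ} {d s : ℕ} {u v w : V}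

/-- The neighbours of `v` with the same colour as `v`; their number is the defect of `c` at `v`. -/
def monoNeighborSet (G : SimpleGraph V) (c : V → γ) (v : V) : Set V :=
  {w | G.Adj v w ∧ c w = c v}

/-- A colouring from the lists `L` in which every vertex has at most `d` neighbours of its own
colour. -/
def IsDefectiveListColoring (G : SimpleGraph V) (L : V → Finset γ) (d : ℕ) (c : V → γ) : Prop :=
  (∀ v, c v ∈ L v) ∧ ∀ v, (monoNeighborSet G c v).ncard ≤ d

/-- The vertices of degree at least `k`. For lists of size `s` and defect `d` this is used with
`k = d + s`, and the remaining vertices are called light. -/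
noncomputable def heavyVerts [Finite V] (G : SimpleGraph V) (k : ℕ) : Finset V :=
  (Set.toFinite {v | k ≤ (G.neighborSet v).ncard}).toFinset

/-- `G` has an edge between two light vertices, or a non-isolated vertex with few neighbours, a
heavy neighbour counting `d + 1` times as much as a light one. -/
def IsReducible [Finite V] (G : SimpleGraph V) (d s : ℕ) : Prop :=
  (∃ u v, G.Adj u v ∧ u ∉ heavyVerts G (d + s) ∧ v ∉ heavyVerts G (d + s)) ∨
    ∃ b ∈ G.support, (G.neighborSet b \ heavyVerts G (d + s)).ncard +
      (d + 1) * (G.neighborSet b ∩ heavyVerts G (d + s)).ncard < (d + 1) * s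

@[simp]
lemma mem_heavyVerts [Finite V] {k : ℕ} :
    v ∈ heavyVerts G k ↔ k ≤ (G.neighborSet v).ncard := by
  simp [heavyVerts]

lemma monoNeighborSet_mono (h : G ≤ G') : monoNeighborSet G c v ⊆ monoNeighborSet G' c v :=
  fun _ hw ↦ ⟨h hw.1, hw.2⟩

lemma monoNeighborSet_update_self [DecidableEq V] {p : γ} :
    monoNeighborSet G (Function.update c v p) v = {w ∈ G.neighborSet v | c w = p} := by
  ext w
  simp only [monoNeighborSet, Function.update_self]
  exact and_congr_right fun h ↦ by rw [Function.update_of_ne h.ne']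

lemma monoNeighborSet_update_subset [DecidableEq V] {p : γ} (hwv : w ≠ v)
    (hp : G.Adj w v → c w ≠ p) :
    monoNeighborSet G (Function.update c v p) w ⊆
      monoNeighborSet (G.deleteIncidenceSet v) c w := by
  rintro x ⟨hx, hxw⟩
  rw [Function.update_of_ne hwv] at hxw
  have hxv : x ≠ v := by
    rintro rfl
    exact hp hx (by rw [← hxw, Function.update_self])
  rw [Function.update_of_ne hxv] at hxw
  exact ⟨deleteIncidenceSet_adj.2 ⟨hx, hwv, hxv⟩, hxw⟩

lemma update_mem_lists [DecidableEq V] {p : γ} (hc : ∀ w, c w ∈ L w) (hp : p ∈ L v) (w : V) :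
    Function.update c v p w ∈ L w :=
  (Function.forall_update_iff c fun w q ↦ q ∈ L w).2 ⟨hp, fun w _ ↦ hc w⟩ w

/-- The more than `d` neighbours sharing the colour of `v` use up only one colour. -/
lemma exists_mem_forall_adj_ne [Finite V] {C : Finset γ}
    (hv : (G.neighborSet v).ncard < d + C.card) (hd : d < (monoNeighborSet G c v).ncard) :
    ∃ p ∈ C, ∀ w, G.Adj v w → c w ≠ p := by
  have himage : c '' G.neighborSet v ⊆
      insert (c v) (c '' (G.neighborSet v \ monoNeighborSet G c v)) := by
    rintro _ ⟨w, hw, rfl⟩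
    by_cases hwv : c w = c v
    · exact Or.inl hwv
    · exact Or.inr ⟨w, ⟨hw, fun h ↦ hwv h.2⟩, rfl⟩
  have hcard : (c '' G.neighborSet v).ncard < (C : Set γ).ncard := by
    have hle := (Set.ncard_le_ncard himage).trans (Set.ncard_insert_le _ _)
    have himage_le := Set.ncard_image_le (f := c)
      (Set.toFinite (G.neighborSet v \ monoNeighborSet G c v))
    have hsdiff := Set.ncard_sdiff_add_ncard_of_subset
      (show monoNeighborSet G c v ⊆ G.neighborSet v from fun _ h ↦ h.1)
    rw [Set.ncard_coe_finset]
    lia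
  obtain ⟨p, hpC, hp⟩ := Set.exists_mem_notMem_of_ncard_lt_ncard hcard
  exact ⟨p, hpC, fun w hw h ↦ hp ⟨w, hw, h⟩⟩

lemma exists_mem_ncard_fiber_lt [Finite V] {C : Finset γ} {X Y : Set V} {n : ℕ}
    (h : X.ncard + n * Y.ncard < n * C.card) :
    ∃ p ∈ C, (∀ y ∈ Y, c y ≠ p) ∧ {x ∈ X | c x = p}.ncard < n := by
  classical
  lift X to Finset V using Set.toFinite X
  lift Y to Finset V using Set.toFinite Y
  simp only [Set.ncard_coe_finset] at h
  have hcolors : C.card ≤ (C \ Y.image c).card + Y.card :=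
    Finset.card_le_card_sdiff_add_card.trans (Nat.add_le_add_left Finset.card_image_le _)
  have hlt : X.card < (C \ Y.image c).card * n := by nlinarith
  obtain ⟨p, hp, hfiber⟩ := Finset.exists_card_fiber_lt_of_card_lt_mul (f := c) hlt
  rw [Finset.mem_sdiff, Finset.mem_image] at hp
  refine ⟨p, hp.1, fun y hy hyp ↦ hp.2 ⟨y, hy, hyp⟩, ?_⟩
  rwa [← Set.ncard_coe_finset, Finset.coe_filter] at hfiber

/-- The vertices of excessive defect are recoloured one by one with colours unused around them. -/
lemma exists_isDefectiveListColoring_of_forall_or [Finite V] (hc : ∀ v, c v ∈ L v)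
    (h : ∀ v, (G.neighborSet v).ncard < d + (L v).card ∨ (monoNeighborSet G c v).ncard ≤ d) :
    ∃ c', IsDefectiveListColoring G L d c' := by
  classical
  induction hn : {v | d < (monoNeighborSet G c v).ncard}.ncard using Nat.strong_induction_on
    generalizing c with
  | _ n ih =>
  by_cases! hbad : ∀ v, (monoNeighborSet G c v).ncard ≤ d
  · exact ⟨c, hc, hbad⟩
  obtain ⟨v, hv⟩ := hbad
  obtain ⟨p, hpL, hp⟩ := exists_mem_forall_adj_ne ((h v).resolve_right hv.not_ge) hv
  have hself : monoNeighborSet G (Function.update c v p) v = ∅ := by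
    rw [monoNeighborSet_update_self]
    exact Set.eq_empty_of_forall_notMem fun w hw ↦ hp w hw.1 hw.2
  have hle (w : V) :
      (monoNeighborSet G (Function.update c v p) w).ncard ≤ (monoNeighborSet G c w).ncard := by
    refine Set.ncard_le_ncard ?_
    obtain rfl | hwv := eq_or_ne w v
    · simp [hself]
    · exact (monoNeighborSet_update_subset hwv fun h ↦ hp w h.symm).trans
        (monoNeighborSet_mono (deleteIncidenceSet_le _ _))
  refine ih _ (hn ▸ Set.ncard_lt_ncard ⟨fun w hw ↦ lt_of_lt_of_le hw (hle w), fun hsub ↦ ?_⟩)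
    (update_mem_lists hc hpL) (fun w ↦ (h w).imp_right (hle w).trans) rfl
  simpa [hself] using hsub hv

lemma exists_isDefectiveListColoring_of_deleteEdges [Finite V] (hL : ∀ v, (L v).card = s)
    (hu : u ∉ heavyVerts G (d + s)) (hv : v ∉ heavyVerts G (d + s))
    (hc : IsDefectiveListColoring (G.deleteEdges {s(u, v)}) L d c) :
    ∃ c', IsDefectiveListColoring G L d c' := by
  refine exists_isDefectiveListColoring_of_forall_or hc.1 fun w ↦ ?_
  rw [hL, or_iff_not_imp_left, not_lt, ← mem_heavyVerts]
  refine fun hw ↦ (Set.ncard_le_ncard ?_).trans (hc.2 w)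
  refine fun x hx ↦ ⟨deleteEdges_adj.2 ⟨hx.1, fun hwx ↦ ?_⟩, hx.2⟩
  rcases Sym2.eq_iff.1 hwx with ⟨rfl, -⟩ | ⟨rfl, -⟩
  exacts [hu hw, hv hw]

lemma exists_isDefectiveListColoring_of_deleteIncidenceSet [Finite V] {b : V}
    (hL : ∀ v, (L v).card = s)
    (hb : (G.neighborSet b \ heavyVerts G (d + s)).ncard +
      (d + 1) * (G.neighborSet b ∩ heavyVerts G (d + s)).ncard < (d + 1) * s)
    (hc : IsDefectiveListColoring (G.deleteIncidenceSet b) L d c) :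
    ∃ c', IsDefectiveListColoring G L d c' := by
  classical
  rw [← hL b] at hb
  obtain ⟨p, hpL, hp, hfiber⟩ := exists_mem_ncard_fiber_lt (c := c) hb
  rw [hL] at hp hfiber
  refine exists_isDefectiveListColoring_of_forall_or (update_mem_lists hc.1 hpL) fun w ↦ ?_
  rw [hL, or_iff_not_imp_left, not_lt, ← mem_heavyVerts]
  intro hw
  obtain rfl | hwb := eq_or_ne w b
  · rw [monoNeighborSet_update_self]
    refine (Set.ncard_le_ncard ?_).trans (Nat.lt_succ_iff.1 hfiber)
    exact fun x hx ↦ ⟨⟨hx.1, fun hxB ↦ hp x ⟨hx.1, hxB⟩ hx.2⟩, hx.2⟩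
  · refine (Set.ncard_le_ncard ?_).trans (hc.2 w)
    exact monoNeighborSet_update_subset hwb fun h ↦ hp w ⟨h.symm, hw⟩

lemma exists_isDefectiveListColoring_of_forall_isReducible [Finite V] (hL : ∀ v, (L v).card = s)
    (hs : s ≠ 0) (h : ∀ G' ≤ G, G' ≠ ⊥ → IsReducible G' d s) :
    ∃ c, IsDefectiveListColoring G L d c := by
  induction G using WellFoundedLT.induction with | _ G ih
  obtain rfl | hG := eq_or_ne G ⊥
  · have hne (v : V) : (L v).Nonempty := Finset.card_ne_zero.1 (hL v ▸ hs)
    choose c hc using hne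
    exact ⟨c, hc, fun v ↦ by simp [monoNeighborSet]⟩
  have of_lt {G' : SimpleGraph V} (hlt : G' < G) : ∃ c, IsDefectiveListColoring G' L d c :=
    ih G' hlt fun K hK ↦ h K (hK.trans hlt.le)
  obtain ⟨u, v, huv, hu, hv⟩ | ⟨b, ⟨w, hbw⟩, hb⟩ := h G le_rfl hG
  · obtain ⟨c, hc⟩ := of_lt (G' := G.deleteEdges {s(u, v)}) ((deleteEdges_le _).lt_of_not_ge
      fun hle ↦ (deleteEdges_adj.1 (hle huv)).2 rfl)
    exact exists_isDefectiveListColoring_of_deleteEdges hL hu hv hc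
  · obtain ⟨c, hc⟩ := of_lt ((deleteIncidenceSet_le _ _).lt_of_not_ge fun hle ↦
      (deleteIncidenceSet_adj.1 (hle hbw)).2.1 rfl)
    exact exists_isDefectiveListColoring_of_deleteIncidenceSet hL hb hc

lemma choosable_of_forall_isReducible [Finite V] (hs : s ≠ 0)
    (h : ∀ G' ≤ G, G' ≠ ⊥ → IsReducible G' d s) : Choosable G s d := by
  intro L hL
  obtain ⟨c, hcL, hc⟩ := exists_isDefectiveListColoring_of_forall_isReducible hL hs h
  exact ⟨c, hcL, fun v ↦ mod_cast hc v⟩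

lemma Choosable.mono {k : ℕ} {d e : ℤ} (h : Choosable G k d) (hde : d ≤ e) : Choosable G k e := by
  intro L hL
  obtain ⟨c, hcL, hc⟩ := h L hL
  exact ⟨c, hcL, fun v ↦ (hc v).trans hde⟩

end DefectiveColoring

section Choosability

variable {V : Type*} [Finite V] {G : SimpleGraph V} {d t : ℕ} {δ κ : ℝ}

lemma heavyVerts_nonempty_of_not_isReducible {s : ℕ} (hne : G ≠ ⊥)
    (hG : ¬ IsReducible G d s) : (heavyVerts G (d + s)).Nonempty := by
  obtain ⟨u, v, huv⟩ := ne_bot_iff_exists_adj.1 hne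
  by_contra! hB
  exact hG (Or.inl ⟨u, v, huv, by simp [hB]⟩)

/-- The non-isolated light vertices are independent and have degree at least `t + 1`, so they can
play the role of `A` in `EdgeBound.sum_weight_le`. -/
lemma EdgeBound.sum_weight_heavyVerts_le
    (hbound : EdgeBound V (⊤ : SimpleGraph (Fin (t + 2))) δ κ) (hδ : 0 ≤ δ)
    (hG : ¬ HasTopMinor G (⊤ : SimpleGraph (Fin (t + 2)))) (hne : G ≠ ⊥)
    (hred : ¬ IsReducible G d (t + 1)) :
    ∑ b ∈ heavyVerts G (d + (t + 1)), ((G.neighborSet b \ heavyVerts G (d + (t + 1))).ncard +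
        (δ + 1) / 2 * (G.neighborSet b ∩ heavyVerts G (d + (t + 1))).ncard : ℝ) ≤
      (δ + 1) * (δ * (heavyVerts G (d + (t + 1))).card - κ) := by
  have hB := heavyVerts_nonempty_of_not_isReducible hne hred
  unfold IsReducible at hred
  generalize heavyVerts G (d + (t + 1)) = B at hred hB ⊢
  push Not at hred
  obtain ⟨hlight, hweight⟩ := hred
  let A : Finset V := (Set.toFinite (G.support \ B)).toFinset
  have mem_A {a : V} : a ∈ A ↔ a ∈ G.support ∧ a ∉ B := by simp [A]
  have hN : ∀ a ∈ A, G.neighborSet a ⊆ B := fun a ha v hav ↦ hlight a v hav (mem_A.1 ha).2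
  refine hbound.sum_weight_le (A := A) hδ hG hB ?_ (fun v hv ↦ ?_) hN fun a ha ↦ ?_
  · exact Finset.disjoint_left.2 fun a ha ↦ (mem_A.1 ha).2
  · exact (em (v ∈ B)).symm.imp_left fun hvB ↦ mem_A.2 ⟨hv, hvB⟩
  · have hwa := hweight a (mem_A.1 ha).1
    rw [Set.sdiff_eq_empty.2 (hN a ha), Set.inter_eq_left.2 (hN a ha), Set.ncard_empty,
      zero_add] at hwa
    exact Nat.le_of_mul_le_mul_left hwa d.succ_pos

/-- `a + (δ + 1) / 2 * b` is a convex combination of `a + b` and `a + (d + 1) * b`. -/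
lemma le_weight {a b d t δ : ℝ} (hδ : 1 ≤ δ) (hd : δ ≤ 2 * d + 1)
    (hab : d + (t + 1) ≤ a + b) (habd : (d + 1) * (t + 1) ≤ a + (d + 1) * b) :
    d + (t + 1) + (δ - 1) * t / 2 ≤ a + (δ + 1) / 2 * b := by
  obtain hd0 | hd0 : d = 0 ∨ 0 < d := by grind
  · obtain rfl : δ = 1 := by linarith
    linarith
  · have h₁ := mul_le_mul_of_nonneg_left hab (by linarith : 0 ≤ 2 * d - (δ - 1))
    have h₂ := mul_le_mul_of_nonneg_left habd (sub_nonneg.2 hδ)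
    refine le_of_mul_le_mul_left (a := 2 * d) ?_ (by linarith)
    linarith

/-- Otherwise some subgraph is irreducible, and its heavy vertices have too large a total weight. -/
lemma EdgeBound.choosable (hbound : EdgeBound V (⊤ : SimpleGraph (Fin (t + 2))) δ κ)
    (hδ : 1 ≤ δ) (hκ : 0 ≤ κ) (hd : δ ≤ 2 * d + 1)
    (hle : δ * (δ + 1) ≤ d + (t + 1) + (δ - 1) * t / 2)
    (hlt : δ * (δ + 1) < d + (t + 1) + (δ - 1) * t / 2 + κ)
    (hG : ¬ HasTopMinor G (⊤ : SimpleGraph (Fin (t + 2)))) : Choosable G (t + 1) d := by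
  refine choosable_of_forall_isReducible t.succ_ne_zero fun G' hG' hne ↦ ?_
  by_contra hred
  have hB := heavyVerts_nonempty_of_not_isReducible hne hred
  have hsum := hbound.sum_weight_heavyVerts_le (zero_le_one.trans hδ) (fun h ↦ hG (h.mono hG'))
    hne hred
  have weight_ge (b : V) (hb : b ∈ heavyVerts G' (d + (t + 1))) :
      d + (t + 1) + (δ - 1) * t / 2 ≤ (G'.neighborSet b \ heavyVerts G' (d + (t + 1))).ncard +
        (δ + 1) / 2 * (G'.neighborSet b ∩ heavyVerts G' (d + (t + 1))).ncard := by
    have hdeg := mem_heavyVerts.1 hb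
    have hsupp : b ∈ G'.support :=
      Set.nonempty_of_ncard_ne_zero (s := G'.neighborSet b) (by lia)
    have hirr := not_lt.1 fun h ↦ hred (Or.inr ⟨b, hsupp, h⟩)
    rw [← Set.ncard_inter_add_ncard_sdiff_eq_ncard _ (heavyVerts G' (d + (t + 1)) : Set V),
      add_comm (Set.ncard _)] at hdeg
    exact le_weight hδ hd (mod_cast hdeg) (mod_cast hirr)
  have hcard : (1 : ℝ) ≤ (heavyVerts G' (d + (t + 1))).card := mod_cast hB.card_pos
  have hge := Finset.card_nsmul_le_sum _ _ _ weight_ge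
  rw [nsmul_eq_mul] at hge
  nlinarith [mul_nonneg (sub_nonneg.2 hcard) (sub_nonneg.2 hle), mul_nonneg (sub_nonneg.2 hδ) hκ]

end Choosability

section SparseGraphs

variable {V : Type*} {G : SimpleGraph V} {S : Finset V} {v : V} {k t : ℕ}

lemma exists_le_ncard_edgeSet_eq (hk : k ≤ G.edgeSet.ncard) :
    ∃ G' ≤ G, G'.edgeSet.ncard = k := by
  obtain ⟨E, hE, rfl⟩ := Set.exists_subset_card_eq hk
  have hedges : (fromEdgeSet E).edgeSet = E := by
    rw [edgeSet_fromEdgeSet, sdiff_eq_left]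
    exact Set.disjoint_left.2 fun e he ↦ G.not_isDiag_of_mem_edgeSet (hE he)
  exact ⟨fromEdgeSet E, edgeSet_subset_edgeSet.1 (hedges.trans_subset hE), by rw [hedges]⟩

variable [Finite V]

lemma exists_mem_ncard_neighborSet_le (hS : G.support ⊆ S)
    (h : 2 * G.edgeSet.ncard < S.card * (k + 1)) : ∃ v ∈ S, (G.neighborSet v).ncard ≤ k := by
  rw [← sum_ncard_neighborSet_eq_twice_ncard_edgeSet hS, ← smul_eq_mul, ← Finset.sum_const] at h
  obtain ⟨v, hv, hlt⟩ := Finset.exists_lt_of_sum_lt h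
  exact ⟨v, hv, Nat.lt_succ_iff.1 hlt⟩

lemma exists_support_subset_erase [DecidableEq V]
    (hG : ¬ HasTopMinor G (⊤ : SimpleGraph (Fin (t + 2)))) (hS : G.support ⊆ S)
    (hv : (G.neighborSet v).ncard ≤ t + 1) :
    ∃ G' : SimpleGraph V, ¬ HasTopMinor G' (⊤ : SimpleGraph (Fin (t + 2))) ∧
      G'.support ⊆ S.erase v ∧ G.edgeSet.ncard ≤ G'.edgeSet.ncard + t := by
  rw [Finset.coe_erase]
  obtain hlt | hdeg := hv.lt_or_eq
  · refine ⟨G.deleteIncidenceSet v, fun h ↦ hG (h.mono (deleteIncidenceSet_le _ _)), ?_, ?_⟩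
    · rintro u ⟨w, huw⟩
      obtain ⟨huw, huv, -⟩ := deleteIncidenceSet_adj.1 huw
      exact ⟨hS ⟨w, huw⟩, huv⟩
    · have := ncard_edgeSet_deleteIncidenceSet_add_ncard_neighborSet G v
      lia
  · obtain ⟨x, y, hvx, hvy, hxy, hnadj⟩ := exists_not_adj_of_not_hasTopMinor_top hG
      ((Nat.cast_le.2 hdeg.ge).trans (Set.ncard_le_encard _))
    refine ⟨suppress G v x y, fun h ↦ hG (h.of_suppress hvx hvy hxy (by simp)),
      (support_suppress_subset hvx hvy).trans (Set.sdiff_subset_sdiff_left hS), ?_⟩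
    have := ncard_edgeSet_suppress_add_ncard_neighborSet (a := v) hxy hnadj
    lia

/-- As `t ≤ 2`, a graph with `t * n + 1` edges on `n + 1` vertices has average degree less than
`t + 2`, hence a vertex that can be deleted or suppressed at the cost of at most `t` edges. -/
lemma ncard_edgeSet_le_mul_of_card_eq_add_one {n : ℕ} (ht : t ≤ 2) (hcard : S.card = n + 1)
    (hS : G.support ⊆ S) (hG : ¬ HasTopMinor G (⊤ : SimpleGraph (Fin (t + 2)))) :
    G.edgeSet.ncard ≤ t * n := by
  classical
  induction n generalizing G S with
  | zero =>
    have hbot : G = ⊥ := eq_bot_iff_forall_not_adj.2 fun u v huv ↦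
      huv.ne (Finset.card_le_one.1 hcard.le u (hS ⟨v, huv⟩) v (hS ⟨u, huv.symm⟩))
    simp [hbot]
  | succ n ih =>
    by_contra! hlt
    obtain ⟨G₁, hle, hG₁⟩ := exists_le_ncard_edgeSet_eq (Nat.succ_le_of_lt hlt)
    have hS₁ := (support_mono hle).trans hS
    obtain ⟨v, hv, hdeg⟩ := exists_mem_ncard_neighborSet_le (k := t + 1) hS₁ (by
      rw [hG₁, hcard]
      interval_cases t <;> lia)
    obtain ⟨G₂, hG₂, hS₂, hG₁₂⟩ := exists_support_subset_erase (fun h ↦ hG (h.mono hle)) hS₁ hdeg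
    have hG₂n := ih (by rw [Finset.card_erase_of_mem hv, hcard, Nat.add_sub_cancel]) hS₂ hG₂
    lia

lemma edgeBound_of_le_two (ht : t ≤ 2) : EdgeBound V (⊤ : SimpleGraph (Fin (t + 2))) t t := by
  intro G S hne hS hG
  obtain ⟨n, hn⟩ := Nat.exists_eq_add_one.2 hne.card_pos
  have hle : (G.edgeSet.ncard : ℝ) ≤ t * n :=
    mod_cast ncard_edgeSet_le_mul_of_card_eq_add_one ht hn hS hG
  rw [hn]
  push_cast
  linarith

end SparseGraphs

section DensityBoundChoosable

variable {V : Type*} [Finite V] {G : SimpleGraph V} {d t : ℕ} {δ : ℝ}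

lemma choosable_mul_pred_of_le_two (ht₀ : t ≠ 0) (ht : t ≤ 2)
    (hG : ¬ HasTopMinor G (⊤ : SimpleGraph (Fin (t + 2)))) :
    Choosable G (t + 1) (t * (t - 1) : ℕ) := by
  have hbound := edgeBound_of_le_two (V := V) ht
  obtain rfl | rfl : t = 1 ∨ t = 2 := by lia
  all_goals refine hbound.choosable ?_ ?_ ?_ ?_ ?_ hG <;> norm_num

lemma DensityBound.choosable_of_three_le
    (h : DensityBound (⊤ : SimpleGraph (Fin (t + 2))) δ) (ht : 3 ≤ t)
    (hd : δ * (2 * δ - t) < d + t + 1)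
    (hG : ¬ HasTopMinor G (⊤ : SimpleGraph (Fin (t + 2)))) : Choosable G (t + 1) d := by
  have htδ := h.le
  have ht' : (3 : ℝ) ≤ t := mod_cast ht
  have hsq : 0 ≤ (δ - t) * (δ + t / 2 - 1) := mul_nonneg (by linarith) (by linarith)
  have hlt : δ * (δ + 1) < d + (t + 1) + (δ - 1) * t / 2 := by nlinarith
  refine h.edgeBound.choosable (by linarith) le_rfl ?_ hlt.le (by simpa using hlt) hG
  nlinarith

lemma DensityBound.choosable (h : DensityBound (⊤ : SimpleGraph (Fin (t + 2))) δ) (ht : t ≠ 0)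
    (hG : ¬ HasTopMinor G (⊤ : SimpleGraph (Fin (t + 2)))) :
    Choosable G (t + 1) (⌊δ * (2 * δ - t)⌋ - t) := by
  have hpred : ((t * (t - 1) : ℕ) : ℤ) = t * t - t := by
    push_cast [Nat.one_le_iff_ne_zero.2 ht]
    ring
  have hfloor : (t * t : ℤ) ≤ ⌊δ * (2 * δ - t)⌋ := by
    rw [Int.le_floor]
    push_cast
    nlinarith [h.le, (t.cast_nonneg : (0 : ℝ) ≤ t)]
  have hle : (t * (t - 1) : ℕ) ≤ ⌊δ * (2 * δ - t)⌋ - t := by linarith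
  obtain ht₂ | ht₃ := le_or_gt t 2
  · exact (choosable_mul_pred_of_le_two ht ht₂ hG).mono hle
  · obtain ⟨d, hd⟩ := Int.eq_ofNat_of_zero_le ((Int.natCast_nonneg _).trans hle)
    rw [hd]
    refine h.choosable_of_three_le ht₃ ?_ hG
    simpa [sub_eq_iff_eq_add.1 hd] using Int.lt_floor_add_one (δ * (2 * δ - t))

end DensityBoundChoosable

/-- If every finite simple graph `H` with no `K_{s+1}` topological minor satisfies
`|E(H)| ≤ δ|V(H)|`, then every finite simple graph with no `K_{s+1}` topological minor is
`(s, ⌊δ(2δ - s + 1)⌋ - s + 1)`-choosable. -/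
theorem stmt11 (s : ℕ) (hs : 2 ≤ s) (δ : ℝ) (hδ : 0 < δ)
    (hdens : ∀ (W : Type) [Fintype W] (H : SimpleGraph W),
      ¬ HasTopMinor H (⊤ : SimpleGraph (Fin (s + 1))) →
        (H.edgeSet.ncard : ℝ) ≤ δ * (Fintype.card W : ℝ))
    {V : Type} [Fintype V] (G : SimpleGraph V)
    (hG : ¬ HasTopMinor G (⊤ : SimpleGraph (Fin (s + 1)))) :
    Choosable G s (⌊δ * (2 * δ - (s : ℝ) + 1)⌋ - (s : ℤ) + 1) := by
  obtain ⟨t, rfl⟩ : ∃ t, s = t + 1 := ⟨s - 1, by lia⟩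
  have hdensity : DensityBound (⊤ : SimpleGraph (Fin (t + 2))) δ := hdens
  have hchoosable := hdensity.choosable (by lia) hG
  rw [show δ * (2 * δ - ((t + 1 : ℕ) : ℝ) + 1) = δ * (2 * δ - t) by push_cast; ring]
  exact hchoosable.mono (by push_cast; linarith)
end

section
/- For integers t ≥ s ≥ 1 there exists an integer d such that every finite simple graph with no K_{s,t} topological minor is (s, d)-choosable. -/
/-!
The colouring is found by deleting edges and restoring them. A graph with an edge and without a
subdivision of `K_{s,t}` has a non-isolated vertex of degree less than `s`, or a light edge: one
whose two ends have degree at most a constant `lightBound s t`, which is also the allowed defect. In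
the first case the edges at that vertex are deleted, the rest is coloured, and the vertex receives a
colour of its list absent from its neighbourhood. In the second case the light edge is deleted and
put back after colouring: its ends have too few neighbours to exceed the defect.

Light edges exist for the following reason. Graphs without a subdivision of `K_{s,t}` have average
degree below a constant (Mader's theorem). Mader's proof adds the edges of the target graph one at a
time: a dense graph contains a connected set `U` whose neighbourhood is still dense, and a
subdivision of the target minus one edge inside that neighbourhood is completed by a path through
`U`.

Without light edges, let `B` be the set of vertices of large degree and `A` the other non-isolated
vertices; `A` is independent, and its vertices have at least `s` neighbours, all in `B`. Assign as
many vertices of `A` as possible injectively to pairs of their neighbours. The assigned pairs form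
a graph `H` on `B` with a `1`-subdivision in `G`, so `H` is sparse and only linearly many vertices
are assigned. The neighbourhood of an unassigned vertex is a clique of `H`; a sparse graph has
linearly many cliques, and fewer than `t` unassigned vertices share a neighbourhood since `G` has
no `K_{s,t}` subgraph. So `|A|` is linear in `|B|`, which contradicts the bounded average degree
when the degrees in `B` are large enough.
-/

open SimpleGraph

universe u v

/-! ### Counting edges inside a set of vertices -/

section Sparse

open scoped Finset

variable {V : Type u} {G : SimpleGraph V} {S : Finset V} {C : ℕ}

open Classical in
lemma card_interedges_eq_sum (G : SimpleGraph V) (S T : Finset V) :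
    #(G.interedges S T) = ∑ v ∈ S, #{w ∈ T | G.Adj v w} := by
  simp only [interedges_def, Finset.card_filter, Finset.sum_product]

open Classical in
lemma card_interedges_erase {w : V} (hw : w ∈ S) :
    #(G.interedges S S) =
      #(G.interedges (S.erase w) (S.erase w)) + 2 * #{x ∈ S | G.Adj w x} := by
  have row (v : V) : #{x ∈ S | G.Adj v x} =
      #{x ∈ S.erase w | G.Adj v x} + if G.Adj v w then 1 else 0 := by
    simp only [Finset.card_filter, Finset.sum_erase_add _ _ hw]
  have column : #{x ∈ S | G.Adj w x} = ∑ x ∈ S.erase w, if G.Adj x w then 1 else 0 := by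
    rw [row w, if_neg (G.loopless.irrefl w), add_zero, Finset.card_filter]
    simp only [G.adj_comm w]
  rw [card_interedges_eq_sum, card_interedges_eq_sum, ← Finset.sum_erase_add S _ hw,
    Finset.sum_congr rfl fun v _ => row v, Finset.sum_add_distrib, ← column]
  ring

open Classical in
/-- Every subgraph of `G` induced on a subset of `B` has average degree at most `C`; note that
`#(G.interedges S S)` counts every edge inside `S` twice. -/
def SparseOn (G : SimpleGraph V) (C : ℕ) (B : Finset V) : Prop :=
  ∀ S ⊆ B, #(G.interedges S S) ≤ C * #S

lemma SparseOn.mono {B B' : Finset V} (h : SparseOn G C B) (hB : B' ⊆ B) : SparseOn G C B' :=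
  fun S hS => h S (hS.trans hB)

open Classical in
lemma SparseOn.exists_card_adj_le {B : Finset V} (h : SparseOn G C B) (hB : B.Nonempty) :
    ∃ v ∈ B, #{w ∈ B | G.Adj v w} ≤ C := by
  refine Finset.exists_le_of_sum_le hB ?_
  rw [← card_interedges_eq_sum, Finset.sum_const, smul_eq_mul, mul_comm]
  exact h B subset_rfl

open Classical in
/-- The nonempty cliques of `G` inside `B`. -/
noncomputable def cliquesIn (G : SimpleGraph V) (B : Finset V) : Finset (Finset V) :=
  B.powerset.filter fun T => T.Nonempty ∧ G.IsClique T

lemma mem_cliquesIn {T B : Finset V} : T ∈ cliquesIn G B ↔ T ⊆ B ∧ T.Nonempty ∧ G.IsClique T := by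
  simp [cliquesIn]

open Classical in
lemma cliquesIn_subset_union {B : Finset V} {v : V} :
    cliquesIn G B ⊆
      cliquesIn G (B.erase v) ∪ {w ∈ B | G.Adj v w}.powerset.image (insert v) := by
  intro T hT
  obtain ⟨hTB, hne, hclique⟩ := mem_cliquesIn.1 hT
  by_cases hvT : v ∈ T
  · refine Finset.mem_union_right _ (Finset.mem_image.2 ⟨T.erase v, ?_, Finset.insert_erase hvT⟩)
    refine Finset.mem_powerset.2 fun w hw => ?_
    obtain ⟨hwv, hwT⟩ := Finset.mem_erase.1 hw
    exact Finset.mem_filter.2 ⟨hTB hwT, hclique hvT hwT hwv.symm⟩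
  · exact Finset.mem_union_left _
      (mem_cliquesIn.2 ⟨Finset.subset_erase.2 ⟨hTB, hvT⟩, hne, hclique⟩)

lemma SparseOn.card_cliquesIn_le {B : Finset V} (h : SparseOn G C B) :
    #(cliquesIn G B) ≤ 2 ^ C * #B := by
  classical
  induction B using Finset.strongInduction with
  | H B ih =>
  rcases B.eq_empty_or_nonempty with rfl | hB
  · simp [cliquesIn, Finset.filter_singleton]
  obtain ⟨v, hv, hdeg⟩ := h.exists_card_adj_le hB
  calc #(cliquesIn G B)
      ≤ #(cliquesIn G (B.erase v)) + #({w ∈ B | G.Adj v w}.powerset.image (insert v)) :=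
        (Finset.card_le_card cliquesIn_subset_union).trans (Finset.card_union_le _ _)
    _ ≤ 2 ^ C * #(B.erase v) + 2 ^ C := by
        refine add_le_add (ih _ (Finset.erase_ssubset hv) (h.mono (Finset.erase_subset _ _))) ?_
        grw [Finset.card_image_le, Finset.card_powerset, hdeg]
        norm_num
    _ = 2 ^ C * #B := by rw [← Finset.card_erase_add_one hv]; ring

end Sparse

/-! ### Dense neighbourhoods of connected sets -/

section Contraction

open scoped Finset

variable {V : Type u} {G : SimpleGraph V} {S U : Finset V} {k : ℕ} {v w : V}

open Classical in
/-- The neighbours of `U` in `S \ U`. -/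
noncomputable def outerNeighbors (G : SimpleGraph V) (S U : Finset V) : Finset V :=
  {w ∈ S \ U | ∃ u ∈ U, G.Adj u w}

lemma mem_outerNeighbors :
    w ∈ outerNeighbors G S U ↔ (w ∈ S ∧ w ∉ U) ∧ ∃ u ∈ U, G.Adj u w := by
  simp [outerNeighbors]

open Classical in
lemma outerNeighbors_insert :
    outerNeighbors G S (insert w U) =
      (outerNeighbors G S U).erase w ∪ {x ∈ S \ U | G.Adj w x} := by
  ext x
  have : G.Adj w x → x ≠ w := fun h => h.ne'
  simp only [mem_outerNeighbors, Finset.mem_insert, Finset.mem_union, Finset.mem_erase,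
    Finset.mem_filter, Finset.mem_sdiff, exists_eq_or_imp]
  grind

open Classical in
/-- The degree sum of the graph obtained from `G[S]` by contracting `U` to a single vertex. -/
noncomputable def contractionDegreeSum (G : SimpleGraph V) (S U : Finset V) : ℕ :=
  #(G.interedges (S \ U) (S \ U)) + 2 * #(outerNeighbors G S U)

open Classical in
lemma contractionDegreeSum_singleton (hv : v ∈ S) :
    contractionDegreeSum G S {v} = #(G.interedges S S) := by
  have : outerNeighbors G S {v} = {x ∈ S | G.Adj v x} := by
    ext x
    have : G.Adj v x → x ≠ v := fun h => h.ne'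
    simp only [mem_outerNeighbors, Finset.mem_singleton, exists_eq_left, Finset.mem_filter]
    tauto
  rw [contractionDegreeSum, this, Finset.sdiff_singleton_eq_erase, card_interedges_erase hv]

open Classical in
/-- Contracting the edge from `U` to `w` loses that edge and merges the two edges from `U` and `w`
to each common neighbour. -/
lemma contractionDegreeSum_insert (hw : w ∈ outerNeighbors G S U) :
    contractionDegreeSum G S (insert w U) + 2 * (#{x ∈ outerNeighbors G S U | G.Adj w x} + 1) =
      contractionDegreeSum G S U := by
  have hwSU : w ∈ S \ U := (Finset.mem_filter.1 hw).1
  have hinter : (outerNeighbors G S U).erase w ∩ {x ∈ S \ U | G.Adj w x} =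
      {x ∈ outerNeighbors G S U | G.Adj w x} := by
    ext x
    have : G.Adj w x → x ≠ w := fun h => h.ne'
    simp only [Finset.mem_inter, Finset.mem_erase, Finset.mem_filter, mem_outerNeighbors,
      Finset.mem_sdiff]
    tauto
  have hcard := Finset.card_union_add_card_inter
    ((outerNeighbors G S U).erase w) {x ∈ S \ U | G.Adj w x}
  rw [← outerNeighbors_insert, hinter] at hcard
  have herase := Finset.card_erase_add_one hw
  have hedges := card_interedges_erase (G := G) hwSU
  rw [contractionDegreeSum, contractionDegreeSum, Finset.sdiff_insert]
  omega

open Classical in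
/-- `U` is a connected subset of `S` whose contraction leaves a graph with at least `k` edges per
vertex. -/
structure IsDenseContraction (G : SimpleGraph V) (k : ℕ) (S U : Finset V) : Prop where
  subset : U ⊆ S
  connected : (G.induce (U : Set V)).Connected
  le_degreeSum : 2 * k * (#(S \ U) + 1) ≤ contractionDegreeSum G S U

open Classical in
lemma isDenseContraction_singleton (hv : v ∈ S) (h : 2 * k * #S ≤ #(G.interedges S S)) :
    IsDenseContraction G k S {v} where
  subset := by simpa using hv
  connected := by
    rw [Finset.coe_singleton]
    exact Connected.of_subsingleton
  le_degreeSum := by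
    rwa [contractionDegreeSum_singleton hv, Finset.sdiff_singleton_eq_erase,
      Finset.card_erase_add_one hv]

open Classical in
lemma IsDenseContraction.insert_outerNeighbor (h : IsDenseContraction G k S U)
    (hw : w ∈ outerNeighbors G S U)
    (hdeg : #{x ∈ outerNeighbors G S U | G.Adj w x} < k) :
    IsDenseContraction G k S (insert w U) := by
  obtain ⟨⟨hwS, hwU⟩, u, hu, huw⟩ := mem_outerNeighbors.1 hw
  refine ⟨Finset.insert_subset hwS h.subset, ?_, ?_⟩
  · rw [Finset.coe_insert, Set.insert_eq, Set.union_comm]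
    exact connected_induce_union h.connected.preconnected
      (Preconnected.of_subsingleton (G := G.induce {w})) hu rfl huw
  · have hcard : #(S \ insert w U) + 1 = #(S \ U) := by
      rw [Finset.sdiff_insert, Finset.card_erase_add_one (Finset.mem_sdiff.2 ⟨hwS, hwU⟩)]
    have hsum := contractionDegreeSum_insert hw
    have hdense := h.le_degreeSum
    rw [← hcard, mul_add_one] at hdense
    linarith

open Classical in
/-- Take `U` maximal such that `G[S]` stays dense after contracting `U`. Contracting one more
neighbour `w` of `U` loses one edge plus one for each common neighbour of `w` and `U`, so `w` must
have many neighbours among those of `U`. If `U` has no outer neighbours then `S \ U` is still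
dense. -/
lemma exists_dense_outerNeighbors (hk : 0 < k) (hS : S.Nonempty)
    (hdense : 2 * k * #S ≤ #(G.interedges S S)) :
    ∃ S' ⊆ S, ∃ U ⊆ S', (G.induce (U : Set V)).Connected ∧ (outerNeighbors G S' U).Nonempty ∧
      ∀ w ∈ outerNeighbors G S' U, k ≤ #{x ∈ outerNeighbors G S' U | G.Adj w x} := by
  induction S using Finset.strongInduction with
  | H S ih =>
  obtain ⟨v, hv⟩ := hS
  have hfinite : {U | IsDenseContraction G k S U}.Finite :=
    S.powerset.finite_toSet.subset fun U hU => Finset.mem_powerset.2 hU.subset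
  obtain ⟨U, hU, hmax⟩ := hfinite.exists_maximal ⟨_, isDenseContraction_singleton hv hdense⟩
  by_cases hN : (outerNeighbors G S U).Nonempty
  · refine ⟨S, subset_rfl, U, hU.subset, hU.connected, hN, fun w hw => ?_⟩
    by_contra! hdeg
    have hwU :=
      hmax (hU.insert_outerNeighbor hw hdeg) (Finset.subset_insert w U) (Finset.mem_insert_self w U)
    exact (mem_outerNeighbors.1 hw).1.2 hwU
  · have hUne : U.Nonempty := Finset.coe_nonempty.1 (Set.nonempty_coe_sort.1 hU.connected.nonempty)
    have hrest : 2 * k * (#(S \ U) + 1) ≤ #(G.interedges (S \ U) (S \ U)) := by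
      simpa [contractionDegreeSum, Finset.not_nonempty_iff_eq_empty.1 hN] using hU.le_degreeSum
    have hne : (S \ U).Nonempty := by
      by_contra! hempty
      simp [hempty, hk.ne'] at hrest
    obtain ⟨S', hS', h⟩ := ih (S \ U) (Finset.sdiff_ssubset hU.subset hUne) hne
      ((Nat.mul_le_mul_left _ (Nat.le_succ _)).trans hrest)
    exact ⟨S', hS'.trans Finset.sdiff_subset, h⟩

lemma exists_walk_through {a b : V} (hU : (G.induce (U : Set V)).Connected)
    (ha : a ∈ outerNeighbors G S U) (hb : b ∈ outerNeighbors G S U) :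
    ∃ p : G.Walk a b, ∀ x ∈ p.support, x = a ∨ x = b ∨ x ∈ U := by
  obtain ⟨-, u, hu, hua⟩ := mem_outerNeighbors.1 ha
  obtain ⟨-, v, hv, hvb⟩ := mem_outerNeighbors.1 hb
  obtain ⟨p⟩ := hU.preconnected ⟨u, hu⟩ ⟨v, hv⟩
  obtain ⟨q, hq⟩ : ∃ q : G.Walk u v, ∀ x ∈ q.support, x ∈ U :=
    ⟨p.map (Embedding.induce _).toHom, fun x hx => by
      obtain ⟨y, -, rfl⟩ := List.mem_map.1 (p.support_map _ ▸ hx)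
      exact y.2⟩
  refine ⟨.cons hua.symm (q.concat hvb), fun x hx => ?_⟩
  simp only [Walk.support_cons, Walk.support_concat, List.mem_cons, List.mem_append,
    List.not_mem_nil, or_false] at hx
  tauto

end Contraction

/-! ### Subdivisions -/

section Subdivision

open scoped Finset

variable {V : Type u} {α : Type v} {G H : SimpleGraph V} {X : SimpleGraph α}

/-- A subdivision of `X` in `G` with all its vertices in `S`. Instead of a path for each edge `e` of
`X`, it records a set `segment e` of vertices through which such a path can be routed; two segments
may only meet in branch vertices. -/
structure SubdivModel (X : SimpleGraph α) (G : SimpleGraph V) (S : Set V) where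
  branch : α ↪ V
  segment : Sym2 α → Set V
  branch_mem : ∀ a, branch a ∈ S
  segment_subset : ∀ e, segment e ⊆ S
  mem_of_branch_mem : ∀ ⦃e a⦄, branch a ∈ segment e → a ∈ e
  inter_subset : ∀ ⦃e e'⦄, e ≠ e' → segment e ∩ segment e' ⊆ Set.range branch
  exists_walk : ∀ ⦃a b⦄, X.Adj a b →
    ∃ p : G.Walk (branch a) (branch b), ∀ x ∈ p.support, x ∈ segment s(a, b)

namespace SubdivModel

variable {S T : Set V}

lemma hasTopMinor (M : SubdivModel X G S) : HasTopMinor G X := by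
  classical
  choose p hp using M.exists_walk
  have hbypass {a b} (h : X.Adj a b) {x} (hx : x ∈ (p h).bypass.support) :
      x ∈ M.segment s(a, b) :=
    hp h x ((p h).support_bypass_subset_support hx)
  refine ⟨M.branch, M.branch.injective, fun a b h => (p h).bypass,
    fun a b h => ⟨Walk.bypass_isPath _, trivial⟩, fun a b h c hc => ?_,
    fun a b h a' b' h' hne x hx hx' => ?_⟩
  · exact Sym2.mem_iff.1 (M.mem_of_branch_mem (hbypass h hc))
  · replace hx := hbypass h hx
    replace hx' := hbypass h' hx'
    obtain ⟨c, rfl⟩ := M.inter_subset hne ⟨hx, hx'⟩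
    have hc := Sym2.mem_iff.1 (M.mem_of_branch_mem hx)
    have hc' := Sym2.mem_iff.1 (M.mem_of_branch_mem hx')
    exact ⟨hc.imp (congrArg _) (congrArg _), hc'.imp (congrArg _) (congrArg _)⟩

/-- A subdivision in a subgraph is a subdivision in the whole graph. -/
def mono (M : SubdivModel X H T) (hHG : H ≤ G) (hTS : T ⊆ S) : SubdivModel X G S where
  __ := M
  branch_mem a := hTS (M.branch_mem a)
  segment_subset e := (M.segment_subset e).trans hTS
  exists_walk a b h := by
    obtain ⟨p, hp⟩ := M.exists_walk h
    exact ⟨p.mapLe hHG, by simpa using hp⟩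

/-- A copy of `X` is a subdivision of `X` in which no edge is subdivided. -/
def ofCopy (f : Copy X G) (hS : ∀ a, f a ∈ S) : SubdivModel X G S where
  branch := ⟨f, f.injective⟩
  segment e := f '' e
  branch_mem := hS
  segment_subset e := by rintro _ ⟨a, -, rfl⟩; exact hS a
  mem_of_branch_mem e a := by
    rintro ⟨b, hb, hba⟩
    rwa [← f.injective hba]
  inter_subset e e' _ := fun x hx => Set.image_subset_range f e hx.1
  exists_walk a b h := by
    have hadj : G.Adj (f a) (f b) := f.toHom.map_adj h
    exact ⟨hadj.toWalk, by simp [eq_comm]⟩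

open Classical in
/-- Restore a deleted edge by routing it through a set `U` that the rest of the subdivision
avoids. -/
noncomputable def insertEdge {a b : α} {U : Set V} (M : SubdivModel (X.deleteEdges {s(a, b)}) G T)
    (hTS : T ⊆ S) (hUS : U ⊆ S) (hTU : Disjoint T U)
    (hwalk : ∃ p : G.Walk (M.branch a) (M.branch b),
      ∀ x ∈ p.support, x = M.branch a ∨ x = M.branch b ∨ x ∈ U) :
    SubdivModel X G S where
  branch := M.branch
  segment := Function.update M.segment s(a, b) ({M.branch a, M.branch b} ∪ U)
  branch_mem c := hTS (M.branch_mem c)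
  segment_subset e := by
    obtain rfl | he := eq_or_ne e s(a, b)
    · simp [Set.insert_subset_iff, hTS (M.branch_mem _), hUS]
    · simpa [he] using (M.segment_subset e).trans hTS
  mem_of_branch_mem e c hc := by
    obtain rfl | he := eq_or_ne e s(a, b)
    · have hcU : M.branch c ∉ U := hTU.notMem_of_mem_left (M.branch_mem c)
      simpa [hcU] using hc
    · exact M.mem_of_branch_mem (by simpa [he] using hc)
  inter_subset e e' hne x hx := by
    have hold {e} (he : e ≠ s(a, b)) (hx : x ∈ M.segment e)
        (hx' : x ∈ {M.branch a, M.branch b} ∪ U) : x ∈ Set.range M.branch := by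
      have hxU : x ∉ U := hTU.notMem_of_mem_left (M.segment_subset e hx)
      rcases hx' with (rfl | rfl) | hx'
      exacts [⟨a, rfl⟩, ⟨b, rfl⟩, absurd hx' hxU]
    obtain rfl | he := eq_or_ne e s(a, b)
    · simp only [Function.update_self, Function.update_of_ne hne.symm] at hx
      exact hold hne.symm hx.2 hx.1
    obtain rfl | he' := eq_or_ne e' s(a, b)
    · simp only [Function.update_self, Function.update_of_ne hne] at hx
      exact hold hne hx.1 hx.2
    · simp only [Function.update_of_ne he, Function.update_of_ne he'] at hx
      exact M.inter_subset hne hx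
  exists_walk c d hcd := by
    by_cases he : s(c, d) = s(a, b)
    · obtain ⟨p, hp⟩ := hwalk
      rw [he, Function.update_self]
      obtain ⟨rfl, rfl⟩ | ⟨rfl, rfl⟩ := Sym2.eq_iff.1 he
      · exact ⟨p, by simpa [or_assoc] using hp⟩
      · exact ⟨p.reverse, by simpa [or_assoc] using hp⟩
    · rw [Function.update_of_ne he]
      exact M.exists_walk (deleteEdges_adj.2 ⟨hcd, he⟩)

end SubdivModel

/-- Every graph of average degree at least `maderBound X` contains a subdivision of `X`. -/
noncomputable def maderBound (X : SimpleGraph α) : ℕ := Nat.card α * 2 ^ X.edgeSet.ncard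

lemma maderBound_eq_two_mul [Finite α] {a b : α} (hab : X.Adj a b) :
    maderBound X = 2 * maderBound (X.deleteEdges {s(a, b)}) := by
  have hedges : (X.deleteEdges {s(a, b)}).edgeSet.ncard + 1 = X.edgeSet.ncard := by
    rw [edgeSet_deleteEdges]
    exact Set.ncard_sdiff_singleton_add_one hab (Set.toFinite _)
  rw [maderBound, maderBound, ← hedges]
  ring

open Classical in
/-- Mader's theorem. A dense graph contains a connected set with a dense neighbourhood; a
subdivision of `X` minus an edge found there is completed by a path through the connected set. -/
theorem nonempty_subdivModel_of_dense [Finite α] (X : SimpleGraph α) {S : Finset V}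
    (hS : S.Nonempty) (hdense : maderBound X * #S ≤ #(G.interedges S S)) :
    Nonempty (SubdivModel X G S) := by
  induction X using WellFoundedLT.induction generalizing S with
  | ind X ih =>
  by_cases hX : X = ⊥
  · subst hX
    have hcard : Nat.card α ≤ Nat.card S := by
      rw [Nat.card_eq_finsetCard]
      refine Nat.le_of_mul_le_mul_right ?_ hS.card_pos
      simpa [maderBound] using hdense.trans (G.card_interedges_le_mul S S)
    have := Fintype.ofFinite α
    obtain ⟨f⟩ := Function.Embedding.nonempty_of_card_le (α := α) (β := S) (by simpa using hcard)
    exact ⟨.ofCopy (.bot (f.trans (.subtype _))) fun a => (f a).2⟩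
  obtain ⟨a, b, hab⟩ := ne_bot_iff_exists_adj.1 hX
  have : Nonempty α := ⟨a⟩
  set X' := X.deleteEdges {s(a, b)}
  have hpos : 0 < maderBound X' := Nat.mul_pos Nat.card_pos (by positivity)
  obtain ⟨S', hS', U, hUS', hconn, hne, hmin⟩ := exists_dense_outerNeighbors hpos hS
    (by rwa [← maderBound_eq_two_mul hab])
  set N := outerNeighbors G S' U
  have hdense' : maderBound X' * #N ≤ #(G.interedges N N) := by
    rw [card_interedges_eq_sum, mul_comm]
    exact Finset.card_nsmul_le_sum _ _ _ hmin
  have hlt : X' < X := (deleteEdges_le _).lt_of_not_ge fun h => by simpa [X'] using h hab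
  obtain ⟨M⟩ := ih X' hlt hne hdense'
  refine ⟨M.insertEdge (U := U) ?_ ?_ ?_
    (exists_walk_through hconn (M.branch_mem a) (M.branch_mem b))⟩
  · exact fun x hx => hS' (mem_outerNeighbors.1 hx).1.1
  · exact_mod_cast hUS'.trans hS'
  · exact Set.disjoint_left.2 fun x hx => (mem_outerNeighbors.1 hx).1.2

lemma sparseOn_of_isEmpty_subdivModel [Finite α] {B : Finset V}
    (h : IsEmpty (SubdivModel X G B)) : SparseOn G (maderBound X) B := by
  intro S hSB
  by_contra! hdense
  have hS : S.Nonempty := by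
    by_contra! hS
    simp [hS, interedges_def] at hdense
  obtain ⟨M⟩ := nonempty_subdivModel_of_dense X hS hdense.le
  exact h.false (M.mono le_rfl (by exact_mod_cast hSB))

end Subdivision

/-! ### Replacing edges by paths of length two -/

section OneSubdivision

variable {V : Type u} {α : Type v} {G H : SimpleGraph V} {X : SimpleGraph α} {A B : Set V}
  {φ : Sym2 V → V}

/-- `G` contains the `1`-subdivision of `H` (on the same vertices) in which the edge `e` is
subdivided by the vertex `φ e ∈ A`; the values of `φ` outside `H.edgeSet` are irrelevant. -/
structure IsOneSubdivision (G H : SimpleGraph V) (A : Set V) (φ : Sym2 V → V) : Prop where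
  injOn : Set.InjOn φ H.edgeSet
  mapsTo : Set.MapsTo φ H.edgeSet A
  adj : ∀ ⦃e⦄, e ∈ H.edgeSet → ∀ ⦃v⦄, v ∈ e → G.Adj v (φ e)

lemma IsOneSubdivision.exists_walk (h : IsOneSubdivision G H A φ) {u v : V} (p : H.Walk u v) :
    ∃ q : G.Walk u v, ∀ x ∈ q.support, x ∈ p.support ∨ ∃ e ∈ p.edges, φ e = x := by
  induction p with
  | nil => exact ⟨.nil, by simp⟩
  | cons huw p ih =>
    rename_i u w v
    obtain ⟨q, hq⟩ := ih
    have hu : G.Adj u (φ s(u, w)) := h.adj huw (Sym2.mem_mk_left u w)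
    have hw : G.Adj (φ s(u, w)) w := (h.adj huw (Sym2.mem_mk_right u w)).symm
    refine ⟨.cons hu (.cons hw q), fun x hx => ?_⟩
    simp only [Walk.support_cons, Walk.edges_cons, List.mem_cons] at hx ⊢
    rcases hx with rfl | rfl | hx
    · exact .inl (.inl rfl)
    · exact .inr ⟨_, .inl rfl, rfl⟩
    · exact (hq x hx).imp .inr fun ⟨e, he, hex⟩ => ⟨e, .inr he, hex⟩

lemma SubdivModel.eq_of_edge_mem_segment (M : SubdivModel X H B) {f : Sym2 V} {e e' : Sym2 α}
    (hf : f ∈ H.edgeSet) (hfe : ∀ v ∈ f, v ∈ M.segment e) (hfe' : ∀ v ∈ f, v ∈ M.segment e') :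
    e = e' := by
  by_contra hne
  have hbranch {v} (hv : v ∈ f) : ∃ a, M.branch a = v ∧ a ∈ e ∧ a ∈ e' := by
    obtain ⟨a, rfl⟩ := M.inter_subset hne ⟨hfe v hv, hfe' v hv⟩
    exact ⟨a, rfl, M.mem_of_branch_mem (hfe _ hv), M.mem_of_branch_mem (hfe' _ hv)⟩
  induction f with
  | h u w =>
  obtain ⟨a, rfl, hae, hae'⟩ := hbranch (Sym2.mem_mk_left u w)
  obtain ⟨b, rfl, hbe, hbe'⟩ := hbranch (Sym2.mem_mk_right _ w)
  have hab : a ≠ b := fun h => (hf : H.Adj _ _).ne (congrArg _ h)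
  exact hne (Sym2.eq_of_ne_mem hab hae hbe hae' hbe')

/-- A subdivision in `H`, with every edge of `H` replaced by a path of length two in `G`. -/
def SubdivModel.ofOneSubdivision (M : SubdivModel X H B) (h : IsOneSubdivision G H A φ)
    (hAB : Disjoint A B) : SubdivModel X G Set.univ where
  branch := M.branch
  segment e := M.segment e ∪ φ '' {f ∈ H.edgeSet | ∀ v ∈ f, v ∈ M.segment e}
  branch_mem _ := Set.mem_univ _
  segment_subset _ := Set.subset_univ _
  mem_of_branch_mem e a := by
    rintro (ha | ⟨f, ⟨hf, -⟩, hfa⟩)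
    · exact M.mem_of_branch_mem ha
    · exact (hAB.notMem_of_mem_left (h.mapsTo hf) (hfa ▸ M.branch_mem a)).elim
  inter_subset e e' hne := by
    have hdisjoint {e f x} (hx : x ∈ M.segment e) (hf : f ∈ H.edgeSet) : φ f ≠ x :=
      fun hfx => hAB.notMem_of_mem_left (h.mapsTo hf) (hfx ▸ M.segment_subset e hx)
    rintro x ⟨hx | ⟨f, ⟨hf, hfe⟩, hfx⟩, hx' | ⟨f', ⟨hf', hfe'⟩, hfx'⟩⟩
    · exact M.inter_subset hne ⟨hx, hx'⟩
    · exact (hdisjoint hx hf' hfx').elim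
    · exact (hdisjoint hx' hf hfx).elim
    · obtain rfl := h.injOn hf hf' (hfx.trans hfx'.symm)
      exact (hne (M.eq_of_edge_mem_segment hf hfe hfe')).elim
  exists_walk a b hab := by
    obtain ⟨p, hp⟩ := M.exists_walk hab
    obtain ⟨q, hq⟩ := h.exists_walk p
    refine ⟨q, fun x hx => (hq x hx).imp (hp x) ?_⟩
    rintro ⟨e, he, rfl⟩
    exact ⟨e, ⟨p.edges_subset_edgeSet he, fun v hv => hp v (p.mem_support_of_mem_edges he hv)⟩, rfl⟩

end OneSubdivision

/-! ### Light edges -/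

section LightEdges

open scoped Finset

variable {V : Type u} {G H : SimpleGraph V} {φ : Sym2 V → V} {s t C : ℕ}

lemma isOneSubdivision_bot {A : Set V} : IsOneSubdivision G ⊥ A φ where
  injOn := by simp
  mapsTo := by simp [Set.mapsTo_empty]
  adj := by simp

open Classical in
lemma IsOneSubdivision.sup_edge {A : Set V} (h : IsOneSubdivision G H A φ) {a b v : V}
    (hv : v ∈ A) (hvφ : v ∉ φ '' H.edgeSet) (hva : G.Adj v a) (hvb : G.Adj v b) (hab : a ≠ b)
    (hH : ¬H.Adj a b) :
    IsOneSubdivision G (H ⊔ edge a b) A (Function.update φ s(a, b) v) := by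
  have hold {e} (he : e ∈ H.edgeSet) : Function.update φ s(a, b) v e = φ e :=
    Function.update_of_ne (fun heq => hH (by rwa [heq] at he)) _ _
  have hnew {e} (he : e ∈ (H ⊔ edge a b).edgeSet) : e ∈ H.edgeSet ∨ e = s(a, b) := by
    simpa [edgeSet_sup, edgeSet_edge_of_ne hab, or_comm] using he
  refine ⟨fun e he e' he' hee' => ?_, fun e he => ?_, fun e he x hx => ?_⟩
  · rcases hnew he with he | rfl <;> rcases hnew he' with he' | rfl
    · exact h.injOn he he' (by rwa [hold he, hold he'] at hee')
    · exact (hvφ ⟨e, he, by rwa [hold he, Function.update_self] at hee'⟩).elim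
    · exact (hvφ ⟨e', he', by rw [hold he', Function.update_self] at hee'; exact hee'.symm⟩).elim
    · rfl
  · rcases hnew he with he | rfl
    · simpa only [hold he] using h.mapsTo he
    · simpa only [Function.update_self] using hv
  · rcases hnew he with he | rfl
    · simpa only [hold he] using h.adj he hx
    · rw [Function.update_self]
      rcases Sym2.mem_iff.1 hx with rfl | rfl
      exacts [hva.symm, hvb.symm]

lemma exists_isOneSubdivision_forall_isClique [Finite V] (G : SimpleGraph V) (A : Set V) :
    ∃ H φ, IsOneSubdivision G H A φ ∧
      ∀ v ∈ A, v ∉ φ '' H.edgeSet → H.IsClique (G.neighborSet v) := by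
  classical
  have hne : {H | ∃ φ, IsOneSubdivision G H A φ}.Nonempty :=
    ⟨⊥, fun e => e.out.1, isOneSubdivision_bot⟩
  obtain ⟨H, ⟨φ, h⟩, hmax⟩ := (Set.toFinite _).exists_maximal hne
  refine ⟨H, φ, h, fun v hv hvφ a ha b hb hab => ?_⟩
  by_contra hH
  have hle : H ⊔ edge a b ≤ H := hmax ⟨_, h.sup_edge hv hvφ ha hb hab hH⟩ le_sup_left
  exact hH (hle (.inr (by simpa [edge_adj] using hab)))

open Classical in
lemma IsOneSubdivision.card_filter_mem_image_le {A B : Finset V} (h : IsOneSubdivision G H A φ)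
    (hAB : ∀ v ∈ A, ∀ w, G.Adj v w → w ∈ B) (hH : SparseOn H C B) :
    #{v ∈ A | v ∈ φ '' H.edgeSet} ≤ C * #B := by
  suffices hsub : {v ∈ A | v ∈ φ '' H.edgeSet} ⊆
      (H.interedges B B).image fun p => φ s(p.1, p.2) from
    (Finset.card_le_card hsub).trans (Finset.card_image_le.trans (hH B subset_rfl))
  intro v hv
  obtain ⟨hvA, e, he, rfl⟩ := Finset.mem_filter.1 hv
  induction e with
  | h a b =>
  have ha := hAB _ hvA a (h.adj he (Sym2.mem_mk_left a b)).symm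
  have hb := hAB _ hvA b (h.adj he (Sym2.mem_mk_right a b)).symm
  exact Finset.mem_image.2 ⟨(a, b), (H.mk_mem_interedges_iff).2 ⟨ha, hb, he⟩, rfl⟩

lemma card_lt_of_free_completeBipartiteGraph
    (hG : (completeBipartiteGraph (Fin s) (Fin t)).Free G) {T S : Finset V} (hT : s ≤ #T)
    (hS : ∀ v ∈ S, ∀ w ∈ T, G.Adj v w) : #S < t := by
  by_contra! ht
  obtain ⟨L, hLT, hL⟩ := Finset.exists_subset_card_eq hT
  obtain ⟨R, hRS, hR⟩ := Finset.exists_subset_card_eq ht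
  refine hG (completeBipartiteGraph_isContained_iff.2 ⟨L, R, by simpa, by simpa, ?_⟩)
  intro l hl r hr
  exact (hS r (hRS hr) l (hLT hl)).symm

open Classical in
/-- Fewer than `t` vertices of degree at least `s` share a neighbourhood. -/
lemma card_le_mul_card_cliquesIn [Fintype V] (hs : 0 < s)
    (hG : (completeBipartiteGraph (Fin s) (Fin t)).Free G) {S B : Finset V}
    (hSB : ∀ v ∈ S, ∀ w, G.Adj v w → w ∈ B) (hdeg : ∀ v ∈ S, s ≤ G.degree v)
    (hclique : ∀ v ∈ S, H.IsClique (G.neighborSet v)) : #S ≤ t * #(cliquesIn H B) := by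
  refine Finset.card_le_mul_card_image_of_maps_to (f := fun v => G.neighborFinset v)
    (fun v hv => mem_cliquesIn.2 ⟨?_, ?_, ?_⟩) t fun T hT => ?_
  · exact fun w hw => hSB v hv w ((G.mem_neighborFinset v w).1 hw)
  · exact Finset.card_pos.1 (hs.trans_le (hdeg v hv))
  · simpa using hclique v hv
  · obtain hempty | ⟨v, hv⟩ := {v ∈ S | G.neighborFinset v = T}.eq_empty_or_nonempty
    · simp [hempty]
    obtain ⟨hvS, rfl⟩ := Finset.mem_filter.1 hv
    refine (card_lt_of_free_completeBipartiteGraph hG (hdeg v hvS) fun w hw x hx => ?_).le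
    rwa [← mem_neighborFinset, (Finset.mem_filter.1 hw).2]

open Classical in
lemma card_le_of_forall_sparseOn_isOneSubdivision [Fintype V] (hs : 0 < s)
    (hG : (completeBipartiteGraph (Fin s) (Fin t)).Free G) {A B : Finset V}
    (hAB : ∀ v ∈ A, ∀ w, G.Adj v w → w ∈ B) (hdeg : ∀ v ∈ A, s ≤ G.degree v)
    (hsparse : ∀ H φ, IsOneSubdivision G H A φ → SparseOn H C B) :
    #A ≤ (C + t * 2 ^ C) * #B := by
  obtain ⟨H, φ, h, hclique⟩ := exists_isOneSubdivision_forall_isClique G (A : Set V)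
  have hH := hsparse H φ h
  have hsubdividing := h.card_filter_mem_image_le hAB hH
  have hrest : #{v ∈ A | v ∉ φ '' H.edgeSet} ≤ t * (2 ^ C * #B) := by
    refine (card_le_mul_card_cliquesIn (H := H) (B := B) hs hG ?_ ?_ ?_).trans
      (Nat.mul_le_mul_left t hH.card_cliquesIn_le) <;>
    intro v hv <;> obtain ⟨hvA, hvφ⟩ := Finset.mem_filter.1 hv
    exacts [hAB v hvA, hdeg v hvA, hclique v hvA hvφ]
  calc #A = #{v ∈ A | v ∈ φ '' H.edgeSet} + #{v ∈ A | v ∉ φ '' H.edgeSet} :=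
        (Finset.card_filter_add_card_filter_not _).symm
    _ ≤ C * #B + t * (2 ^ C * #B) := add_le_add hsubdividing hrest
    _ = (C + t * 2 ^ C) * #B := by ring

open Classical in
/-- `G` has a non-isolated vertex of degree less than `k` or an edge both of whose ends have degree
at most `l`: the configurations removed in the inductive colouring argument. -/
def HasReducibleConfig [Fintype V] (G : SimpleGraph V) (k l : ℕ) : Prop :=
  (∃ v, 0 < G.degree v ∧ G.degree v < k) ∨
    ∃ u v, G.Adj u v ∧ G.degree u ≤ l ∧ G.degree v ≤ l

open Classical in
lemma SparseOn.card_mul_le_of_le_degree [Fintype V] (h : SparseOn G C .univ) {B S : Finset V}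
    (hBS : B ⊆ S) (hS : ∀ v, 0 < G.degree v → v ∈ S) {m : ℕ} (hB : ∀ v ∈ B, m ≤ G.degree v) :
    #B * m ≤ C * #S := by
  have hdegree (v : V) : G.degree v = #{w ∈ S | G.Adj v w} := by
    rw [← card_neighborFinset_eq_degree]
    congr 1
    ext w
    have : G.Adj v w → w ∈ S := fun h => hS w ((G.degree_pos_iff_exists_adj w).2 ⟨v, h.symm⟩)
    simpa using this
  calc #B * m ≤ ∑ v ∈ B, G.degree v := Finset.card_nsmul_le_sum _ _ _ hB
    _ ≤ ∑ v ∈ S, G.degree v := Finset.sum_le_sum_of_subset hBS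
    _ = #(G.interedges S S) := by simp only [card_interedges_eq_sum, ← hdegree]
    _ ≤ C * #S := h S (Finset.subset_univ S)

theorem hasReducibleConfig_of_sparseOn [Fintype V] (hs : 0 < s)
    (hG : (completeBipartiteGraph (Fin s) (Fin t)).Free G) (hsparse : SparseOn G C .univ)
    (hsubdiv : ∀ (A B : Finset V) H φ, Disjoint A B → IsOneSubdivision G H A φ → SparseOn H C B)
    (hne : G ≠ ⊥) : HasReducibleConfig G s (C * (C + t * 2 ^ C + 1)) := by
  classical
  set l := C * (C + t * 2 ^ C + 1) with hl
  by_contra hred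
  obtain ⟨hdeg, hlight⟩ : (∀ v, 0 < G.degree v → s ≤ G.degree v) ∧
      ∀ u v, G.Adj u v → G.degree u ≤ l → l < G.degree v := by
    simpa [HasReducibleConfig] using hred
  set A : Finset V := {v | 0 < G.degree v ∧ G.degree v ≤ l} with hA
  set B : Finset V := {v | l < G.degree v} with hB
  have hdisj : Disjoint A B := Finset.disjoint_filter.2 fun v _ hv => hv.2.not_gt
  have hAB : ∀ v ∈ A, ∀ w, G.Adj v w → w ∈ B := fun v hv w hvw => by
    simpa [hB] using hlight v w hvw (Finset.mem_filter.1 hv).2.2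
  have hcardA : #A ≤ (C + t * 2 ^ C) * #B :=
    card_le_of_forall_sparseOn_isOneSubdivision hs hG hAB
      (fun v hv => hdeg v (Finset.mem_filter.1 hv).2.1) fun H φ => hsubdiv A B H φ hdisj
  have hBne : B.Nonempty := by
    obtain ⟨u, v, huv⟩ := ne_bot_iff_exists_adj.1 hne
    by_cases hu : G.degree u ≤ l
    · exact ⟨v, by simpa [hB] using hlight u v huv hu⟩
    · exact ⟨u, by simpa [hB] using hu⟩
  have hcardB : #B * (l + 1) ≤ C * #(A ∪ B) := by
    refine hsparse.card_mul_le_of_le_degree Finset.subset_union_right (fun v hv => ?_)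
      fun v hv => (Finset.mem_filter.1 hv).2
    simpa [hA, hB, hv] using le_or_gt (G.degree v) l
  have : #B * (l + 1) ≤ #B * l :=
    calc #B * (l + 1) ≤ C * ((C + t * 2 ^ C) * #B + #B) := by
          grw [hcardB, Finset.card_union_le, hcardA]
      _ = #B * l := by rw [hl]; ring
  exact (Nat.lt_succ_self l).not_ge (Nat.le_of_mul_le_mul_left this hBne.card_pos)

end LightEdges

section CompleteBipartite

variable {V : Type u} {α : Type v} {G H : SimpleGraph V} {X : SimpleGraph α} {s t : ℕ}

lemma HasTopMinor.mono_s12 (h : HasTopMinor H X) (hHG : H ≤ G) : HasTopMinor G X := by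
  obtain ⟨f, hf, P, hpath, hbranch, hdisj⟩ := h
  refine ⟨f, hf, fun a b hab => (P hab).mapLe hHG, fun a b hab => ⟨?_, trivial⟩,
    fun a b hab c hc => hbranch hab c (by simpa using hc),
    fun a b hab a' b' hab' hne x hx hx' =>
      hdisj hab hab' hne x (by simpa using hx) (by simpa using hx')⟩
  simpa using (hpath hab).1

/-- A degree bound under which light edges exist in graphs without a subdivision of `K_{s,t}`; it is
also the defect of the colourings. -/
noncomputable def lightBound (s t : ℕ) : ℕ :=
  let C := maderBound (completeBipartiteGraph (Fin s) (Fin t))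
  C * (C + t * 2 ^ C + 1)

theorem hasReducibleConfig_of_not_hasTopMinor [Fintype V] (hs : 0 < s)
    (hG : ¬HasTopMinor G (completeBipartiteGraph (Fin s) (Fin t))) (hne : G ≠ ⊥) :
    HasReducibleConfig G s (lightBound s t) := by
  refine hasReducibleConfig_of_sparseOn hs ?_ ?_ (fun A B H φ hAB hφ => ?_) hne
  · exact fun ⟨f⟩ => hG (SubdivModel.ofCopy f fun _ => Set.mem_univ _).hasTopMinor
  · exact sparseOn_of_isEmpty_subdivModel ⟨fun M => hG M.hasTopMinor⟩
  · exact sparseOn_of_isEmpty_subdivModel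
      ⟨fun M => hG (M.ofOneSubdivision hφ (Finset.disjoint_coe.2 hAB)).hasTopMinor⟩

end CompleteBipartite

/-! ### Defective list colouring -/

section Coloring

open scoped Finset

variable {V : Type u} {κ : Type*} {G : SimpleGraph V} {L : V → Finset κ} {c : V → κ}
  {u v : V} {d k : ℕ}

/-- `c` colours every vertex from its list, and every vertex has at most `d` neighbours of its own
colour. -/
structure IsDefectiveListColoring_s12 (G : SimpleGraph V) (L : V → Finset κ) (d : ℕ) (c : V → κ) :
    Prop where
  mem : ∀ v, c v ∈ L v
  defect : ∀ v, {w | G.Adj v w ∧ c w = c v}.ncard ≤ d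

open Classical in
lemma ncard_sameColor_le_degree [Fintype V] (c : V → κ) (v : V) :
    {w | G.Adj v w ∧ c w = c v}.ncard ≤ G.degree v := by
  rw [← card_neighborFinset_eq_degree, ← Set.ncard_coe_finset]
  exact Set.ncard_le_ncard (fun w hw => by simpa using hw.1)

open Classical in
lemma IsDefectiveListColoring_s12.of_deleteEdges [Fintype V]
    (hc : IsDefectiveListColoring_s12 (G.deleteEdges {s(u, v)}) L d c)
    (hu : G.degree u ≤ d) (hv : G.degree v ≤ d) : IsDefectiveListColoring_s12 G L d c where
  mem := hc.mem
  defect x := by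
    by_cases hx : G.degree x ≤ d
    · exact (ncard_sameColor_le_degree c x).trans hx
    refine le_of_eq_of_le ?_ (hc.defect x)
    congr 1
    ext w
    have hxu : x ≠ u := by rintro rfl; exact hx hu
    have hxv : x ≠ v := by rintro rfl; exact hx hv
    simp [hxu, hxv]

open Classical in
lemma IsDefectiveListColoring_s12.exists_of_deleteIncidenceSet [Fintype V]
    (hc : IsDefectiveListColoring_s12 (G.deleteIncidenceSet v) L d c) (hv : G.degree v < #(L v)) :
    ∃ c', IsDefectiveListColoring_s12 G L d c' := by
  obtain ⟨k, hkL, hk⟩ : ∃ k ∈ L v, k ∉ (G.neighborFinset v).image c :=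
    Finset.exists_mem_notMem_of_card_lt_card
      (Finset.card_image_le.trans_lt (by rwa [card_neighborFinset_eq_degree]))
  have hnew {w} (hw : G.Adj v w) : c w ≠ k := fun h =>
    hk (Finset.mem_image.2 ⟨w, (G.mem_neighborFinset v w).2 hw, h⟩)
  refine ⟨Function.update c v k, fun x => ?_, fun x => ?_⟩
  · obtain rfl | hx := eq_or_ne x v
    · simpa using hkL
    · simpa [hx] using hc.mem x
  · refine le_trans (Set.ncard_le_ncard fun w hw => ?_) (hc.defect x)
    obtain ⟨hxw, hcw⟩ := hw
    obtain rfl | hx := eq_or_ne x v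
    · exact (hnew hxw (by simpa [hxw.ne'] using hcw)).elim
    obtain rfl | hw := eq_or_ne w v
    · exact (hnew hxw.symm (by simpa [hx, eq_comm] using hcw)).elim
    · exact ⟨deleteIncidenceSet_adj.2 ⟨hxw, hx, hw⟩, by simpa [hx, hw] using hcw⟩

theorem exists_isDefectiveListColoring [Fintype V] (hk : 0 < k) (hL : ∀ v, k ≤ #(L v))
    (hG : ∀ H ≤ G, H ≠ ⊥ → HasReducibleConfig H k d) : ∃ c, IsDefectiveListColoring_s12 G L d c := by
  classical
  induction G using WellFoundedLT.induction with
  | ind G ih =>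
  by_cases hbot : G = ⊥
  · subst hbot
    choose c hc using fun v => Finset.card_pos.1 (hk.trans_le (hL v))
    exact ⟨c, hc, by simp⟩
  have hdelete {H} (hH : H ≤ G) {u v} (hu : G.Adj u v) (hv : ¬H.Adj u v) :
      ∃ c, IsDefectiveListColoring_s12 H L d c :=
    ih H (hH.lt_of_not_ge fun h => hv (h hu)) fun H' hH' => hG H' (hH'.trans hH)
  rcases hG G le_rfl hbot with ⟨v, hpos, hlt⟩ | ⟨u, v, huv, hu, hv⟩
  · obtain ⟨w, hvw⟩ := (G.degree_pos_iff_exists_adj v).1 hpos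
    obtain ⟨c, hc⟩ := hdelete (G.deleteIncidenceSet_le v) hvw (by simp [deleteIncidenceSet_adj])
    exact hc.exists_of_deleteIncidenceSet (hlt.trans_le (hL v))
  · obtain ⟨c, hc⟩ := hdelete (G.deleteEdges_le {s(u, v)}) huv (by simp)
    exact ⟨c, hc.of_deleteEdges hu hv⟩

end Coloring

theorem stmt12_general {s t : ℕ} (hs : 1 ≤ s) {V : Type u} [Finite V] {G : SimpleGraph V}
    (hG : ¬HasTopMinor G (completeBipartiteGraph (Fin s) (Fin t))) :
    Choosable G s (lightBound s t) := by
  intro L hL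
  have := Fintype.ofFinite V
  obtain ⟨c, hc⟩ := exists_isDefectiveListColoring (d := lightBound s t) hs (fun v => (hL v).ge)
    fun H hH hne => hasReducibleConfig_of_not_hasTopMinor hs (fun h => hG (h.mono_s12 hH)) hne
  exact ⟨c, hc.mem, fun v => by exact_mod_cast hc.defect v⟩

/-- For integers `t ≥ s ≥ 1` there exists an integer `d` such that every finite simple graph
with no `K_{s,t}` topological minor is `(s, d)`-choosable. -/
theorem stmt12 (s t : ℕ) (hs : 1 ≤ s) (hst : s ≤ t) :
    ∃ d : ℤ, ∀ (V : Type) [Fintype V] (G : SimpleGraph V),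
      ¬ HasTopMinor G (completeBipartiteGraph (Fin s) (Fin t)) →
      Choosable G s d :=
  ⟨lightBound s t, fun _ _ _ hG => stmt12_general hs hG⟩
end
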